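/- arXiv:math-ph/0511024 — 2 statements merged into one kernel-verified Lean document; each statement's English description precedes it below -/
import Mathlib

section
/- Let N ≥ 1 and p, q ≥ 1 be integers, and let p', q' ≥ 0 be integers with p' ≤ p + N and q' ≤ q + N. Let ψ_1, …, ψ_{p+q} be complex numbers with e^{iψ_1}, …, e^{iψ_{p+q}} pairwise distinct, and let φ_1, …, φ_{p'+q'} be complex numbers with Re φ_{j'} < 0 for 1 ≤ j' ≤ p' and Re φ_{l'} > 0 for p'+1 ≤ l' ≤ p'+q'. Then ∫_{U(N)} [∏_{j=1}^{p} det(1_N − e^{iψ_j} u) · ∏_{l=p+1}^{p+q} det(1_N − e^{−iψ_l} ū)] / [∏_{j'=1}^{p'} det(1_N − e^{φ_{j'}} u) · ∏_{l'=p'+1}^{p'+q'} det(1_N − e^{−φ_{l'}} ū)] du = (1/(p!·q!)) · ∑_{w ∈ S_{p+q}} ∏_{k=p+1}^{p+q} e^{N·i(ψ_{w(k)} − ψ_k)} · [∏_{j'=1}^{p'} ∏_{l=p+1}^{p+q} (1 − e^{φ_{j'} − iψ_{w(l)}}) · ∏_{j=1}^{p} ∏_{l'=p'+1}^{p'+q'}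 (1 − e^{iψ_{w(j)} − φ_{l'}})] / [∏_{j=1}^{p} ∏_{l=p+1}^{p+q} (1 − e^{iψ_{w(j)} − iψ_{w(l)}}) · ∏_{j'=1}^{p'} ∏_{l'=p'+1}^{p'+q'} (1 − e^{φ_{j'} − φ_{l'}})]. -/
open MeasureTheory Matrix

noncomputable instance (N : ℕ) : MeasurableSpace (Matrix.unitaryGroup (Fin N) ℂ) := borel _
instance (N : ℕ) : BorelSpace (Matrix.unitaryGroup (Fin N) ℂ) := ⟨rfl⟩

/- After multiplication by `det (1 - z u)`, the integral of a ratio is a polynomial in `z`, and so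
is the claimed value once multiplied by the product of the `z - x k`. Setting `z` equal to some
parameter `a i` or `(b k)⁻¹` of the denominator cancels a factor there, so that by induction on the
number of factors in the numerator the two polynomials agree at enough points to be equal. The
induction starts from a ratio without numerator, where the same interpolation removes the `b k` one
by one; the vanishing it needs comes from Gaussian integrals and the mean value property.
Distinctness of the `a i` and of the `b k` is removed by continuity, and unequal numbers of factors
by setting some of these parameters to `0`. -/

section PolynomialFunctions

open Polynomial

/-- The function `f` is given by a polynomial of degree at most `d`. Working with functions instead
of polynomials lets us integrate them with respect to a parameter. -/
def IsPolyOfDegreeLE {R : Type*} [CommRing R] (d : ℕ) (f : R → R) : Prop :=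
  ∃ P : R[X], P.natDegree ≤ d ∧ ∀ z, P.eval z = f z

namespace IsPolyOfDegreeLE

variable {R : Type*} [CommRing R] {d e : ℕ} {f g : R → R}

lemma mono (hf : IsPolyOfDegreeLE d f) (hde : d ≤ e) : IsPolyOfDegreeLE e f :=
  let ⟨P, hP, hf⟩ := hf
  ⟨P, hP.trans hde, hf⟩

lemma const (c : R) : IsPolyOfDegreeLE 0 fun _ => c :=
  ⟨C c, by simp, by simp⟩

lemma mul (hf : IsPolyOfDegreeLE d f) (hg : IsPolyOfDegreeLE e g) :
    IsPolyOfDegreeLE (d + e) fun z => f z * g z :=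
  let ⟨P, hP, hf⟩ := hf
  let ⟨Q, hQ, hg⟩ := hg
  ⟨P * Q, natDegree_mul_le_of_le hP hQ, fun z => by simp [hf, hg]⟩

lemma const_mul (c : R) (hf : IsPolyOfDegreeLE d f) : IsPolyOfDegreeLE d fun z => c * f z := by
  simpa using (const c).mul hf

lemma add (hf : IsPolyOfDegreeLE d f) (hg : IsPolyOfDegreeLE d g) :
    IsPolyOfDegreeLE d fun z => f z + g z :=
  let ⟨P, hP, hf⟩ := hf
  let ⟨Q, hQ, hg⟩ := hg
  ⟨P + Q, natDegree_add_le_of_degree_le hP hQ, fun z => by simp [hf, hg]⟩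

lemma linear (c₀ c₁ : R) : IsPolyOfDegreeLE 1 fun z => c₁ * z + c₀ :=
  ⟨C c₁ * X + C c₀, natDegree_linear_le, by simp⟩

lemma sum {ι : Type*} (s : Finset ι) {f : ι → R → R} (hf : ∀ i ∈ s, IsPolyOfDegreeLE d (f i)) :
    IsPolyOfDegreeLE d fun z => ∑ i ∈ s, f i z := by
  choose! P hP hPf using hf
  refine ⟨∑ i ∈ s, P i, natDegree_sum_le_of_forall_le s P hP, fun z => ?_⟩
  rw [eval_finsetSum]
  exact Finset.sum_congr rfl fun i hi => hPf i hi z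

lemma prod {ι : Type*} (s : Finset ι) {d : ι → ℕ} {f : ι → R → R}
    (hf : ∀ i ∈ s, IsPolyOfDegreeLE (d i) (f i)) :
    IsPolyOfDegreeLE (∑ i ∈ s, d i) fun z => ∏ i ∈ s, f i z := by
  choose! P hP hPf using hf
  refine ⟨∏ i ∈ s, P i, (natDegree_prod_le s P).trans (Finset.sum_le_sum hP), fun z => ?_⟩
  rw [eval_prod]
  exact Finset.prod_congr rfl fun i hi => hPf i hi z

lemma prod_linear {ι : Type*} (s : Finset ι) (c₀ c₁ : ι → R) :
    IsPolyOfDegreeLE s.card fun z => ∏ i ∈ s, (c₁ i * z + c₀ i) := by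
  simpa using prod s fun i _ => linear (c₀ i) (c₁ i)

lemma prod_sub {ι : Type*} (s : Finset ι) (c : ι → R) :
    IsPolyOfDegreeLE s.card fun z => ∏ i ∈ s, (z - c i) := by
  simpa [sub_eq_add_neg] using prod_linear s (-c) 1

lemma prod_one_sub_mul {ι : Type*} (s : Finset ι) (c : ι → R) :
    IsPolyOfDegreeLE s.card fun z => ∏ i ∈ s, (1 - c i * z) := by
  simpa [sub_eq_add_neg, add_comm] using prod_linear s 1 (-c)

lemma eq_of_eqOn [IsDomain R] (hf : IsPolyOfDegreeLE d f) (hg : IsPolyOfDegreeLE d g)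
    {s : Finset R} (hs : d < s.card) (hfg : ∀ z ∈ s, f z = g z) : f = g := by
  obtain ⟨P, hP, hPf⟩ := hf
  obtain ⟨Q, hQ, hQg⟩ := hg
  have hPQ : P = Q :=
    eq_of_natDegree_lt_card_of_eval_eq' P Q s (fun z hz => by rw [hPf, hQg, hfg z hz])
      (lt_of_le_of_lt (max_le hP hQ) hs)
  funext z
  rw [← hPf, ← hQg, hPQ]

/- By Lagrange interpolation, `f z` is a combination of the values `f 0, …, f d` with coefficients
that are polynomials in `z` independent of `ω`. -/
lemma integral {𝕜 Ω : Type*} [RCLike 𝕜] {mΩ : MeasurableSpace Ω} {μ : Measure Ω} {f : 𝕜 → Ω → 𝕜}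
    (hf : ∀ ω, IsPolyOfDegreeLE d fun z => f z ω) (hint : ∀ z, Integrable (f z) μ) :
    IsPolyOfDegreeLE d fun z => ∫ ω, f z ω ∂μ := by
  set node : ℕ → 𝕜 := (↑)
  set s := Finset.range (d + 1)
  have hnode : Set.InjOn node s := Nat.cast_injective.injOn
  have hlagrange (z : 𝕜) (ω : Ω) :
      f z ω = ∑ i ∈ s, (Lagrange.basis s node i).eval z * f (node i) ω := by
    obtain ⟨P, hP, hPf : ∀ z, P.eval z = f z ω⟩ := hf ω
    have hdeg : P.degree < s.card :=
      degree_le_of_natDegree_le hP |>.trans_lt <| by simp [s, Nat.cast_lt, -Nat.cast_add]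
    rw [← hPf z, Lagrange.eq_interpolate hnode hdeg]
    simp [Lagrange.interpolate_apply, eval_finsetSum, hPf, mul_comm]
  have hsum (z : 𝕜) :
      ∫ ω, f z ω ∂μ = ∑ i ∈ s, (∫ ω, f (node i) ω ∂μ) * (Lagrange.basis s node i).eval z := by
    simp_rw [hlagrange z]
    rw [integral_finsetSum _ fun i _ => (hint _).const_mul _]
    exact Finset.sum_congr rfl fun i _ => by rw [integral_const_mul, mul_comm]
  rw [funext hsum]
  refine sum s fun i hi => const_mul _ ⟨Lagrange.basis s node i, ?_, fun _ => rfl⟩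
  simp [Lagrange.natDegree_basis hnode hi, s]

lemma differentiable {𝕜 : Type*} [NontriviallyNormedField 𝕜] {f : 𝕜 → 𝕜}
    (hf : IsPolyOfDegreeLE d f) : Differentiable 𝕜 f := by
  obtain ⟨P, -, hP⟩ := hf
  rw [← funext hP]
  exact P.differentiable

end IsPolyOfDegreeLE

end PolynomialFunctions

section MeanValue

variable {Ω E : Type*} [TopologicalSpace Ω] [CompactSpace Ω] [SecondCountableTopology Ω]
  [MeasurableSpace Ω] [BorelSpace Ω] [NormedAddCommGroup E] [NormedSpace ℂ E] [CompleteSpace E]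

lemma circleAverage_integral_eq_integral_center (μ : Measure Ω) [IsFiniteMeasure μ]
    {Φ : ℂ → Ω → E} {c : ℂ} {R : ℝ} (hR : 0 < R)
    (hcont : ContinuousOn (Function.uncurry Φ) (Metric.closedBall c R ×ˢ Set.univ))
    (hdiff : ∀ ω, DifferentiableOn ℂ (fun z => Φ z ω) (Metric.ball c R)) :
    Real.circleAverage (fun z => ∫ ω, Φ z ω ∂μ) c R = ∫ ω, Φ c ω ∂μ := by
  have hmean (ω : Ω) : Real.circleAverage (fun z => Φ z ω) c R = Φ c ω := by
    refine DiffContOnCl.circleAverage (c := c) ⟨by rw [abs_of_pos hR]; exact hdiff ω, ?_⟩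
    rw [abs_of_pos hR, closure_ball c hR.ne']
    exact hcont.comp (f := fun z => (z, ω)) (by fun_prop) fun z hz => ⟨hz, trivial⟩
  have hcircle (p : ℝ × Ω) : (circleMap c R p.1, p.2) ∈ Metric.closedBall c R ×ˢ Set.univ :=
    ⟨circleMap_mem_closedBall c hR.le p.1, trivial⟩
  have hcont' : Continuous fun p : ℝ × Ω => Φ (circleMap c R p.1) p.2 :=
    hcont.comp_continuous (f := fun p : ℝ × Ω => (circleMap c R p.1, p.2)) (by fun_prop) hcircle
  obtain ⟨C, hC⟩ :=
    ((isCompact_closedBall c R).prod isCompact_univ).exists_bound_of_continuousOn hcont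
  simp_rw [← hmean, Real.circleAverage_def, intervalIntegral.integral_of_le Real.two_pi_pos.le]
  rw [integral_smul, integral_integral_swap]
  exact Integrable.of_bound hcont'.aestronglyMeasurable C (ae_of_all _ fun p => hC _ (hcircle p))

lemma integral_eq_of_integral_eq_on_sphere (μ : Measure Ω) [IsFiniteMeasure μ]
    {Φ : ℂ → Ω → E} {c : ℂ} {R : ℝ} (hR : 0 < R)
    (hcont : ContinuousOn (Function.uncurry Φ) (Metric.closedBall c R ×ˢ Set.univ))
    (hdiff : ∀ ω, DifferentiableOn ℂ (fun z => Φ z ω) (Metric.ball c R)) {I : E}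
    (hI : ∀ z ∈ Metric.sphere c R, ∫ ω, Φ z ω ∂μ = I) : ∫ ω, Φ c ω ∂μ = I := by
  rw [← circleAverage_integral_eq_integral_center μ hR hcont hdiff]
  exact Real.circleAverage_const_on_circle (by rwa [abs_of_pos hR])

lemma integral_eq_integral_center_of_eq_mul_left {G : Type*} [Group G] [TopologicalSpace G]
    [CompactSpace G] [SecondCountableTopology G] [ContinuousMul G] [MeasurableSpace G]
    [BorelSpace G] (μ : Measure G) [μ.IsMulLeftInvariant] [IsFiniteMeasure μ]
    {Φ : ℂ → G → E}
    (hcont : ContinuousOn (Function.uncurry Φ) (Metric.closedBall 0 1 ×ˢ Set.univ))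
    (hdiff : ∀ u, DifferentiableOn ℂ (fun z => Φ z u) (Metric.ball 0 1))
    (hΦ : ∀ z ∈ Metric.sphere (0 : ℂ) 1, ∃ g : G, ∀ u, Φ z u = Φ 1 (g * u)) :
    ∫ u, Φ 1 u ∂μ = ∫ u, Φ 0 u ∂μ := by
  refine (integral_eq_of_integral_eq_on_sphere μ one_pos hcont hdiff fun z hz => ?_).symm
  obtain ⟨g, hg⟩ := hΦ z hz
  simp_rw [hg]
  exact integral_mul_left_eq_self (Φ 1) g

end MeanValue

section GaussianIntegrals

variable {n : Type*} [Fintype n]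

lemma integral_cexp_neg_sum_mul_sq_norm {c : n → ℂ} (hc : ∀ k, 0 < (c k).re) :
    ∫ x : n → ℂ, Complex.exp (-∑ k, c k * (‖x k‖ : ℂ) ^ 2) = ∏ k, (Real.pi / c k : ℂ) := by
  have hone (k : n) : ∫ z : ℂ, Complex.exp (-c k * (‖z‖ : ℂ) ^ 2) = Real.pi / c k := by
    rw [GaussianFourier.integral_cexp_neg_mul_sq_norm (hc k)]
    simp
  simp_rw [← hone, ← integral_fintype_prod_volume_eq_prod, ← Complex.exp_sum, neg_mul,
    Finset.sum_neg_distrib]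

lemma integrable_exp_neg_mul_sum_sq_norm {c : ℝ} (hc : 0 < c) :
    Integrable fun x : n → ℂ => Real.exp (-(c * ∑ k, ‖x k‖ ^ 2)) := by
  have hne : ∫ x : n → ℂ, Complex.exp (-∑ k, (c : ℂ) * (‖x k‖ : ℂ) ^ 2) ≠ 0 := by
    rw [integral_cexp_neg_sum_mul_sq_norm fun _ => by simpa using hc]
    exact Finset.prod_ne_zero_iff.2 fun _ _ => by simp [Real.pi_ne_zero, hc.ne']
  refine (Integrable.of_integral_ne_zero hne).norm.congr (ae_of_all _ fun x => ?_)
  simp only [Complex.norm_exp, ← Finset.mul_sum]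
  norm_cast

lemma star_dotProduct_conjTranspose_mul_mul_mulVec (S D : Matrix n n ℂ) (x : n → ℂ) :
    star x ⬝ᵥ ((Sᴴ * D * S) *ᵥ x) = star (S *ᵥ x) ⬝ᵥ (D *ᵥ (S *ᵥ x)) := by
  rw [star_mulVec, ← dotProduct_mulVec, mulVec_mulVec, mulVec_mulVec, Matrix.mul_assoc]

lemma star_dotProduct_realPart_mulVec (H : Matrix n n ℂ) (x : n → ℂ) :
    star x ⬝ᵥ ((realPart H : Matrix n n ℂ) *ᵥ x) = ((star x ⬝ᵥ (H *ᵥ x)).re : ℂ) := by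
  have hstar : star x ⬝ᵥ (Hᴴ *ᵥ x) = star (star x ⬝ᵥ (H *ᵥ x)) := by
    rw [star_dotProduct, star_mulVec, conjTranspose_conjTranspose, ← dotProduct_mulVec]
  rw [realPart_apply_coe, smul_mulVec, add_mulVec, dotProduct_smul, dotProduct_add,
    star_eq_conjTranspose, hstar, RCLike.star_def, Complex.re_eq_add_conj]
  simp only [smul_add, Complex.real_smul, Complex.ofReal_inv, Complex.ofReal_ofNat]
  ring

open scoped ComplexOrder in
lemma posDef_realPart {H : Matrix n n ℂ}
    (hH : ∀ x ≠ 0, 0 < (star x ⬝ᵥ (H *ᵥ x)).re) : (realPart H : Matrix n n ℂ).PosDef :=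
  .of_dotProduct_mulVec_pos (realPart H).2 fun x hx => by
    rw [star_dotProduct_realPart_mulVec]
    exact_mod_cast hH x hx

variable [DecidableEq n]

lemma integral_comp_mulVec {E : Type*} [NormedAddCommGroup E] [NormedSpace ℝ E]
    {S : Matrix n n ℂ} (hS : S.det ≠ 0) (f : (n → ℂ) → E) :
    ∫ x, f (S *ᵥ x) = (Complex.normSq S.det)⁻¹ • ∫ x, f x := by
  set T : (n → ℂ) →ₗ[ℝ] (n → ℂ) := (Matrix.toLin' S).restrictScalars ℝ
  have hdet : LinearMap.det T = Complex.normSq S.det := by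
    rw [LinearMap.det_restrictScalars, Algebra.norm_complex_apply, LinearMap.det_toLin']
  have hpos : 0 < Complex.normSq S.det := Complex.normSq_pos.2 hS
  have hT : LinearMap.det T ≠ 0 := hdet ▸ hpos.ne'
  have hemb : MeasurableEmbedding T :=
    (LinearMap.equivOfDetNeZero T hT).toContinuousLinearEquiv.toHomeomorph.measurableEmbedding
  have hmap := Measure.map_linearMap_addHaar_eq_smul_addHaar (volume : Measure (n → ℂ)) hT
  calc ∫ x, f (S *ᵥ x) = ∫ x, f x ∂(Measure.map T volume) := (hemb.integral_map f).symm
    _ = (Complex.normSq S.det)⁻¹ • ∫ x, f x := by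
      rw [hmap, integral_smul_measure, hdet, abs_of_pos (inv_pos.2 hpos),
        ENNReal.toReal_ofReal (inv_pos.2 hpos).le]

open scoped ComplexOrder MatrixOrder Matrix.Norms.L2Operator in
lemma exists_simultaneous_diagonalization {K L : Matrix n n ℂ} (hK : K.PosDef)
    (hL : L.IsHermitian) :
    ∃ (S : Matrix n n ℂ) (l : n → ℝ), S.det ≠ 0 ∧ K = Sᴴ * S ∧
      L = Sᴴ * diagonal (fun k => (l k : ℂ)) * S := by
  obtain ⟨B, hB, hKB⟩ :=
    CStarAlgebra.isStrictlyPositive_iff_eq_star_mul_self.1 hK.isStrictlyPositive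
  have hBdet : IsUnit B.det := (isUnit_iff_isUnit_det B).1 hB
  have hL' : (B⁻¹ᴴ * L * B⁻¹).IsHermitian := isHermitian_conjTranspose_mul_mul _ hL
  set U := hL'.eigenvectorUnitary
  have hU : (U : Matrix n n ℂ) * (U : Matrix n n ℂ)ᴴ = 1 := Unitary.mul_star_self_of_mem U.2
  refine ⟨(U : Matrix n n ℂ)ᴴ * B, hL'.eigenvalues, ?_, ?_, ?_⟩
  · rw [det_mul, det_conjTranspose]
    exact mul_ne_zero (star_ne_zero.2 (left_ne_zero_of_mul_eq_one (by rw [← det_mul, hU, det_one])))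
      hBdet.ne_zero
  · rw [conjTranspose_mul, conjTranspose_conjTranspose, Matrix.mul_assoc,
      ← Matrix.mul_assoc _ _ B, hU, Matrix.one_mul]
    exact hKB
  · calc L = Bᴴ * (B⁻¹ᴴ * L * B⁻¹) * B := by
          rw [conjTranspose_nonsing_inv]
          simp [Matrix.mul_assoc, nonsing_inv_mul B hBdet,
            mul_nonsing_inv_cancel_left Bᴴ L (by simpa using hBdet.star)]
      _ = Bᴴ * (U * diagonal (fun k => (hL'.eigenvalues k : ℂ)) * star (U : Matrix n n ℂ)) * B :=
          congrArg (Bᴴ * · * B) hL'.spectral_theorem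
      _ = _ := by
          simp only [conjTranspose_mul, conjTranspose_conjTranspose, Matrix.mul_assoc,
            star_eq_conjTranspose]

lemma star_dotProduct_diagonal_mulVec_self (c x : n → ℂ) :
    star x ⬝ᵥ (diagonal c *ᵥ x) = ∑ k, c k * (‖x k‖ : ℂ) ^ 2 := by
  simp only [dotProduct, mulVec_diagonal, Pi.star_apply]
  exact Finset.sum_congr rfl fun k _ => by
    rw [← Complex.mul_conj', RCLike.star_def]; ring

/- Writing `H = Sᴴ * D * S` with `D` diagonal, by simultaneous diagonalization of its real and
imaginary parts, reduces to one-dimensional Gaussian integrals. -/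
theorem integral_cexp_neg_star_dotProduct_mulVec {H : Matrix n n ℂ}
    (hH : ∀ x ≠ 0, 0 < (star x ⬝ᵥ (H *ᵥ x)).re) :
    ∫ x : n → ℂ, Complex.exp (-(star x ⬝ᵥ (H *ᵥ x))) = Real.pi ^ Fintype.card n / H.det := by
  obtain ⟨S, l, hS, hre, him⟩ := exists_simultaneous_diagonalization (posDef_realPart hH)
    (imaginaryPart H).2
  set c : n → ℂ := fun k => 1 + Complex.I * l k with hc
  have hHS : H = Sᴴ * diagonal c * S := by
    rw [← realPart_add_I_smul_imaginaryPart H, hre, him, hc, ← diagonal_add, diagonal_one,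
      Matrix.mul_add, Matrix.add_mul, Matrix.mul_one, ← Matrix.smul_mul, ← Matrix.mul_smul,
      ← diagonal_smul]
    rfl
  have hdet : H.det = Complex.normSq S.det * ∏ k, c k := by
    rw [hHS, det_mul, det_mul, det_conjTranspose, det_diagonal, RCLike.star_def,
      Complex.normSq_eq_conj_mul_self]
    ring
  calc ∫ x : n → ℂ, Complex.exp (-(star x ⬝ᵥ (H *ᵥ x)))
      = ∫ x : n → ℂ, Complex.exp (-∑ k, c k * (‖(S *ᵥ x) k‖ : ℂ) ^ 2) := by
        simp_rw [hHS, star_dotProduct_conjTranspose_mul_mul_mulVec,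
          star_dotProduct_diagonal_mulVec_self]
    _ = (Complex.normSq S.det)⁻¹ • ∏ k, (Real.pi / c k : ℂ) := by
        rw [integral_comp_mulVec hS fun x => Complex.exp (-∑ k, c k * (‖x k‖ : ℂ) ^ 2),
          integral_cexp_neg_sum_mul_sq_norm (by simp [hc])]
    _ = Real.pi ^ Fintype.card n / H.det := by
        rw [hdet, Finset.prod_div_distrib, Finset.prod_const, Finset.card_univ, Complex.real_smul,
          Complex.ofReal_inv, div_mul_eq_div_div, div_right_comm, inv_mul_eq_div]

end GaussianIntegrals

section DetOneSub

variable {n R : Type*} [Fintype n] [DecidableEq n] [CommRing R]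

/-- The reversed characteristic polynomial of `M`, evaluated at `z`. -/
def detOneSub (z : R) (M : Matrix n n R) : R := (1 - z • M).det

@[simp]
lemma detOneSub_zero (M : Matrix n n R) : detOneSub 0 M = 1 := by simp [detOneSub]

lemma detOneSub_transpose (z : R) (M : Matrix n n R) : detOneSub z Mᵀ = detOneSub z M := by
  rw [detOneSub, detOneSub, ← det_transpose (1 - z • M)]
  simp

lemma isPolyOfDegreeLE_det_smul_add (A B : Matrix n n R) :
    IsPolyOfDegreeLE (Fintype.card n) fun z => (z • A + B).det := by
  refine ⟨_, Polynomial.natDegree_det_X_add_C_le A B, fun z => ?_⟩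
  rw [← Polynomial.coe_evalRingHom, RingHom.map_det]
  congr 1
  ext i j
  simp only [RingHom.mapMatrix_apply, Polynomial.coe_evalRingHom, map_apply, Matrix.add_apply,
    Matrix.smul_apply, smul_eq_mul, Polynomial.X_mul_C, Polynomial.eval_add, Polynomial.eval_mul,
    Polynomial.eval_C, Polynomial.eval_X, add_left_inj]
  ring

lemma isPolyOfDegreeLE_detOneSub (M : Matrix n n R) :
    IsPolyOfDegreeLE (Fintype.card n) fun z => detOneSub z M := by
  convert isPolyOfDegreeLE_det_smul_add (-M) 1 using 3 with z
  rw [smul_neg, neg_add_eq_sub, detOneSub]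

lemma detOneSub_eq_of_mul_eq_one {K : Type*} [Field K] {A B : Matrix n n K} (hAB : A * B = 1)
    {z : K} (hz : z ≠ 0) :
    detOneSub z A = z ^ Fintype.card n * (-A).det * detOneSub z⁻¹ B := by
  have hfactor : 1 - z • A = z • (-A * (1 - z⁻¹ • B)) := by
    rw [mul_sub, mul_smul_comm, mul_one, neg_mul, hAB, smul_sub, smul_smul, mul_inv_cancel₀ hz]
    module
  rw [detOneSub, hfactor, det_smul, det_mul, mul_assoc, detOneSub]

@[fun_prop]
lemma continuous_detOneSub [TopologicalSpace R] [IsTopologicalRing R] {X : Type*}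
    [TopologicalSpace X] {f : X → R} {g : X → Matrix n n R} (hf : Continuous f)
    (hg : Continuous g) : Continuous fun x => detOneSub (f x) (g x) := by
  unfold detOneSub
  fun_prop

end DetOneSub

section UnitVectors

lemma star_dotProduct_self {n : Type*} [Fintype n] (x : n → ℂ) :
    star x ⬝ᵥ x = ((∑ k, ‖x k‖ ^ 2 : ℝ) : ℂ) := by
  simp [dotProduct, Complex.conj_mul']

lemma sum_sq_norm_pos {n : Type*} [Fintype n] {x : n → ℂ} (hx : x ≠ 0) : 0 < ∑ k, ‖x k‖ ^ 2 := by
  obtain ⟨k, hk⟩ := Function.ne_iff.1 hx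
  exact Finset.sum_pos' (fun _ _ => by positivity)
    ⟨k, Finset.mem_univ k, pow_pos (norm_pos_iff.2 hk) 2⟩

lemma exists_unit_orthogonal {n ι : Type*} [Fintype n] [Fintype ι]
    (hι : Fintype.card ι < Fintype.card n) (X : ι → n → ℂ) :
    ∃ w : n → ℂ, star w ⬝ᵥ w = 1 ∧ ∀ i, star w ⬝ᵥ X i = 0 := by
  classical
  have hker : LinearMap.ker (Matrix.toLin' (Matrix.of fun i => star (X i))) ≠ ⊥ :=
    LinearMap.ker_ne_bot_of_finrank_lt (by simpa using hι)
  obtain ⟨v, hv, hv0⟩ := Submodule.exists_mem_ne_zero_of_ne_bot hker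
  have horth (i : ι) : star v ⬝ᵥ X i = 0 := by
    have hi : star (X i) ⬝ᵥ v = 0 := congrFun (LinearMap.mem_ker.1 hv) i
    rw [star_dotProduct, hi, star_zero]
  obtain ⟨c, hc⟩ : ∃ c : ℝ, (c : ℂ) * (c * star v ⬝ᵥ v) = 1 := by
    have hpos := sum_sq_norm_pos hv0
    refine ⟨(√(∑ k, ‖v k‖ ^ 2))⁻¹, ?_⟩
    rw [star_dotProduct_self, ← Complex.ofReal_mul, ← Complex.ofReal_mul, ← mul_assoc, ← mul_inv,
      Real.mul_self_sqrt hpos.le, inv_mul_cancel₀ hpos.ne', Complex.ofReal_one]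
  refine ⟨(c : ℂ) • v, ?_, fun i => ?_⟩
  · simpa [star_smul, smul_dotProduct, dotProduct_smul] using hc
  · rw [star_smul, smul_dotProduct, horth i, smul_zero]

end UnitVectors

section Contractions

open scoped Matrix.Norms.L2Operator

variable {n : Type*} [Fintype n] [DecidableEq n] {M : Matrix n n ℂ} {a : ℂ}

lemma detOneSub_ne_zero (hM : ‖M‖ ≤ 1) (ha : ‖a‖ < 1) : detOneSub a M ≠ 0 := by
  have hsmul : ‖a • M‖ < 1 :=
    (norm_smul_le a M).trans_lt (mul_lt_one_of_nonneg_of_lt_one_left (norm_nonneg a) ha hM)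
  exact ((isUnit_iff_isUnit_det _).1 (isUnit_one_sub_of_norm_lt_one hsmul)).ne_zero

lemma norm_star_dotProduct_mulVec_le (hM : ‖M‖ ≤ 1) (x : n → ℂ) :
    ‖star x ⬝ᵥ (M *ᵥ x)‖ ≤ ∑ k, ‖x k‖ ^ 2 := by
  set v : EuclideanSpace ℂ n := WithLp.toLp 2 x
  have hMv : ‖WithLp.toLp 2 (M *ᵥ x)‖ ≤ ‖v‖ :=
    (l2_opNorm_mulVec M v).trans (mul_le_of_le_one_left (norm_nonneg v) hM)
  calc ‖star x ⬝ᵥ (M *ᵥ x)‖ = ‖inner ℂ v (WithLp.toLp 2 (M *ᵥ x))‖ := by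
        rw [EuclideanSpace.inner_toLp_toLp, dotProduct_comm]
    _ ≤ ‖v‖ * ‖v‖ := (norm_inner_le_norm _ _).trans (by gcongr)
    _ = ∑ k, ‖x k‖ ^ 2 := by rw [← sq, EuclideanSpace.norm_sq_eq]

lemma le_re_star_dotProduct_one_sub_smul_mulVec (hM : ‖M‖ ≤ 1) (a : ℂ) (x : n → ℂ) :
    (1 - ‖a‖) * ∑ k, ‖x k‖ ^ 2 ≤ (star x ⬝ᵥ ((1 - a • M) *ᵥ x)).re := by
  have hre : (a * (star x ⬝ᵥ (M *ᵥ x))).re ≤ ‖a‖ * ∑ k, ‖x k‖ ^ 2 :=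
    (Complex.re_le_norm _).trans <| by
      rw [norm_mul]
      gcongr
      exact norm_star_dotProduct_mulVec_le hM x
  rw [sub_mulVec, one_mulVec, smul_mulVec, dotProduct_sub, dotProduct_smul, smul_eq_mul,
    star_dotProduct_self, Complex.sub_re, Complex.ofReal_re]
  linarith

lemma integral_cexp_neg_star_dotProduct_one_sub_smul_mulVec (hM : ‖M‖ ≤ 1) (ha : ‖a‖ < 1) :
    ∫ x : n → ℂ, Complex.exp (-(star x ⬝ᵥ ((1 - a • M) *ᵥ x))) =
      Real.pi ^ Fintype.card n / detOneSub a M :=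
  integral_cexp_neg_star_dotProduct_mulVec fun x hx =>
    (mul_pos (sub_pos.2 ha) (sum_sq_norm_pos hx)).trans_le
      (le_re_star_dotProduct_one_sub_smul_mulVec hM a x)

end Contractions

section UnitaryGroup

variable {n : Type*} [Fintype n] [DecidableEq n]

instance : SecondCountableTopology (unitaryGroup n ℂ) :=
  haveI : SecondCountableTopology (Matrix n n ℂ) :=
    inferInstanceAs (SecondCountableTopology (n → n → ℂ))
  TopologicalSpace.Subtype.secondCountableTopology _

open scoped Matrix.Norms.L2Operator in
lemma norm_coe_unitaryGroup_le_one (u : unitaryGroup n ℂ) : ‖(u : Matrix n n ℂ)‖ ≤ 1 := by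
  cases subsingleton_or_nontrivial (Matrix n n ℂ)
  · simp [Subsingleton.elim (u : Matrix n n ℂ) 0]
  · exact (CStarRing.norm_of_mem_unitary u.2).le

instance : CompactSpace (unitaryGroup n ℂ) := by
  have hbox : IsCompact {M : Matrix n n ℂ | ∀ i j, M i j ∈ Metric.closedBall 0 1} :=
    isCompact_pi_infinite fun _ => isCompact_pi_infinite fun _ => isCompact_closedBall 0 1
  have hclosed : IsClosed (unitaryGroup n ℂ : Set (Matrix n n ℂ)) := isClosed_unitary
  refine isCompact_iff_compactSpace.1 <| hbox.of_isClosed_subset hclosed fun u hu i j => ?_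
  simpa using entry_norm_bound_of_unitary hu i j

lemma detOneSub_coe_ne_zero {a : ℂ} (ha : ‖a‖ < 1) (u : unitaryGroup n ℂ) :
    detOneSub a (u : Matrix n n ℂ) ≠ 0 :=
  detOneSub_ne_zero (norm_coe_unitaryGroup_le_one u) ha

lemma detOneSub_star_coe_ne_zero {b : ℂ} (hb : ‖b‖ < 1) (u : unitaryGroup n ℂ) :
    detOneSub b (star (u : Matrix n n ℂ)) ≠ 0 :=
  detOneSub_coe_ne_zero hb (star u)

section Denominator

variable {ι κ : Type*} {a : ι → ℂ} {b : κ → ℂ} {I : Finset ι} {J : Finset κ}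

lemma continuous_prod_inv_detOneSub (ha : ∀ i, ‖a i‖ < 1) (I : Finset ι) :
    Continuous fun u : unitaryGroup n ℂ => ∏ i ∈ I, (detOneSub (a i) (u : Matrix n n ℂ))⁻¹ :=
  continuous_finsetProd _ fun i _ =>
    Continuous.inv₀ (by fun_prop) fun u => detOneSub_coe_ne_zero (ha i) u

lemma continuous_prod_inv_detOneSub_star (hb : ∀ k, ‖b k‖ < 1) (J : Finset κ) :
    Continuous fun u : unitaryGroup n ℂ =>
      ∏ k ∈ J, (detOneSub (b k) (star (u : Matrix n n ℂ)))⁻¹ :=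
  continuous_finsetProd _ fun k _ =>
    Continuous.inv₀ (by fun_prop) fun u => detOneSub_star_coe_ne_zero (hb k) u

/-- The reciprocal of the denominator of the ratios to be averaged: the parameters `a` belong to
`u` and the parameters `b` to `star u`. -/
noncomputable def invDenominator (a : ι → ℂ) (b : κ → ℂ) (I : Finset ι) (J : Finset κ)
    (u : unitaryGroup n ℂ) : ℂ :=
  (∏ i ∈ I, (detOneSub (a i) (u : Matrix n n ℂ))⁻¹) *
    ∏ k ∈ J, (detOneSub (b k) (star (u : Matrix n n ℂ)))⁻¹

lemma continuous_invDenominator (ha : ∀ i, ‖a i‖ < 1) (hb : ∀ k, ‖b k‖ < 1) :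
    Continuous (invDenominator a b I J : unitaryGroup n ℂ → ℂ) :=
  (continuous_prod_inv_detOneSub ha I).mul (continuous_prod_inv_detOneSub_star hb J)

lemma detOneSub_mul_invDenominator [DecidableEq ι] {i : ι} (hi : i ∈ I) (ha : ‖a i‖ < 1)
    (u : unitaryGroup n ℂ) :
    detOneSub (a i) (u : Matrix n n ℂ) * invDenominator a b I J u =
      invDenominator a b (I.erase i) J u := by
  rw [invDenominator, invDenominator, ← mul_assoc, ← Finset.mul_prod_erase I _ hi,
    mul_inv_cancel_left₀ (detOneSub_coe_ne_zero ha u)]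

lemma detOneSub_star_mul_invDenominator [DecidableEq κ] {k : κ} (hk : k ∈ J) (hb : ‖b k‖ < 1)
    (u : unitaryGroup n ℂ) :
    detOneSub (b k) (star (u : Matrix n n ℂ)) * invDenominator a b I J u =
      invDenominator a b I (J.erase k) u := by
  rw [invDenominator, invDenominator, mul_left_comm, ← Finset.mul_prod_erase J _ hk,
    mul_inv_cancel_left₀ (detOneSub_star_coe_ne_zero hb u)]

end Denominator

/- Multiplication by a unit scalar `z` turns `a i` into `z * a i`; the mean value property then
moves all the `a i` to `0`. -/
theorem integral_prod_inv_detOneSub [MeasurableSpace (unitaryGroup n ℂ)]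
    [BorelSpace (unitaryGroup n ℂ)] (μ : Measure (unitaryGroup n ℂ)) [μ.IsMulLeftInvariant]
    [IsProbabilityMeasure μ] {ι : Type*} {a : ι → ℂ} (ha : ∀ i, ‖a i‖ < 1) (I : Finset ι) :
    ∫ u : unitaryGroup n ℂ, ∏ i ∈ I, (detOneSub (a i) (u : Matrix n n ℂ))⁻¹ ∂μ = 1 := by
  set Φ : ℂ → unitaryGroup n ℂ → ℂ := fun z u => ∏ i ∈ I, (detOneSub (z * a i) (u : Matrix n n ℂ))⁻¹
  have hne {z : ℂ} (hz : z ∈ Metric.closedBall 0 1) (u : unitaryGroup n ℂ) (i : ι) :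
      detOneSub (z * a i) (u : Matrix n n ℂ) ≠ 0 := by
    refine detOneSub_coe_ne_zero ?_ u
    rw [norm_mul]
    exact mul_lt_one_of_nonneg_of_lt_one_right (mem_closedBall_zero_iff.1 hz) (norm_nonneg _)
      (ha i)
  have hcont : ContinuousOn (Function.uncurry Φ) (Metric.closedBall 0 1 ×ˢ Set.univ) :=
    continuousOn_finsetProd _ fun i _ =>
      ContinuousOn.inv₀ (Continuous.continuousOn (by fun_prop)) fun p hp => hne hp.1 p.2 i
  have hdiff (u : unitaryGroup n ℂ) : DifferentiableOn ℂ (fun z => Φ z u) (Metric.ball 0 1) := by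
    refine DifferentiableOn.fun_finsetProd fun i _ => ?_
    refine DifferentiableOn.inv (Differentiable.differentiableOn ?_) fun z hz =>
      hne (Metric.ball_subset_closedBall hz) u i
    exact (isPolyOfDegreeLE_detOneSub (u : Matrix n n ℂ)).differentiable.fun_comp
      (differentiable_id.mul_const (a i))
  have htranslate (z : ℂ) (hz : z ∈ Metric.sphere (0 : ℂ) 1) :
      ∃ g : unitaryGroup n ℂ, ∀ u, Φ z u = Φ 1 (g * u) := by
    have hz' : z ∈ unitary ℂ := by
      simp [Unitary.mem_iff_self_mul_star, Complex.mul_conj', mem_sphere_zero_iff_norm.1 hz]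
    refine ⟨(⟨z, hz'⟩ : unitary ℂ) • 1, fun u => ?_⟩
    simp [Φ, detOneSub, smul_smul, mul_comm z]
  simpa [Φ] using integral_eq_integral_center_of_eq_mul_left μ hcont hdiff htranslate

end UnitaryGroup

section Dilations

variable {n R : Type*} [DecidableEq n] [CommRing R] [StarRing R]

/-- For a unit vector `w`, the map that multiplies `w` by `z` and fixes the vectors orthogonal
to `w`. -/
def dilation (w : n → R) (z : R) : Matrix n n R := 1 + (z - 1) • vecMulVec w (star w)

@[simp]
lemma dilation_one (w : n → R) : dilation w 1 = 1 := by simp [dilation]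

@[simp]
lemma star_dilation (w : n → R) (z : R) : star (dilation w z) = dilation w (star z) := by
  simp [dilation, star_eq_conjTranspose, conjTranspose_vecMulVec]

variable [Fintype n]

lemma dilation_mul_dilation {w : n → R} (hw : star w ⬝ᵥ w = 1) (z z' : R) :
    dilation w z * dilation w z' = dilation w (z * z') := by
  have hproj : vecMulVec w (star w) * vecMulVec w (star w) = vecMulVec w (star w) := by
    rw [vecMulVec_mul_vecMulVec, hw, one_smul]
  simp only [dilation, add_mul, mul_add, smul_mul_smul_comm, hproj, mul_one, one_mul]
  module

lemma det_dilation {w : n → R} (hw : star w ⬝ᵥ w = 1) (z : R) : (dilation w z).det = z := by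
  rw [dilation, ← smul_vecMulVec, vecMulVec_eq Unit, det_one_add_replicateCol_mul_replicateRow,
    dotProduct_smul, hw]
  simp

lemma dilation_mulVec {w x : n → R} (hx : star w ⬝ᵥ x = 0) (z : R) : dilation w z *ᵥ x = x := by
  rw [dilation, add_mulVec, one_mulVec, smul_mulVec, vecMulVec_mulVec, hx]
  simp

lemma dilation_mem_unitaryGroup {w : n → ℂ} (hw : star w ⬝ᵥ w = 1) {z : ℂ} (hz : ‖z‖ = 1) :
    dilation w z ∈ unitaryGroup n ℂ := by
  rw [mem_unitaryGroup_iff, star_dilation, dilation_mul_dilation hw, RCLike.star_def,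
    Complex.mul_conj', hz]
  simp

open scoped Matrix.Norms.L2Operator in
lemma norm_dilation_le_one {w : n → ℂ} (hw : star w ⬝ᵥ w = 1) {z : ℂ}
    (hz : z ∈ Metric.closedBall 0 1) : ‖dilation w z‖ ≤ 1 := by
  have hdiff : Differentiable ℂ (dilation w) := by
    unfold dilation
    fun_prop
  rw [← closure_ball (0 : ℂ) one_ne_zero] at hz
  refine Complex.norm_le_of_forall_mem_frontier_norm_le Metric.isBounded_ball hdiff.diffContOnCl
    (fun c hc => ?_) hz
  rw [frontier_ball (0 : ℂ) one_ne_zero, mem_sphere_zero_iff_norm] at hc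
  exact norm_coe_unitaryGroup_le_one ⟨_, dilation_mem_unitaryGroup hw hc⟩

open scoped Matrix.Norms.L2Operator in
lemma detOneSub_star_mul_dilation_ne_zero {w : n → ℂ} (hw : star w ⬝ᵥ w = 1) {b z : ℂ}
    (hb : ‖b‖ < 1) (hz : z ∈ Metric.closedBall 0 1) (u : unitaryGroup n ℂ) :
    detOneSub b (star (u : Matrix n n ℂ) * dilation w z) ≠ 0 :=
  detOneSub_ne_zero ((norm_mul_le _ _).trans <|
    mul_le_one₀ (norm_coe_unitaryGroup_le_one (star u)) (norm_nonneg _)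
      (norm_dilation_le_one hw hz)) hb

lemma isPolyOfDegreeLE_detOneSub_mul_dilation (b : R) (M : Matrix n n R) (w : n → R) :
    IsPolyOfDegreeLE (Fintype.card n) fun z => detOneSub b (M * dilation w z) := by
  convert isPolyOfDegreeLE_det_smul_add (-(b • (M * vecMulVec w (star w))))
    (1 - b • (M * (1 - vecMulVec w (star w)))) using 3 with z
  rw [detOneSub, dilation]
  congr 1
  simp only [mul_add, mul_sub, mul_smul_comm, mul_one]
  module

end Dilations

section Vanishing

variable {n ι κ : Type*} [Fintype n] [DecidableEq n]

lemma star_dotProduct_coe_mul_mulVec_of_mulVec_eq {g : unitaryGroup n ℂ} {x : n → ℂ}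
    (hx : (g : Matrix n n ℂ) *ᵥ x = x) (M : Matrix n n ℂ) :
    star x ⬝ᵥ (((g : Matrix n n ℂ) * M) *ᵥ x) = star x ⬝ᵥ (M *ᵥ x) := by
  have hstar : (g : Matrix n n ℂ)ᴴ *ᵥ x = x := by
    nth_rw 1 [← hx]
    rw [mulVec_mulVec, ← star_eq_conjTranspose, Unitary.coe_star_mul_self, one_mulVec]
  rw [← mulVec_mulVec, dotProduct_mulVec, ← conjTranspose_conjTranspose (g : Matrix n n ℂ),
    ← star_mulVec, hstar]

open scoped Matrix.Norms.L2Operator in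
lemma prod_inv_detOneSub_eq_integral [Fintype ι] {M : Matrix n n ℂ} (hM : ‖M‖ ≤ 1) {a : ι → ℂ}
    (ha : ∀ i, ‖a i‖ < 1) :
    ∏ i, (detOneSub (a i) M)⁻¹ = ((Real.pi ^ Fintype.card n : ℂ)⁻¹) ^ Fintype.card ι *
      ∫ X : ι → n → ℂ, ∏ i, Complex.exp (-(star (X i) ⬝ᵥ ((1 - a i • M) *ᵥ X i))) := by
  have hpi : (Real.pi ^ Fintype.card n : ℂ) ≠ 0 :=
    pow_ne_zero _ (Complex.ofReal_ne_zero.2 Real.pi_ne_zero)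
  rw [integral_fintype_prod_volume_eq_prod (fun i (x : n → ℂ) =>
    Complex.exp (-(star x ⬝ᵥ ((1 - a i • M) *ᵥ x))))]
  simp_rw [integral_cexp_neg_star_dotProduct_one_sub_smul_mulVec hM (ha _), div_eq_mul_inv]
  rw [Finset.prod_mul_distrib, Finset.prod_const, Finset.card_univ, ← mul_assoc, ← mul_pow,
    inv_mul_cancel₀ hpi, one_pow, one_mul]

variable [MeasurableSpace (unitaryGroup n ℂ)] [BorelSpace (unitaryGroup n ℂ)]

lemma integrable_continuous_mul_prod_cexp [Fintype ι] (μ : Measure (unitaryGroup n ℂ))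
    [IsFiniteMeasure μ] {a : ι → ℂ} (ha : ∀ i, ‖a i‖ < 1)
    {h : unitaryGroup n ℂ → ℂ} (hh : Continuous h) :
    Integrable (fun p : unitaryGroup n ℂ × (ι → n → ℂ) => h p.1 *
      ∏ i, Complex.exp (-(star (p.2 i) ⬝ᵥ ((1 - a i • (p.1 : Matrix n n ℂ)) *ᵥ p.2 i))))
      (μ.prod volume) := by
  obtain ⟨C, hC⟩ := isCompact_univ.exists_bound_of_continuousOn hh.continuousOn
  have hmajorant : Integrable (fun X : ι → n → ℂ =>
      ∏ i, Real.exp (-((1 - ‖a i‖) * ∑ k, ‖X i k‖ ^ 2))) :=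
    Integrable.fintype_prod fun i => integrable_exp_neg_mul_sum_sq_norm (sub_pos.2 (ha i))
  refine ((hmajorant.const_mul C).comp_snd μ).mono' ?_ (ae_of_all _ fun p => ?_)
  · refine Continuous.aestronglyMeasurable ((hh.comp continuous_fst).mul ?_)
    refine continuous_finsetProd _ fun i _ => Complex.continuous_exp.comp (Continuous.neg ?_)
    exact Continuous.dotProduct (by fun_prop) (Continuous.matrix_mulVec (by fun_prop) (by fun_prop))
  · rw [norm_mul, norm_prod]
    have hexp (i : ι) :
        ‖Complex.exp (-(star (p.2 i) ⬝ᵥ ((1 - a i • (p.1 : Matrix n n ℂ)) *ᵥ p.2 i)))‖ ≤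
          Real.exp (-((1 - ‖a i‖) * ∑ k, ‖p.2 i k‖ ^ 2)) := by
      rw [Complex.norm_exp, Complex.neg_re]
      exact Real.exp_le_exp.2 <| neg_le_neg <| le_re_star_dotProduct_one_sub_smul_mulVec
        (norm_coe_unitaryGroup_le_one p.1) (a i) (p.2 i)
    gcongr
    · exact (norm_nonneg _).trans (hC p.1 trivial)
    · exact hC p.1 trivial
    · exact hexp _

variable (μ : Measure (unitaryGroup n ℂ)) [μ.IsMulLeftInvariant] [IsProbabilityMeasure μ]

/- For `‖z‖ = 1` the factor `z` produced by the dilation is absorbed by `star (det u)`; the mean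
value property in `z` then gives the value at `z = 0`. -/
lemma integral_star_det_mul_eq_zero_of_invariant {w : n → ℂ} (hw : star w ⬝ᵥ w = 1)
    {F : unitaryGroup n ℂ → ℂ} (hFcont : Continuous F)
    (hFinv : ∀ g : unitaryGroup n ℂ,
      (∀ x, star w ⬝ᵥ x = 0 → (g : Matrix n n ℂ) *ᵥ x = x) → ∀ u, F (g * u) = F u)
    {b : κ → ℂ} (hb : ∀ k, ‖b k‖ < 1) (J : Finset κ) :
    ∫ u : unitaryGroup n ℂ, star (u : Matrix n n ℂ).det *
      (F u * ∏ k ∈ J, (detOneSub (b k) (star (u : Matrix n n ℂ)))⁻¹) ∂μ = 0 := by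
  set Φ : ℂ → unitaryGroup n ℂ → ℂ := fun z u => z * (star (u : Matrix n n ℂ).det *
    (F u * ∏ k ∈ J, (detOneSub (b k) (star (u : Matrix n n ℂ) * dilation w z))⁻¹)) with hΦ
  have hcont : ContinuousOn (Function.uncurry Φ) (Metric.closedBall 0 1 ×ˢ Set.univ) := by
    have hprod : ContinuousOn (fun p : ℂ × unitaryGroup n ℂ =>
        ∏ k ∈ J, (detOneSub (b k) (star (p.2 : Matrix n n ℂ) * dilation w p.1))⁻¹)
        (Metric.closedBall 0 1 ×ˢ Set.univ) :=
      continuousOn_finsetProd _ fun k _ =>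
        ContinuousOn.inv₀ (Continuous.continuousOn (by unfold dilation; fun_prop))
          fun p hp => detOneSub_star_mul_dilation_ne_zero hw (hb k) hp.1 p.2
    have hdet : Continuous fun p : ℂ × unitaryGroup n ℂ => (p.2 : Matrix n n ℂ).det := by fun_prop
    exact continuousOn_fst.mul (hdet.star.continuousOn.mul
      ((hFcont.comp continuous_snd).continuousOn.mul hprod))
  have hdiff (u : unitaryGroup n ℂ) : DifferentiableOn ℂ (fun z => Φ z u) (Metric.ball 0 1) := by
    refine differentiableOn_id.fun_mul <| DifferentiableOn.const_mul
      (DifferentiableOn.const_mul (DifferentiableOn.fun_finsetProd fun k _ => ?_) _) _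
    exact DifferentiableOn.inv
      (isPolyOfDegreeLE_detOneSub_mul_dilation _ _ w).differentiable.differentiableOn fun z hz =>
        detOneSub_star_mul_dilation_ne_zero hw (hb k) (Metric.ball_subset_closedBall hz) u
  have htranslate (z : ℂ) (hz : z ∈ Metric.sphere (0 : ℂ) 1) :
      ∃ g : unitaryGroup n ℂ, ∀ u, Φ z u = Φ 1 (g * u) := by
    have hz' : ‖star z‖ = 1 := by simpa using hz
    refine ⟨⟨dilation w (star z), dilation_mem_unitaryGroup hw hz'⟩, fun u => ?_⟩
    simp only [hΦ]
    rw [hFinv _ fun x hx => dilation_mulVec hx _]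
    simp [det_dilation hw, mul_assoc]
  simpa [hΦ] using integral_eq_integral_center_of_eq_mul_left μ hcont hdiff htranslate

/- Written as Gaussian integrals over vectors `X i`, the factors of the denominator are invariant
under the unitary dilations along a vector orthogonal to all `X i`. -/
theorem integral_star_det_mul_invDenominator_eq_zero {a : ι → ℂ} {b : κ → ℂ} {I : Finset ι}
    {J : Finset κ} (ha : ∀ i, ‖a i‖ < 1) (hb : ∀ k, ‖b k‖ < 1) (hI : I.card < Fintype.card n) :
    ∫ u : unitaryGroup n ℂ, star (u : Matrix n n ℂ).det * invDenominator a b I J u ∂μ = 0 := by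
  set B : unitaryGroup n ℂ → ℂ :=
    fun u => ∏ k ∈ J, (detOneSub (b k) (star (u : Matrix n n ℂ)))⁻¹
  set G : (I → n → ℂ) → unitaryGroup n ℂ → ℂ := fun X u =>
    ∏ i : I, Complex.exp (-(star (X i) ⬝ᵥ ((1 - a i • (u : Matrix n n ℂ)) *ᵥ X i)))
  have hinner (X : I → n → ℂ) : ∫ u, star (u : Matrix n n ℂ).det * (G X u * B u) ∂μ = 0 := by
    obtain ⟨w, hw, hX⟩ := exists_unit_orthogonal (by simpa using hI) X
    refine integral_star_det_mul_eq_zero_of_invariant μ hw (F := G X) ?_ (fun g hg u => ?_) hb J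
    · refine continuous_finsetProd _ fun i _ => Complex.continuous_exp.comp (Continuous.neg ?_)
      exact continuous_const.dotProduct (Continuous.matrix_mulVec (by fun_prop) continuous_const)
    · refine Finset.prod_congr rfl fun i _ => ?_
      simp only [Submonoid.coe_mul, sub_mulVec, smul_mulVec, dotProduct_sub, dotProduct_smul,
        star_dotProduct_coe_mul_mulVec_of_mulVec_eq (hg _ (hX i))]
  have hgauss (u : unitaryGroup n ℂ) :
      star (u : Matrix n n ℂ).det * invDenominator a b I J u =
        ((Real.pi ^ Fintype.card n : ℂ)⁻¹) ^ Fintype.card I *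
          ∫ X, star (u : Matrix n n ℂ).det * B u * G X u := by
    rw [invDenominator, ← Finset.prod_coe_sort,
      prod_inv_detOneSub_eq_integral (norm_coe_unitaryGroup_le_one u) fun i : I => ha i,
      integral_const_mul]
    ring
  have hcont : Continuous fun u : unitaryGroup n ℂ => star (u : Matrix n n ℂ).det * B u :=
    (Continuous.star (by fun_prop)).mul (continuous_prod_inv_detOneSub_star hb J)
  refine (integral_congr_ae (ae_of_all _ hgauss)).trans ?_
  rw [integral_const_mul, integral_integral_swap
    (integrable_continuous_mul_prod_cexp μ (fun i : I => ha i) hcont)]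
  simp only [mul_assoc, mul_comm (B _), hinner, integral_zero, mul_zero]

end Vanishing

section CauchyIntegral

lemma isPolyOfDegreeLE_integral_detOneSub_mul {n Ω : Type*} [Fintype n] [DecidableEq n]
    [TopologicalSpace Ω] [CompactSpace Ω] [MeasurableSpace Ω] [OpensMeasurableSpace Ω]
    (μ : Measure Ω) [IsFiniteMeasureOnCompacts μ] {M : Ω → Matrix n n ℂ} {G : Ω → ℂ}
    (hM : Continuous M) (hG : Continuous G) :
    IsPolyOfDegreeLE (Fintype.card n) fun z => ∫ ω, detOneSub z (M ω) * G ω ∂μ := by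
  refine IsPolyOfDegreeLE.integral (fun ω => ?_) fun z => ?_
  · simpa only [mul_comm] using (isPolyOfDegreeLE_detOneSub (M ω)).const_mul (G ω)
  · exact Continuous.integrable_of_hasCompactSupport (by fun_prop) (.of_compactSpace _)

/-- The right-hand side of the Cauchy identity for the two alphabets `a` and `b`. -/
def cauchyKernel {K ι κ : Type*} [Field K] (a : ι → K) (b : κ → K) (I : Finset ι) (J : Finset κ) :
    K :=
  ∏ i ∈ I, ∏ k ∈ J, (1 - a i * b k)⁻¹

variable {n ι κ : Type*} [Fintype n] [DecidableEq n] {a : ι → ℂ} {b : κ → ℂ} {I : Finset ι}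
  {J : Finset κ}

lemma one_sub_mul_ne_zero {𝕜 : Type*} [NormedField 𝕜] {a b : 𝕜} (ha : ‖a‖ < 1) (hb : ‖b‖ < 1) :
    1 - a * b ≠ 0 := by
  intro h
  have hnorm : ‖a * b‖ = 1 := by rw [← sub_eq_zero.1 h, norm_one]
  rw [norm_mul] at hnorm
  exact (mul_lt_one_of_nonneg_of_lt_one_left (norm_nonneg a) ha hb.le).ne hnorm

variable [MeasurableSpace (unitaryGroup n ℂ)] [BorelSpace (unitaryGroup n ℂ)]
  (μ : Measure (unitaryGroup n ℂ)) [μ.IsMulLeftInvariant] [IsProbabilityMeasure μ]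

lemma integral_detOneSub_star_inv_mul_invDenominator_eq_zero (ha : ∀ i, ‖a i‖ < 1)
    (hb : ∀ k, ‖b k‖ < 1) {i : ι} (hi : i ∈ I) (hai : a i ≠ 0) (hI : I.card ≤ Fintype.card n) :
    ∫ u : unitaryGroup n ℂ, detOneSub (a i)⁻¹ (star (u : Matrix n n ℂ)) *
      invDenominator a b I J u ∂μ = 0 := by
  classical
  have hcancel (u : unitaryGroup n ℂ) :
      detOneSub (a i)⁻¹ (star (u : Matrix n n ℂ)) * invDenominator a b I J u =
        (-(a i)⁻¹) ^ Fintype.card n *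
          (star (u : Matrix n n ℂ).det * invDenominator a b (I.erase i) J u) := by
    rw [← detOneSub_mul_invDenominator hi (ha i) u,
      detOneSub_eq_of_mul_eq_one (Unitary.star_mul_self_of_mem u.2) (inv_ne_zero hai), inv_inv,
      det_neg, star_eq_conjTranspose, det_conjTranspose, neg_pow (a i)⁻¹]
    ring
  simp_rw [hcancel]
  rw [integral_const_mul, integral_star_det_mul_invDenominator_eq_zero μ ha hb
    ((Finset.card_erase_lt_of_mem hi).trans_le hI), mul_zero]

/- Both sides are polynomials in `z` of degree at most `card n` that agree at `0` and at the
inverses of the `a i`. -/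
lemma integral_detOneSub_star_mul_invDenominator (ha : ∀ i, ‖a i‖ < 1)
    (hainj : Function.Injective a) (ha0 : ∀ i, a i ≠ 0) (hb : ∀ k, ‖b k‖ < 1)
    (hI : I.card = Fintype.card n) (z : ℂ) :
    ∫ u : unitaryGroup n ℂ, detOneSub z (star (u : Matrix n n ℂ)) * invDenominator a b I J u ∂μ =
      (∫ u : unitaryGroup n ℂ, invDenominator a b I J u ∂μ) * ∏ i ∈ I, (1 - a i * z) := by
  classical
  have hpoly := isPolyOfDegreeLE_integral_detOneSub_mul μ
    (M := fun u : unitaryGroup n ℂ => star (u : Matrix n n ℂ)) (by fun_prop)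
    (continuous_invDenominator (I := I) (J := J) ha hb)
  have hprod : IsPolyOfDegreeLE (Fintype.card n) fun z => ∏ i ∈ I, (1 - a i * z) := by
    simpa only [hI] using IsPolyOfDegreeLE.prod_one_sub_mul I a
  refine congrFun (hpoly.eq_of_eqOn (hprod.const_mul _)
    (s := insert 0 (I.image fun i => (a i)⁻¹)) ?_ fun z hz => ?_) z
  · rw [Finset.card_insert_of_notMem (by simp [ha0]),
      Finset.card_image_of_injective _ fun _ _ h => hainj (inv_injective h), hI]
    exact Nat.lt_succ_self _
  · rcases Finset.mem_insert.1 hz with rfl | hz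
    · simp
    · obtain ⟨i, hi, rfl⟩ := Finset.mem_image.1 hz
      rw [integral_detOneSub_star_inv_mul_invDenominator_eq_zero μ ha hb hi (ha0 i) hI.le,
        Finset.prod_eq_zero hi (by rw [mul_inv_cancel₀ (ha0 i), sub_self]), mul_zero]

theorem integral_invDenominator (ha : ∀ i, ‖a i‖ < 1) (hainj : Function.Injective a)
    (ha0 : ∀ i, a i ≠ 0) (hb : ∀ k, ‖b k‖ < 1) (hI : I.card = Fintype.card n) :
    ∫ u : unitaryGroup n ℂ, invDenominator a b I J u ∂μ = cauchyKernel a b I J := by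
  classical
  induction J using Finset.induction_on with
  | empty => simpa [cauchyKernel, invDenominator] using integral_prod_inv_detOneSub μ ha I
  | insert k J hk ih =>
    have hpeel := integral_detOneSub_star_mul_invDenominator μ (J := insert k J) ha hainj ha0
      hb hI (b k)
    have hne : ∏ i ∈ I, (1 - a i * b k) ≠ 0 :=
      Finset.prod_ne_zero_iff.2 fun i _ => one_sub_mul_ne_zero (ha i) (hb k)
    simp_rw [detOneSub_star_mul_invDenominator (Finset.mem_insert_self k J) (hb k),
      Finset.erase_insert hk, ih] at hpeel
    rw [← div_eq_iff hne] at hpeel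
    rw [← hpeel, cauchyKernel, cauchyKernel, div_eq_inv_mul, ← Finset.prod_inv_distrib,
      ← Finset.prod_mul_distrib]
    simp_rw [Finset.prod_insert hk]

end CauchyIntegral

section SwapSum

lemma sum_powersetCard_insert {ξ M : Type*} [DecidableEq ξ] [AddCommMonoid M] {X : Finset ξ}
    {k₀ : ξ} (hk₀ : k₀ ∉ X) (q : ℕ) (f : Finset ξ → M) :
    ∑ S ∈ (insert k₀ X).powersetCard q, f S =
      ∑ S ∈ X.powersetCard q, f S + ∑ S ∈ X.powerset with S.card + 1 = q, f (insert k₀ S) := by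
  simp only [Finset.powersetCard_eq_filter, Finset.sum_filter, Finset.sum_powerset_insert hk₀]
  congr 1
  refine Finset.sum_congr rfl fun S hS => ?_
  rw [Finset.card_insert_of_notMem fun h => hk₀ (Finset.mem_powerset.1 hS h)]

lemma prod_sub_comm {ξ R : Type*} [CommRing R] (s : Finset ξ) (f : ξ → R) (z : R) :
    ∏ l ∈ s, (f l - z) = (-1) ^ s.card * ∏ l ∈ s, (z - f l) := by
  simp only [← Finset.prod_const, ← Finset.prod_mul_distrib, neg_one_mul, neg_sub]

lemma prod_one_sub_mul {ξ F : Type*} [Field F] (s : Finset ξ) (f : ξ → F) {z : F} (hz : z ≠ 0) :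
    ∏ l ∈ s, (1 - f l * z) = z ^ s.card * ∏ l ∈ s, (z⁻¹ - f l) := by
  rw [← Finset.prod_const, ← Finset.prod_mul_distrib]
  exact Finset.prod_congr rfl fun l _ => by rw [mul_sub, mul_inv_cancel₀ hz, mul_comm z]

variable {K ξ ι κ : Type*} [Field K] [DecidableEq ξ] {x : ξ → K} {a : ι → K} {b : κ → K}
  {X S : Finset ξ} {I : Finset ι} {J : Finset κ}

/-- The summand of the ratios formula in which the parameters `x l` with `l ∈ S` belong to
`star u` and the remaining ones to `u`. -/
def swapTerm (x : ξ → K) (a : ι → K) (b : κ → K) (X : Finset ξ) (I : Finset ι) (J : Finset κ)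
    (S : Finset ξ) : K :=
  (∏ l ∈ S, ∏ i ∈ I, (x l - a i)) * (∏ j ∈ X \ S, ∏ k ∈ J, (1 - x j * b k)) *
    ∏ j ∈ X \ S, ∏ l ∈ S, (x l - x j)⁻¹

/-- The sum over all ways of choosing which `q` of the parameters `x` belong to `star u`. -/
def swapSum (q : ℕ) (x : ξ → K) (a : ι → K) (b : κ → K) (X : Finset ξ) (I : Finset ι)
    (J : Finset κ) : K :=
  ∑ S ∈ X.powersetCard q, swapTerm x a b X I J S

/-- The polynomial in `z` obtained from `swapSum` by adjoining one more parameter `z` to those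
indexed by `X` and clearing the denominators `z - x k`. -/
def swapPoly (q : ℕ) (x : ξ → K) (a : ι → K) (b : κ → K) (X : Finset ξ) (I : Finset ι)
    (J : Finset κ) (z : K) : K :=
  (∑ S ∈ X.powersetCard q, swapTerm x a b X I J S *
      ((∏ k ∈ J, (1 - z * b k)) * ((∏ j ∈ X \ S, (z - x j)) * (-1) ^ q))) +
    ∑ S ∈ X.powerset with S.card + 1 = q, swapTerm x a b X I J S *
      ((∏ i ∈ I, (z - a i)) * ∏ l ∈ S, (z - x l))

lemma cauchyKernel_erase_left [DecidableEq ι] {i : ι} (hi : i ∈ I) :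
    cauchyKernel a b I J = cauchyKernel a b (I.erase i) J * ∏ k ∈ J, (1 - a i * b k)⁻¹ :=
  (Finset.prod_erase_mul I _ hi).symm

lemma cauchyKernel_erase_right [DecidableEq κ] {k : κ} (hk : k ∈ J) :
    cauchyKernel a b I J = cauchyKernel a b I (J.erase k) * ∏ i ∈ I, (1 - a i * b k)⁻¹ := by
  simp only [cauchyKernel, ← Finset.prod_mul_distrib, Finset.prod_erase_mul J _ hk]

lemma swapTerm_erase_left [DecidableEq ι] {i : ι} (hi : i ∈ I) :
    swapTerm x a b X I J S = swapTerm x a b X (I.erase i) J S * ∏ l ∈ S, (x l - a i) := by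
  simp only [swapTerm, ← Finset.prod_erase_mul I _ hi, Finset.prod_mul_distrib]
  ring

lemma swapTerm_erase_right [DecidableEq κ] {k : κ} (hk : k ∈ J) :
    swapTerm x a b X I J S =
      swapTerm x a b X I (J.erase k) S * ∏ j ∈ X \ S, (1 - x j * b k) := by
  simp only [swapTerm, ← Finset.prod_erase_mul J _ hk, Finset.prod_mul_distrib]
  ring

lemma swapTerm_insert {k₀ : ξ} (hk₀ : k₀ ∉ X) (hS : S ⊆ X) :
    swapTerm x a b (insert k₀ X) I J S =
      swapTerm x a b X I J S * ((∏ k ∈ J, (1 - x k₀ * b k)) * ∏ l ∈ S, (x l - x k₀)⁻¹) := by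
  rw [swapTerm, swapTerm, Finset.insert_sdiff_of_notMem _ fun h => hk₀ (hS h),
    Finset.prod_insert (by simp [hk₀]), Finset.prod_insert (by simp [hk₀])]
  ring

lemma swapTerm_insert_insert {k₀ : ξ} (hk₀ : k₀ ∉ X) (hS : S ⊆ X) :
    swapTerm x a b (insert k₀ X) I J (insert k₀ S) =
      swapTerm x a b X I J S * ((∏ i ∈ I, (x k₀ - a i)) * ∏ j ∈ X \ S, (x k₀ - x j)⁻¹) := by
  have hk₀S : k₀ ∉ S := fun h => hk₀ (hS h)
  simp only [swapTerm, Finset.insert_sdiff_insert, Finset.sdiff_insert_of_notMem hk₀,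
    Finset.prod_insert hk₀S, Finset.prod_mul_distrib]
  ring

lemma swapSum_insert_mul_prod_sub {k₀ : ξ} (hk₀ : k₀ ∉ X) (hx : ∀ k ∈ X, x k₀ ≠ x k) (q : ℕ) :
    swapSum q x a b (insert k₀ X) I J * ∏ k ∈ X, (x k₀ - x k) = swapPoly q x a b X I J (x k₀) := by
  have hne {T : Finset ξ} (hT : T ⊆ X) : ∏ k ∈ T, (x k₀ - x k) ≠ 0 :=
    Finset.prod_ne_zero_iff.2 fun k hk => sub_ne_zero.2 (hx k (hT hk))
  rw [swapSum, sum_powersetCard_insert hk₀, add_mul, Finset.sum_mul, Finset.sum_mul, swapPoly]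
  congr 1
  · refine Finset.sum_congr rfl fun S hS => ?_
    obtain ⟨hSX, hq⟩ := Finset.mem_powersetCard.1 hS
    rw [swapTerm_insert hk₀ hSX, ← Finset.prod_sdiff hSX, Finset.prod_inv_distrib, prod_sub_comm,
      hq, mul_inv, ← inv_pow, inv_neg_one]
    field_simp [hne hSX]
  · refine Finset.sum_congr rfl fun S hS => ?_
    have hSX := Finset.mem_powerset.1 (Finset.mem_filter.1 hS).1
    rw [swapTerm_insert_insert hk₀ hSX, ← Finset.prod_sdiff hSX, Finset.prod_inv_distrib]
    field_simp [hne Finset.sdiff_subset]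

lemma cauchyKernel_mul_swapPoly_apply [DecidableEq ι] {i : ι} (hi : i ∈ I)
    (hab : ∀ k, 1 - a i * b k ≠ 0) (q : ℕ) :
    cauchyKernel a b I J * swapPoly q x a b X I J (a i) =
      cauchyKernel a b (I.erase i) J * swapSum q x a b X (I.erase i) J * ∏ k ∈ X, (a i - x k) := by
  have hne : ∏ k ∈ J, (1 - a i * b k) ≠ 0 := Finset.prod_ne_zero_iff.2 fun k _ => hab k
  have hsign : ((-1 : K) ^ q) * (-1) ^ q = 1 := by rw [← mul_pow]; simp
  rw [swapPoly, cauchyKernel_erase_left hi, swapSum, Finset.prod_eq_zero hi (sub_self (a i))]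
  simp only [zero_mul, mul_zero, Finset.sum_const_zero, add_zero, Finset.mul_sum, Finset.sum_mul]
  refine Finset.sum_congr rfl fun S hS => ?_
  obtain ⟨hSX, hq⟩ := Finset.mem_powersetCard.1 hS
  rw [swapTerm_erase_left hi, ← Finset.prod_sdiff hSX, prod_sub_comm, hq, Finset.prod_inv_distrib]
  field_simp
  linear_combination (swapTerm x a b X (I.erase i) J S * cauchyKernel a b (I.erase i) J *
    (∏ l ∈ S, (a i - x l)) * ∏ j ∈ X \ S, (a i - x j)) * hsign

lemma cauchyKernel_mul_swapPoly_inv [DecidableEq κ] {N p q : ℕ} {k : κ} (hk : k ∈ J) (hbk : b k ≠ 0)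
    (hab : ∀ i, 1 - a i * b k ≠ 0) (hX : X.card = p + q) (hI : I.card = p + N) :
    cauchyKernel a b I J * swapPoly (q + 1) x a b X I J (b k)⁻¹ =
      (b k)⁻¹ ^ N * (cauchyKernel a b I (J.erase k) * swapSum q x a b X I (J.erase k)) *
        ∏ j ∈ X, ((b k)⁻¹ - x j) := by
  have hne : ∏ i ∈ I, (1 - a i * b k) ≠ 0 := Finset.prod_ne_zero_iff.2 fun i _ => hab i
  have hI' : ∏ i ∈ I, ((b k)⁻¹ - a i) ≠ 0 := fun h =>
    hne (by rw [prod_one_sub_mul I a hbk, h, mul_zero])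
  rw [swapPoly, cauchyKernel_erase_right hk, swapSum,
    Finset.prod_eq_zero hk (by rw [inv_mul_cancel₀ hbk, sub_self])]
  simp only [zero_mul, mul_zero, Finset.sum_const_zero, zero_add, Finset.mul_sum, Finset.sum_mul,
    add_left_inj, ← Finset.powersetCard_eq_filter]
  refine Finset.sum_congr rfl fun S hS => ?_
  obtain ⟨hSX, hq⟩ := Finset.mem_powersetCard.1 hS
  have hcard : (X \ S).card = p := by rw [Finset.card_sdiff_of_subset hSX]; omega
  rw [swapTerm_erase_right hk, prod_one_sub_mul _ x hbk, hcard, Finset.prod_inv_distrib,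
    prod_one_sub_mul I a hbk, hI, ← Finset.prod_sdiff hSX, pow_add, inv_pow]
  generalize ∏ i ∈ I, ((b k)⁻¹ - a i) = t at hI' ⊢
  field_simp

lemma isPolyOfDegreeLE_swapPoly {N p q : ℕ} (hX : X.card + 1 = p + q) (hI : I.card = p + N)
    (hJ : J.card = q + N) : IsPolyOfDegreeLE (N + X.card) (swapPoly q x a b X I J) := by
  have hone : IsPolyOfDegreeLE J.card fun z => ∏ k ∈ J, (1 - z * b k) := by
    simpa only [mul_comm] using IsPolyOfDegreeLE.prod_one_sub_mul J b
  refine .add (.sum _ fun S hS => .const_mul _ ?_) (.sum _ fun S hS => .const_mul _ ?_)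
  · obtain ⟨hSX, hq⟩ := Finset.mem_powersetCard.1 hS
    have hcard := Finset.card_sdiff_add_card_eq_card hSX
    exact (hone.mul ((IsPolyOfDegreeLE.prod_sub (X \ S) x).mul (.const _))).mono (by omega)
  · have hq := (Finset.mem_filter.1 hS).2
    exact ((IsPolyOfDegreeLE.prod_sub I a).mul (.prod_sub S x)).mono (by omega)

end SwapSum

section RatiosFormula

variable {n ξ ι κ : Type*} [Fintype n] [DecidableEq n] {x : ξ → ℂ} {a : ι → ℂ}
  {b : κ → ℂ} {X : Finset ξ} {I : Finset ι} {J : Finset κ}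

/-- The integrand of the ratios formula. The functional equation
`detOneSub z⁻¹ (star u) = z⁻¹ ^ card n * det (-star u) * detOneSub z u` turns `q` of the
characteristic polynomials in the numerator from `star u` into `u`; up to a constant, this is the
factor `det (-star u) ^ q`. -/
noncomputable def charpolyRatio (q : ℕ) (x : ξ → ℂ) (a : ι → ℂ) (b : κ → ℂ) (X : Finset ξ)
    (I : Finset ι) (J : Finset κ) (u : unitaryGroup n ℂ) : ℂ :=
  (-star (u : Matrix n n ℂ)).det ^ q * (∏ k ∈ X, detOneSub (x k) (u : Matrix n n ℂ)) *
    invDenominator a b I J u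

lemma continuous_charpolyRatio (ha : ∀ i, ‖a i‖ < 1) (hb : ∀ k, ‖b k‖ < 1) (q : ℕ) :
    Continuous (charpolyRatio (n := n) q x a b X I J) := by
  have hinv := continuous_invDenominator (n := n) (I := I) (J := J) ha hb
  unfold charpolyRatio
  fun_prop

lemma detOneSub_mul_charpolyRatio [DecidableEq ι] {i : ι} (hi : i ∈ I) (ha : ‖a i‖ < 1) (q : ℕ)
    (u : unitaryGroup n ℂ) :
    detOneSub (a i) (u : Matrix n n ℂ) * charpolyRatio q x a b X I J u =
      charpolyRatio q x a b X (I.erase i) J u := by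
  rw [charpolyRatio, charpolyRatio, ← detOneSub_mul_invDenominator hi ha]
  ring

lemma detOneSub_inv_mul_charpolyRatio_succ [DecidableEq κ] {k : κ} (hk : k ∈ J) (hb : ‖b k‖ < 1)
    (hbk : b k ≠ 0) (q : ℕ) (u : unitaryGroup n ℂ) :
    detOneSub (b k)⁻¹ (u : Matrix n n ℂ) * charpolyRatio (q + 1) x a b X I J u =
      (b k)⁻¹ ^ Fintype.card n * charpolyRatio q x a b X I (J.erase k) u := by
  have hdet : (-(u : Matrix n n ℂ)).det * (-star (u : Matrix n n ℂ)).det = 1 := by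
    rw [← det_mul, neg_mul_neg, Unitary.mul_star_self_of_mem u.2, det_one]
  rw [charpolyRatio, charpolyRatio, ← detOneSub_star_mul_invDenominator hk hb,
    detOneSub_eq_of_mul_eq_one (Unitary.mul_star_self_of_mem u.2) (inv_ne_zero hbk), inv_inv]
  linear_combination ((b k)⁻¹ ^ Fintype.card n * detOneSub (b k) (star (u : Matrix n n ℂ)) *
    (-star (u : Matrix n n ℂ)).det ^ q * (∏ l ∈ X, detOneSub (x l) (u : Matrix n n ℂ)) *
    invDenominator a b I J u) * hdet

lemma charpolyRatio_insert [DecidableEq ξ] {k₀ : ξ} (hk₀ : k₀ ∉ X) (q : ℕ) (u : unitaryGroup n ℂ) :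
    charpolyRatio q x a b (insert k₀ X) I J u =
      detOneSub (x k₀) (u : Matrix n n ℂ) * charpolyRatio q x a b X I J u := by
  rw [charpolyRatio, charpolyRatio, Finset.prod_insert hk₀]
  ring

lemma exists_interpolationNodes {p q N : ℕ} (hab : ∀ i k, 1 - a i * b k ≠ 0)
    (ha : Function.Injective a) (hb : Function.Injective b) (hb0 : ∀ k, b k ≠ 0) (hpq : 0 < p + q)
    (hI : I.card = p + N) (hJ : J.card = q + N) :
    ∃ s : Finset ℂ, p + q + N ≤ s.card ∧
      ∀ z ∈ s, (p ≠ 0 ∧ ∃ i ∈ I, a i = z) ∨ (q ≠ 0 ∧ ∃ k ∈ J, (b k)⁻¹ = z) := by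
  have hacard : (I.image a).card = p + N := by rw [Finset.card_image_of_injective _ ha, hI]
  have hbcard : (J.image fun k => (b k)⁻¹).card = q + N := by
    rw [Finset.card_image_of_injective _ fun _ _ h => hb (inv_injective h), hJ]
  have hdisj : Disjoint (I.image a) (J.image fun k => (b k)⁻¹) := by
    simp only [Finset.disjoint_left, Finset.mem_image, not_exists, not_and]
    rintro _ ⟨i, -, rfl⟩ k - h
    exact hab i k (by rw [← h, inv_mul_cancel₀ (hb0 k), sub_self])
  rcases eq_or_ne p 0 with hp | hp
  · exact ⟨J.image fun k => (b k)⁻¹, by omega, fun z hz =>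
      .inr ⟨by omega, Finset.mem_image.1 hz⟩⟩
  rcases eq_or_ne q 0 with hq | hq
  · exact ⟨I.image a, by omega, fun z hz => .inl ⟨hp, Finset.mem_image.1 hz⟩⟩
  · refine ⟨I.image a ∪ J.image fun k => (b k)⁻¹, ?_, fun z hz => ?_⟩
    · rw [Finset.card_union_of_disjoint hdisj]
      omega
    · exact (Finset.mem_union.1 hz).imp (⟨hp, Finset.mem_image.1 ·⟩) (⟨hq, Finset.mem_image.1 ·⟩)

variable [MeasurableSpace (unitaryGroup n ℂ)] [BorelSpace (unitaryGroup n ℂ)]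
  (μ : Measure (unitaryGroup n ℂ))

/- Both sides are polynomials in `z` of degree at most `card n + X.card`. The peeling identities
`detOneSub_mul_charpolyRatio` and `detOneSub_inv_mul_charpolyRatio_succ` reduce the values at the
`a i` and at the `(b k)⁻¹` to the formula for smaller `p` or `q`. -/
lemma integral_detOneSub_mul_charpolyRatio [DecidableEq ξ] [IsFiniteMeasure μ] {p q : ℕ}
    (ha : ∀ i, ‖a i‖ < 1) (hainj : Function.Injective a) (hb : ∀ k, ‖b k‖ < 1)
    (hbinj : Function.Injective b) (hb0 : ∀ k, b k ≠ 0) (hX : X.card + 1 = p + q)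
    (hI : I.card = p + Fintype.card n) (hJ : J.card = q + Fintype.card n)
    (ih : ∀ {p q : ℕ} {I : Finset ι} {J : Finset κ}, X.card = p + q →
      I.card = p + Fintype.card n → J.card = q + Fintype.card n →
      ∫ u : unitaryGroup n ℂ, charpolyRatio q x a b X I J u ∂μ =
        cauchyKernel a b I J * swapSum q x a b X I J) (z : ℂ) :
    (∫ u : unitaryGroup n ℂ, detOneSub z (u : Matrix n n ℂ) * charpolyRatio q x a b X I J u ∂μ) *
        ∏ k ∈ X, (z - x k) =
      cauchyKernel a b I J * swapPoly q x a b X I J z := by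
  classical
  have hab i k : 1 - a i * b k ≠ 0 := one_sub_mul_ne_zero (ha i) (hb k)
  have hpoly := isPolyOfDegreeLE_integral_detOneSub_mul μ
    (M := fun u : unitaryGroup n ℂ => (u : Matrix n n ℂ)) (by fun_prop)
    (continuous_charpolyRatio (x := x) (X := X) (I := I) (J := J) ha hb q)
  obtain ⟨s, hs, hnode⟩ := exists_interpolationNodes hab hainj hbinj hb0 (by omega) hI hJ
  refine congrFun ((hpoly.mul (.prod_sub X x)).eq_of_eqOn
    ((isPolyOfDegreeLE_swapPoly hX hI hJ).const_mul _) (s := s) (by omega) fun z hz => ?_) z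
  rcases hnode z hz with ⟨hp, i, hi, rfl⟩ | ⟨hq, k, hk, rfl⟩
  · obtain ⟨p, rfl⟩ := Nat.exists_eq_succ_of_ne_zero hp
    simp_rw [detOneSub_mul_charpolyRatio hi (ha i)]
    rw [cauchyKernel_mul_swapPoly_apply hi (hab i),
      ih (p := p) (by omega) (by rw [Finset.card_erase_of_mem hi]; omega) hJ]
  · obtain ⟨q, rfl⟩ := Nat.exists_eq_succ_of_ne_zero hq
    simp_rw [detOneSub_inv_mul_charpolyRatio_succ hk (hb k) (hb0 k)]
    rw [cauchyKernel_mul_swapPoly_inv hk (hb0 k) (fun i => hab i k) (by omega) hI,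
      integral_const_mul, ih (by omega) hI (by rw [Finset.card_erase_of_mem hk]; omega)]

theorem integral_charpolyRatio_of_injective [DecidableEq ξ] [μ.IsMulLeftInvariant]
    [IsProbabilityMeasure μ] (hx : Function.Injective x) (ha : ∀ i, ‖a i‖ < 1)
    (hainj : Function.Injective a) (ha0 : ∀ i, a i ≠ 0) (hb : ∀ k, ‖b k‖ < 1)
    (hbinj : Function.Injective b) (hb0 : ∀ k, b k ≠ 0) {p q : ℕ} (hX : X.card = p + q)
    (hI : I.card = p + Fintype.card n) (hJ : J.card = q + Fintype.card n) :
    ∫ u : unitaryGroup n ℂ, charpolyRatio q x a b X I J u ∂μ =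
      cauchyKernel a b I J * swapSum q x a b X I J := by
  induction X using Finset.induction_on generalizing p q I J with
  | empty =>
    obtain ⟨rfl, rfl⟩ : p = 0 ∧ q = 0 := by simpa [eq_comm] using hX
    rw [zero_add] at hI
    simpa [charpolyRatio, swapSum, swapTerm] using
      integral_invDenominator μ ha hainj ha0 hb hI
  | insert k₀ X hk₀ ih =>
    rw [Finset.card_insert_of_notMem hk₀] at hX
    have hx₀ : ∀ k ∈ X, x k₀ ≠ x k := fun k hk => hx.ne fun h => hk₀ (h ▸ hk)
    have hne : ∏ k ∈ X, (x k₀ - x k) ≠ 0 :=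
      Finset.prod_ne_zero_iff.2 fun k hk => sub_ne_zero.2 (hx₀ k hk)
    simp_rw [charpolyRatio_insert hk₀]
    rw [← mul_left_inj' hne, mul_assoc, swapSum_insert_mul_prod_sub hk₀ hx₀]
    exact integral_detOneSub_mul_charpolyRatio μ ha hainj hb hbinj hb0 hX hI hJ ih (x k₀)

end RatiosFormula

section Genericity

lemma ae_apply_ne_zero {E F : Type*} [NormedAddCommGroup E] [NormedSpace ℝ E] [MeasurableSpace E]
    [BorelSpace E] [FiniteDimensional ℝ E] (μ : Measure E) [μ.IsAddHaarMeasure] [AddCommGroup F]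
    [Module ℝ F] {ℓ : E →ₗ[ℝ] F} (hℓ : ℓ ≠ 0) : ∀ᵐ v ∂μ, ℓ v ≠ 0 := by
  simp only [ae_iff, not_not]
  exact Measure.addHaar_submodule μ (LinearMap.ker ℓ) fun h => hℓ (LinearMap.ker_eq_top.1 h)

lemma ae_injective_and_ne_zero (ι : Type*) [Fintype ι] :
    ∀ᵐ c : ι → ℂ, Function.Injective c ∧ ∀ i, c i ≠ 0 := by
  classical
  have hne (i : ι) : ∀ᵐ c : ι → ℂ, c i ≠ 0 := by
    refine ae_apply_ne_zero volume (ℓ := (LinearMap.proj i : (ι → ℂ) →ₗ[ℝ] ℂ)) fun h => ?_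
    simpa using LinearMap.congr_fun h (Pi.single i 1)
  have hinj (i j : ι) (hij : i ≠ j) : ∀ᵐ c : ι → ℂ, c i - c j ≠ 0 := by
    refine ae_apply_ne_zero volume
      (ℓ := (LinearMap.proj i : (ι → ℂ) →ₗ[ℝ] ℂ) - LinearMap.proj j) fun h => ?_
    simpa [hij.symm] using LinearMap.congr_fun h (Pi.single i 1)
  filter_upwards [ae_all_iff.2 hne, ae_all_iff.2 fun i => ae_all_iff.2 fun j =>
    ae_all_iff.2 fun hij => hinj i j hij] with c hc hcij
  exact ⟨fun i j h => by_contra fun hij => hcij i j hij (sub_eq_zero.2 h), hc⟩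

end Genericity

section GeneralParameters

lemma norm_apply_lt_of_mem_ball {ι E : Type*} [Fintype ι] [SeminormedAddCommGroup E] {c : ι → E}
    {r : ℝ} (hc : c ∈ Metric.ball 0 r) (i : ι) : ‖c i‖ < r :=
  (norm_le_pi_norm c i).trans_lt (mem_ball_zero_iff.1 hc)

variable {n ξ ι κ : Type*} [Fintype n] [DecidableEq n] [Fintype ι] [Fintype κ] (x : ξ → ℂ)
  (X : Finset ξ) (q : ℕ)

lemma continuousOn_charpolyRatio :
    ContinuousOn
      (Function.uncurry fun (c : ι ⊕ κ → ℂ) (u : unitaryGroup n ℂ) =>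
        charpolyRatio q x (c ∘ Sum.inl) (c ∘ Sum.inr) X Finset.univ Finset.univ u)
      (Metric.ball 0 1 ×ˢ Set.univ) := by
  simp only [Function.uncurry_def, charpolyRatio, invDenominator, Function.comp_apply]
  refine .mul (Continuous.continuousOn (by fun_prop)) (.mul ?_ ?_)
  · exact continuousOn_finsetProd _ fun i _ => .inv₀ (Continuous.continuousOn (by fun_prop))
      fun p hp => detOneSub_coe_ne_zero (norm_apply_lt_of_mem_ball hp.1 _) p.2
  · exact continuousOn_finsetProd _ fun k _ => .inv₀ (Continuous.continuousOn (by fun_prop))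
      fun p hp => detOneSub_star_coe_ne_zero (norm_apply_lt_of_mem_ball hp.1 _) p.2

lemma continuousOn_integral_charpolyRatio [MeasurableSpace (unitaryGroup n ℂ)]
    [OpensMeasurableSpace (unitaryGroup n ℂ)] (μ : Measure (unitaryGroup n ℂ))
    [IsFiniteMeasureOnCompacts μ] :
    ContinuousOn (fun c : ι ⊕ κ → ℂ => ∫ u : unitaryGroup n ℂ,
      charpolyRatio q x (c ∘ Sum.inl) (c ∘ Sum.inr) X Finset.univ Finset.univ u ∂μ)
      (Metric.ball 0 1) :=
  continuousOn_integral_of_compact_support isCompact_univ (continuousOn_charpolyRatio x X q)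
    fun _ u _ hu => absurd (Set.mem_univ u) hu

lemma continuousOn_cauchyKernel_mul_swapSum [DecidableEq ξ] :
    ContinuousOn
      (fun c : ι ⊕ κ → ℂ => cauchyKernel (c ∘ Sum.inl) (c ∘ Sum.inr) Finset.univ Finset.univ *
        swapSum q x (c ∘ Sum.inl) (c ∘ Sum.inr) X Finset.univ Finset.univ)
      (Metric.ball 0 1) := by
  simp only [cauchyKernel, swapSum, swapTerm, Function.comp_apply]
  refine .mul ?_ (Continuous.continuousOn (by fun_prop))
  exact continuousOn_finsetProd _ fun i _ => continuousOn_finsetProd _ fun k _ =>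
    .inv₀ (by fun_prop) fun c hc =>
      one_sub_mul_ne_zero (norm_apply_lt_of_mem_ball hc _) (norm_apply_lt_of_mem_ball hc _)

variable {x X q} {a : ι → ℂ} {b : κ → ℂ} [DecidableEq ξ] [MeasurableSpace (unitaryGroup n ℂ)]
  [BorelSpace (unitaryGroup n ℂ)] (μ : Measure (unitaryGroup n ℂ)) [μ.IsMulLeftInvariant]
  [IsProbabilityMeasure μ]

theorem integral_charpolyRatio (hx : Function.Injective x) (ha : ∀ i, ‖a i‖ < 1)
    (hb : ∀ k, ‖b k‖ < 1) {p : ℕ} (hX : X.card = p + q)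
    (hι : Fintype.card ι = p + Fintype.card n) (hκ : Fintype.card κ = q + Fintype.card n) :
    ∫ u : unitaryGroup n ℂ, charpolyRatio q x a b X Finset.univ Finset.univ u ∂μ =
      cauchyKernel a b Finset.univ Finset.univ *
        swapSum q x a b X Finset.univ Finset.univ := by
  have hmem : Sum.elim a b ∈ Metric.ball (0 : ι ⊕ κ → ℂ) 1 := by
    rw [mem_ball_zero_iff, pi_norm_lt_iff one_pos]
    exact Sum.forall.2 ⟨ha, hb⟩
  have hgeneric : (fun c : ι ⊕ κ → ℂ => ∫ u : unitaryGroup n ℂ,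
      charpolyRatio q x (c ∘ Sum.inl) (c ∘ Sum.inr) X Finset.univ Finset.univ u ∂μ)
      =ᵐ[volume.restrict (Metric.ball 0 1)] fun c =>
        cauchyKernel (c ∘ Sum.inl) (c ∘ Sum.inr) Finset.univ Finset.univ *
          swapSum q x (c ∘ Sum.inl) (c ∘ Sum.inr) X Finset.univ Finset.univ := by
    filter_upwards [ae_restrict_of_ae (ae_injective_and_ne_zero (ι ⊕ κ)),
      ae_restrict_mem Metric.isOpen_ball.measurableSet] with c ⟨hinj, hne⟩ hc
    exact integral_charpolyRatio_of_injective μ hx (fun _ => norm_apply_lt_of_mem_ball hc _)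
      (hinj.comp Sum.inl_injective) (fun _ => hne _) (fun _ => norm_apply_lt_of_mem_ball hc _)
      (hinj.comp Sum.inr_injective) (fun _ => hne _) hX (by simpa using hι) (by simpa using hκ)
  have heqOn := Measure.eqOn_open_of_ae_eq hgeneric Metric.isOpen_ball
    (continuousOn_integral_charpolyRatio x X q μ) (continuousOn_cauchyKernel_mul_swapSum x X q)
  simpa only [Sum.elim_comp_inl, Sum.elim_comp_inr] using heqOn hmem

/- Pad `a` and `b` by zeros. -/
theorem integral_charpolyRatio_of_card_add (hx : Function.Injective x) (ha : ∀ i, ‖a i‖ < 1)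
    (hb : ∀ k, ‖b k‖ < 1) {p r s : ℕ} (hX : X.card = p + q)
    (hι : Fintype.card ι + r = p + Fintype.card n)
    (hκ : Fintype.card κ + s = q + Fintype.card n) :
    ∫ u : unitaryGroup n ℂ, charpolyRatio q x a b X Finset.univ Finset.univ u ∂μ =
      cauchyKernel a b Finset.univ Finset.univ * ∑ S ∈ X.powersetCard q,
        (∏ l ∈ S, x l ^ r) * swapTerm x a b X Finset.univ Finset.univ S := by
  have h := integral_charpolyRatio μ (a := Sum.elim a (0 : Fin r → ℂ))
    (b := Sum.elim b (0 : Fin s → ℂ)) hx (Sum.forall.2 ⟨ha, by simp⟩) (Sum.forall.2 ⟨hb, by simp⟩)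
    hX (by simpa using hι) (by simpa using hκ)
  simpa [charpolyRatio, invDenominator, cauchyKernel, swapSum, swapTerm, Fintype.prod_sum_type,
    Finset.prod_mul_distrib, mul_comm, mul_left_comm, mul_assoc] using h

end GeneralParameters

section SumOverPermutations

open scoped Nat

lemma exists_perm_image_eq {α : Type*} [DecidableEq α] {S T : Finset α} (h : T.card = S.card) :
    ∃ σ : Equiv.Perm α, S.image σ = T := by
  obtain ⟨σ, hσ⟩ := (Set.powersetCard.isPretransitive (α := α) (n := S.card)).exists_smul_eq
    ⟨S, rfl⟩ ⟨T, h⟩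
  exact ⟨σ, congrArg Subtype.val hσ⟩

variable {α : Type*} [Fintype α] [DecidableEq α]

lemma image_perm_mem_powersetCard (S : Finset α) (w : Equiv.Perm α) :
    S.image w ∈ Finset.univ.powersetCard S.card :=
  Finset.mem_powersetCard.2 ⟨Finset.subset_univ _, Finset.card_image_of_injective _ w.injective⟩

lemma card_perm_image_eq {S T : Finset α} (h : T.card = S.card) :
    Finset.card {w : Equiv.Perm α | S.image w = T} = Sᶜ.card ! * S.card ! := by
  have hfiber {T : Finset α} (h : T.card = S.card) :
      Finset.card {w : Equiv.Perm α | S.image w = T} =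
        Finset.card {w : Equiv.Perm α | S.image w = S} := by
    obtain ⟨σ, rfl⟩ := exists_perm_image_eq h
    refine (Finset.card_equiv (Equiv.mulLeft σ) fun w => ?_).symm
    simp [Equiv.Perm.coe_mul, ← Finset.image_image, (Finset.image_injective σ.injective).eq_iff]
  have htotal := Finset.card_eq_sum_card_fiberwise (s := (Finset.univ : Finset (Equiv.Perm α)))
    fun w _ => image_perm_mem_powersetCard S w
  rw [Finset.sum_congr rfl fun T hT => hfiber (Finset.mem_powersetCard.1 hT).2, Finset.sum_const,
    Finset.card_powersetCard, Finset.card_univ, Finset.card_univ, Fintype.card_perm,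
    ← Nat.choose_mul_factorial_mul_factorial (Finset.card_le_univ S), ← Finset.card_compl,
    smul_eq_mul, mul_assoc] at htotal
  rw [hfiber h, ← Nat.eq_of_mul_eq_mul_left (Nat.choose_pos (Finset.card_le_univ S)) htotal,
    mul_comm]

lemma sum_perm_image {M : Type*} [AddCommMonoid M] (S : Finset α) (f : Finset α → M) :
    ∑ w : Equiv.Perm α, f (S.image w) =
      (Sᶜ.card ! * S.card !) • ∑ T ∈ Finset.univ.powersetCard S.card, f T := by
  rw [← Finset.sum_fiberwise_of_maps_to fun w _ => image_perm_mem_powersetCard S w,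
    Finset.smul_sum]
  refine Finset.sum_congr rfl fun T hT => ?_
  rw [← card_perm_image_eq (Finset.mem_powersetCard.1 hT).2, ← Finset.sum_const]
  exact Finset.sum_congr rfl fun w hw => by rw [(Finset.mem_filter.1 hw).2]

end SumOverPermutations

section RatiosTheorem

open scoped Nat

variable {n ξ ι κ : Type*} [Fintype n] [DecidableEq n] [Fintype ξ] [DecidableEq ξ] [Fintype ι]
  [Fintype κ] {x : ξ → ℂ} {a : ι → ℂ} {b : κ → ℂ}

lemma prod_pow_mul_swapTerm {r N : ℕ} (hx0 : ∀ l, x l ≠ 0) {T : Finset ξ}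
    (hr : Fintype.card ι + r = Tᶜ.card + N) :
    (∏ l ∈ T, x l ^ r) * swapTerm x a b Finset.univ Finset.univ Finset.univ T =
      (∏ l ∈ T, x l ^ N) * ((∏ i, ∏ l ∈ T, (1 - a i * (x l)⁻¹)) *
        ∏ j ∈ Tᶜ, ∏ k, (1 - x j * b k)) / ∏ j ∈ Tᶜ, ∏ l ∈ T, (1 - x j * (x l)⁻¹) := by
  have hfactor : ∀ l ∈ T, x l ^ r * (∏ i, (x l - a i)) * (∏ j ∈ Tᶜ, (x l - x j))⁻¹ =
      x l ^ N * (∏ i, (1 - a i * (x l)⁻¹)) * (∏ j ∈ Tᶜ, (1 - x j * (x l)⁻¹))⁻¹ := fun l _ => by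
    have hpow : x l ^ Fintype.card ι * x l ^ r = x l ^ Tᶜ.card * x l ^ N := by
      rw [← pow_add, ← pow_add, hr]
    have hxl := hx0 l
    rw [prod_one_sub_mul _ a (inv_ne_zero hxl), prod_one_sub_mul _ x (inv_ne_zero hxl), inv_inv,
      Finset.card_univ, mul_inv, inv_pow, inv_pow, inv_inv]
    generalize (∏ j ∈ Tᶜ, (x l - x j))⁻¹ = t
    field_simp
    linear_combination (t * ∏ i, (x l - a i)) * hpow
  have hprod := Finset.prod_congr (rfl : T = T) hfactor
  simp only [Finset.prod_mul_distrib, Finset.prod_inv_distrib] at hprod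
  rw [swapTerm, ← Finset.compl_eq_univ_sdiff]
  simp only [Finset.prod_inv_distrib]
  rw [Finset.prod_comm (s := Tᶜ) (t := T), Finset.prod_comm (s := Tᶜ) (t := T),
    Finset.prod_comm (s := Finset.univ) (t := T), div_eq_mul_inv]
  linear_combination (∏ j ∈ Tᶜ, ∏ k, (1 - x j * b k)) * hprod

lemma prod_detOneSub_mul_prod_detOneSub_star (hx0 : ∀ l, x l ≠ 0) (S : Finset ξ)
    (u : unitaryGroup n ℂ) :
    (∏ j ∈ Sᶜ, detOneSub (x j) (u : Matrix n n ℂ)) *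
        ∏ l ∈ S, detOneSub (x l)⁻¹ (star (u : Matrix n n ℂ)) =
      (∏ l ∈ S, (x l)⁻¹ ^ Fintype.card n) * ((-star (u : Matrix n n ℂ)).det ^ S.card *
        ∏ k, detOneSub (x k) (u : Matrix n n ℂ)) := by
  simp only [← Finset.prod_compl_mul_prod S, ← Finset.prod_const (-star (u : Matrix n n ℂ)).det,
    detOneSub_eq_of_mul_eq_one (Unitary.star_mul_self_of_mem u.2) (inv_ne_zero (hx0 _)), inv_inv,
    Finset.prod_mul_distrib]
  ring

lemma swapTerm_image_perm (w : Equiv.Perm ξ) (S : Finset ξ) :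
    swapTerm x a b Finset.univ Finset.univ Finset.univ (S.image w) =
      swapTerm (x ∘ w) a b Finset.univ Finset.univ Finset.univ S := by
  have hcompl : Finset.univ \ S.image w = (Finset.univ \ S).image w := by
    rw [Finset.image_sdiff _ _ w.injective, Finset.image_univ_equiv]
  simp only [swapTerm, hcompl, Finset.prod_image w.injective.injOn, Function.comp_apply]

lemma ratio_eq_const_mul_charpolyRatio (hx0 : ∀ l, x l ≠ 0) (S : Finset ξ)
    (u : unitaryGroup n ℂ) :
    ((∏ j ∈ Sᶜ, detOneSub (x j) (u : Matrix n n ℂ)) *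
          ∏ l ∈ S, detOneSub (x l)⁻¹ (star (u : Matrix n n ℂ))) /
        ((∏ i, detOneSub (a i) (u : Matrix n n ℂ)) *
          ∏ k, detOneSub (b k) (star (u : Matrix n n ℂ))) =
      (∏ l ∈ S, (x l)⁻¹ ^ Fintype.card n) *
        charpolyRatio S.card x a b Finset.univ Finset.univ Finset.univ u := by
  rw [prod_detOneSub_mul_prod_detOneSub_star hx0, charpolyRatio, invDenominator,
    Finset.prod_inv_distrib, Finset.prod_inv_distrib, ← mul_inv, div_eq_mul_inv, mul_assoc]

variable [MeasurableSpace (unitaryGroup n ℂ)] [BorelSpace (unitaryGroup n ℂ)]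
  (μ : Measure (unitaryGroup n ℂ)) [μ.IsMulLeftInvariant] [IsProbabilityMeasure μ]

theorem integral_ratio_detOneSub (hx : Function.Injective x) (hx0 : ∀ l, x l ≠ 0)
    (ha : ∀ i, ‖a i‖ < 1) (hb : ∀ k, ‖b k‖ < 1) (S : Finset ξ)
    (hι : Fintype.card ι ≤ Sᶜ.card + Fintype.card n)
    (hκ : Fintype.card κ ≤ S.card + Fintype.card n) :
    ∫ u : unitaryGroup n ℂ,
      ((∏ j ∈ Sᶜ, detOneSub (x j) (u : Matrix n n ℂ)) *
          ∏ l ∈ S, detOneSub (x l)⁻¹ (star (u : Matrix n n ℂ))) /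
        ((∏ i, detOneSub (a i) (u : Matrix n n ℂ)) *
          ∏ k, detOneSub (b k) (star (u : Matrix n n ℂ))) ∂μ =
      1 / (Sᶜ.card ! * S.card ! : ℂ) * ∑ w : Equiv.Perm ξ,
        (∏ l ∈ S, (x (w l) / x l) ^ Fintype.card n) *
          (((∏ i, ∏ l ∈ S, (1 - a i * (x (w l))⁻¹)) * ∏ j ∈ Sᶜ, ∏ k, (1 - x (w j) * b k)) /
            ((∏ j ∈ Sᶜ, ∏ l ∈ S, (1 - x (w j) * (x (w l))⁻¹)) * ∏ i, ∏ k, (1 - a i * b k))) := by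
  obtain ⟨r, hr⟩ := Nat.exists_eq_add_of_le hι
  obtain ⟨s, hs⟩ := Nat.exists_eq_add_of_le hκ
  have hX : (Finset.univ : Finset ξ).card = Sᶜ.card + S.card := by
    rw [Finset.card_univ, Finset.card_compl_add_card]
  have hfactorial : (Sᶜ.card ! * S.card ! : ℂ) ≠ 0 :=
    mod_cast mul_ne_zero (Nat.factorial_ne_zero _) (Nat.factorial_ne_zero _)
  have hperm (w : Equiv.Perm ξ) := prod_pow_mul_swapTerm (x := x ∘ w) (a := a) (b := b) (T := S)
    (fun l => hx0 (w l)) hr.symm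
  simp only [Function.comp_apply] at hperm
  have hsum := sum_perm_image S fun T => (∏ l ∈ T, x l ^ r) *
    swapTerm x a b Finset.univ Finset.univ Finset.univ T
  simp only [Finset.prod_image (Equiv.injective _).injOn, swapTerm_image_perm, nsmul_eq_mul,
    Nat.cast_mul] at hsum
  simp only [ratio_eq_const_mul_charpolyRatio hx0 S, integral_const_mul]
  rw [integral_charpolyRatio_of_card_add μ hx ha hb hX hr.symm hs.symm,
    ← mul_right_inj' hfactorial, mul_left_comm, mul_left_comm _ (cauchyKernel _ _ _ _), ← hsum,
    ← mul_assoc _ (1 / _), mul_one_div_cancel hfactorial, one_mul, Finset.mul_sum, Finset.mul_sum]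
  refine Finset.sum_congr rfl fun w _ => ?_
  simp only [hperm w, cauchyKernel, div_pow, Finset.prod_div_distrib, inv_pow,
    Finset.prod_inv_distrib]
  ring

end RatiosTheorem

section FinSum

variable {p q : ℕ} {M : Type*} [CommMonoid M]

lemma prod_filter_val_lt (f : Fin (p + q) → M) :
    ∏ j ∈ Finset.univ.filter (fun j : Fin (p + q) => (j : ℕ) < p), f j =
      ∏ i : Fin p, f (Fin.castAdd q i) := by
  simp [Finset.prod_filter, Fin.prod_univ_add]

@[to_additive]
lemma prod_filter_le_val (f : Fin (p + q) → M) :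
    ∏ j ∈ Finset.univ.filter (fun j : Fin (p + q) => p ≤ (j : ℕ)), f j =
      ∏ k : Fin q, f (Fin.natAdd p k) := by
  simp [Finset.prod_filter, Fin.prod_univ_add, Fin.castAdd, not_le.2]

lemma card_filter_val_lt : (Finset.univ.filter fun j : Fin (p + q) => (j : ℕ) < p).card = p := by
  simp [Fin.card_filter_val_lt]

lemma card_filter_le_val : (Finset.univ.filter fun j : Fin (p + q) => p ≤ (j : ℕ)).card = q := by
  rw [Finset.card_eq_sum_ones, sum_filter_le_val]
  simp

end FinSum

lemma det_one_sub_smul_map_conj {n : Type*} [Fintype n] [DecidableEq n] (z : ℂ)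
    (M : Matrix n n ℂ) : (1 - z • M.map (starRingEnd ℂ)).det = detOneSub z (star M) := by
  rw [← detOneSub_transpose, star_eq_conjTranspose]
  rfl

lemma norm_cexp_lt_one {z : ℂ} (hz : z.re < 0) : ‖Complex.exp z‖ < 1 := by
  rwa [Complex.norm_exp, Real.exp_lt_one_iff]

/-- **Corollary 1.2**: Haar-average over `U(N)` of a ratio with `p + q` characteristic
polynomials in the numerator and `p' + q'` in the denominator, valid for
`p' ≤ p + N` and `q' ≤ q + N`. -/
theorem autocorrelation_ratios_charpoly_unitary_unequal
    (N p q p' q' : ℕ) (hN : 1 ≤ N) (hp : 1 ≤ p) (hq : 1 ≤ q)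
    (hp' : p' ≤ p + N) (hq' : q' ≤ q + N)
    (ψ : Fin (p + q) → ℂ) (φ : Fin (p' + q') → ℂ)
    (hdist : Function.Injective fun k : Fin (p + q) => Complex.exp (Complex.I * ψ k))
    (hφneg : ∀ j' : Fin (p' + q'), (j' : ℕ) < p' → (φ j').re < 0)
    (hφpos : ∀ l' : Fin (p' + q'), p' ≤ (l' : ℕ) → 0 < (φ l').re)
    (μ : Measure (Matrix.unitaryGroup (Fin N) ℂ))
    [μ.IsHaarMeasure] [IsProbabilityMeasure μ] :
    (∫ u : Matrix.unitaryGroup (Fin N) ℂ,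
      ((∏ j ∈ Finset.univ.filter (fun j : Fin (p + q) => (j : ℕ) < p),
          Matrix.det (1 - Complex.exp (Complex.I * ψ j) • (u : Matrix (Fin N) (Fin N) ℂ))) *
        (∏ l ∈ Finset.univ.filter (fun l : Fin (p + q) => p ≤ (l : ℕ)),
          Matrix.det (1 - Complex.exp (-(Complex.I * ψ l)) •
            ((u : Matrix (Fin N) (Fin N) ℂ).map (starRingEnd ℂ))))) /
      ((∏ j' ∈ Finset.univ.filter (fun j' : Fin (p' + q') => (j' : ℕ) < p'),
          Matrix.det (1 - Complex.exp (φ j') • (u : Matrix (Fin N) (Fin N) ℂ))) *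
        (∏ l' ∈ Finset.univ.filter (fun l' : Fin (p' + q') => p' ≤ (l' : ℕ)),
          Matrix.det (1 - Complex.exp (-(φ l')) •
            ((u : Matrix (Fin N) (Fin N) ℂ).map (starRingEnd ℂ))))) ∂μ)
    = (1 / ((p.factorial : ℂ) * (q.factorial : ℂ))) *
        ∑ w : Equiv.Perm (Fin (p + q)),
          (∏ k ∈ Finset.univ.filter (fun k : Fin (p + q) => p ≤ (k : ℕ)),
              Complex.exp ((N : ℂ) * Complex.I * (ψ (w k) - ψ k))) *
            (((∏ j' ∈ Finset.univ.filter (fun j' : Fin (p' + q') => (j' : ℕ) < p'),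
                ∏ l ∈ Finset.univ.filter (fun l : Fin (p + q) => p ≤ (l : ℕ)),
                  (1 - Complex.exp (φ j' - Complex.I * ψ (w l)))) *
              (∏ j ∈ Finset.univ.filter (fun j : Fin (p + q) => (j : ℕ) < p),
                ∏ l' ∈ Finset.univ.filter (fun l' : Fin (p' + q') => p' ≤ (l' : ℕ)),
                  (1 - Complex.exp (Complex.I * ψ (w j) - φ l')))) /
             ((∏ j ∈ Finset.univ.filter (fun j : Fin (p + q) => (j : ℕ) < p),
                ∏ l ∈ Finset.univ.filter (fun l : Fin (p + q) => p ≤ (l : ℕ)),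
                  (1 - Complex.exp (Complex.I * ψ (w j) - Complex.I * ψ (w l)))) *
              (∏ j' ∈ Finset.univ.filter (fun j' : Fin (p' + q') => (j' : ℕ) < p'),
                ∏ l' ∈ Finset.univ.filter (fun l' : Fin (p' + q') => p' ≤ (l' : ℕ)),
                  (1 - Complex.exp (φ j' - φ l'))))) := by
  have hcompl : (Finset.univ.filter fun l : Fin (p + q) => p ≤ (l : ℕ))ᶜ =
      Finset.univ.filter fun j : Fin (p + q) => (j : ℕ) < p := by
    simp only [Finset.compl_filter, not_le]
  have hexp (s t : ℂ) : (Complex.exp (Complex.I * s) / Complex.exp (Complex.I * t)) ^ N =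
      Complex.exp (N * Complex.I * (s - t)) := by
    rw [← Complex.exp_sub, ← Complex.exp_nat_mul]
    ring_nf
  have hformula := integral_ratio_detOneSub μ hdist (fun k => Complex.exp_ne_zero _)
    (a := fun i => Complex.exp (φ (Fin.castAdd q' i)))
    (b := fun k => Complex.exp (-φ (Fin.natAdd p' k)))
    (fun i => norm_cexp_lt_one (hφneg _ i.2))
    (fun k => norm_cexp_lt_one (neg_lt_zero.2 (hφpos _ (Nat.le_add_right p' k))))
    (Finset.univ.filter fun l : Fin (p + q) => p ≤ (l : ℕ))
    (by simpa [hcompl, card_filter_val_lt] using hp') (by simpa [card_filter_le_val] using hq')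
  simp only [hcompl, card_filter_val_lt, card_filter_le_val, Fintype.card_fin, hexp,
    ← Complex.exp_neg, ← Complex.exp_add, ← sub_eq_add_neg] at hformula
  simp only [prod_filter_val_lt (p := p'), prod_filter_le_val (p := p'), det_one_sub_smul_map_conj]
  exact hformula
end

section
/- Let N ≥ 1 and p, q ≥ 1 be integers, and let ψ_1, …, ψ_{p+q} be complex numbers such that e^{iψ_1}, …, e^{iψ_{p+q}} are pairwise distinct. Then ∫_{U(N)} ∏_{j=1}^{p} det(1_N − e^{iψ_j} u) · ∏_{l=p+1}^{p+q} det(e^{iψ_l}·1_N − ū) du = (1/(p!·q!)) · ∑_{w ∈ S_{p+q}} ∏_{l=p+1}^{p+q} e^{N·iψ_{w(l)}} · ∏_{j=1}^{p} ∏_{l=p+1}^{p+q} (1 − e^{iψ_{w(j)} − iψ_{w(l)}})^{-1}. -/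
open MeasureTheory Matrix

/-!
Write `P(x) = ∫ ∏_k det(1 - x_k u) det(-u)^{-q} du` and `θ_k = x_k ∂/∂x_k`. Translating `u` by
`1 + s a a*`, which is unitary for infinitely many `s`, gives a polynomial identity in `s`. Its
coefficients of `s` and `s ^ 2`, averaged over a finite set of vectors `a` that integrates Hermitian
forms and their squares as the sphere does, are differential equations of first and second order
for `P`.

Let `Δ` be the Vandermonde polynomial. The equations say that `Δ P` is an eigenfunction of
`∑_k θ_k` and of `∑_k θ_k ^ 2`, so that every exponent vector `d` of `Δ P` has the same
`∑_k d_k` and `∑_k d_k ^ 2` as `(0, …, p - 1, p + N, …, p + q + N - 1)`. As `Δ P` is antisymmetric,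
the `d_k` are distinct, and they are less than `p + q + N`; a quadratic function which is negative
exactly on the gap `p, …, p + N - 1` shows that `d` is a permutation of that vector. Hence `Δ P` is
an alternant, and its Laplace expansion along the last `q` columns gives the sum over permutations.
-/

namespace UnitaryAutocorrelation

section Determinant

variable {m R : Type*} [Fintype m] [DecidableEq m] [CommRing R]

lemma det_add_vecMulVec_eq_sum (M : Matrix m m R) (a b : m → R) :
    (M + vecMulVec a b).det = M.det + ∑ i, a i * (M.updateRow i b).det := by
  suffices h : ∀ S : Finset m, (M + vecMulVec (fun i => if i ∈ S then a i else 0) b).det =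
      M.det + ∑ i ∈ S, a i * (M.updateRow i b).det by simpa using h Finset.univ
  intro S
  induction S using Finset.induction_on with
  | empty => simp [← Pi.zero_def]
  | insert i S hi ih =>
    set MS := M + vecMulVec (fun i => if i ∈ S then a i else 0) b with hMS
    have hrow : M + vecMulVec (fun i' => if i' ∈ insert i S then a i' else 0) b =
        MS.updateRow i (MS i + a i • b) := by
      ext i' j
      obtain rfl | h := eq_or_ne i' i
      · simp [hMS, hi, vecMulVec_apply]
      · simp [hMS, h, vecMulVec_apply]
    have hdet : (MS.updateRow i b).det = (M.updateRow i b).det := by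
      refine det_eq_of_forall_row_eq_smul_add_const (fun i' => if i' ∈ S then a i' else 0) i
        (by simp [hi]) fun i' j => ?_
      obtain rfl | h := eq_or_ne i' i
      · simp [hi]
      · simp [hMS, h, vecMulVec_apply]
    rw [Finset.sum_insert hi, hrow, det_updateRow_add, det_updateRow_smul, updateRow_eq_self, ih,
      hdet]
    ring

lemma det_add_vecMulVec (M : Matrix m m R) (a b : m → R) :
    (M + vecMulVec a b).det = M.det + b ⬝ᵥ M.adjugate *ᵥ a := by
  rw [det_add_vecMulVec_eq_sum, dotProduct_mulVec, dotProduct_comm]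
  congr 1
  refine Finset.sum_congr rfl fun i _ => ?_
  rw [← cramer_transpose_apply, cramer_eq_adjugate_mulVec, ← adjugate_transpose, mulVec_transpose]

variable {K : Type*} [CommRing K] [Algebra K R]

lemma derivation_prod {ι : Type*} [DecidableEq ι] (D : Derivation K R R) (s : Finset ι)
    (f : ι → R) : D (∏ i ∈ s, f i) = ∑ i ∈ s, (∏ j ∈ s.erase i, f j) * D (f i) := by
  induction s using Finset.induction_on with
  | empty => simp
  | insert a s ha ih =>
    rw [Finset.prod_insert ha, Derivation.leibniz, ih, Finset.sum_insert ha,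
      Finset.erase_insert ha, smul_eq_mul, smul_eq_mul, add_comm, Finset.mul_sum]
    congr 1
    refine Finset.sum_congr rfl fun i hi => ?_
    have hai : a ≠ i := fun h => ha (h ▸ hi)
    rw [Finset.erase_insert_of_ne hai, Finset.prod_insert (by simp [ha]), mul_assoc]

lemma derivation_det (D : Derivation K R R) (M : Matrix m m R) :
    D M.det = (M.adjugate * M.map D).trace := by
  have hdiag (i : m) :
      (M.adjugate * M.map D) i i = (M.updateCol i fun j => D (M j i)).det := by
    rw [← cramer_apply, cramer_eq_adjugate_mulVec]
    simp [mul_apply, mulVec, dotProduct]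
  simp only [trace, diag, hdiag, det_apply, map_sum]
  rw [Finset.sum_comm]
  refine Finset.sum_congr rfl fun σ _ => ?_
  rw [← Finset.smul_sum, Units.smul_def, Units.smul_def, map_zsmul, derivation_prod]
  congr 1
  refine Finset.sum_congr rfl fun i _ => ?_
  rw [← Finset.prod_erase_mul Finset.univ _ (Finset.mem_univ i), updateCol_self]
  congr 1
  refine Finset.prod_congr rfl fun j hj => ?_
  rw [updateCol_ne (Finset.ne_of_mem_erase hj)]

end Determinant

section EulerDerivation

open MvPolynomial

variable {σ R : Type*} [CommRing R]

/-- The Euler derivation `θ_k = X_k ∂/∂X_k`; monomials are eigenvectors of all of them. -/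
noncomputable def eulerDeriv (k : σ) : Derivation R (MvPolynomial σ R) (MvPolynomial σ R) :=
  (X k : MvPolynomial σ R) • pderiv k

lemma eulerDeriv_apply (k : σ) (f : MvPolynomial σ R) : eulerDeriv k f = X k * pderiv k f := rfl

lemma coeff_eulerDeriv (k : σ) (f : MvPolynomial σ R) (d : σ →₀ ℕ) :
    coeff d (eulerDeriv k f) = d k * coeff d f := by
  classical
  induction f using MvPolynomial.induction_on' with
  | monomial e a =>
    rw [eulerDeriv_apply, X_mul_pderiv_monomial, coeff_smul, coeff_monomial, nsmul_eq_mul]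
    split_ifs with h <;> simp [h]
  | add f g hf hg => rw [map_add, coeff_add, hf, hg, coeff_add, mul_add]

lemma eulerDeriv_comm (k l : σ) (f : MvPolynomial σ R) :
    eulerDeriv k (eulerDeriv l f) = eulerDeriv l (eulerDeriv k f) := by
  ext d
  simp only [coeff_eulerDeriv]
  ring

@[simp]
lemma eulerDeriv_X_self (k : σ) : eulerDeriv k (X k : MvPolynomial σ R) = X k := by
  simp [eulerDeriv_apply]

lemma eulerDeriv_X_of_ne {k l : σ} (h : l ≠ k) : eulerDeriv k (X l : MvPolynomial σ R) = 0 := by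
  simp [eulerDeriv_apply, pderiv_X_of_ne h]

end EulerDerivation

section CoefficientwiseMap

open MvPolynomial

variable {σ K A : Type*} [CommRing K] [CommRing A] [Algebra K A]

/-- Coefficientwise application of a linear functional: in the application `L` is an integral over
the unitary group and `mapCoeff L` integrates polynomials whose coefficients are functions. -/
noncomputable def mapCoeff (L : A →ₗ[K] K) : MvPolynomial σ A →ₗ[K] MvPolynomial σ K where
  toFun f := AddMonoidAlgebra.map L.toAddMonoidHom f
  map_add' f g := by
    ext d
    simp
  map_smul' c f := by
    ext d
    simp

@[simp]
lemma coeff_mapCoeff (L : A →ₗ[K] K) (f : MvPolynomial σ A) (d : σ →₀ ℕ) :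
    coeff d (mapCoeff L f) = L (coeff d f) :=
  coeff_addMonoidAlgebraMap ..

lemma mapCoeff_X_mul (L : A →ₗ[K] K) (k : σ) (f : MvPolynomial σ A) :
    mapCoeff L (X k * f) = X k * mapCoeff L f := by
  classical
  ext d
  simp only [coeff_mapCoeff, coeff_X_mul', apply_ite L, map_zero]

lemma mapCoeff_eulerDeriv (L : A →ₗ[K] K) (k : σ) (f : MvPolynomial σ A) :
    mapCoeff L (eulerDeriv k f) = eulerDeriv k (mapCoeff L f) := by
  ext d
  rw [coeff_mapCoeff, coeff_eulerDeriv, coeff_eulerDeriv, coeff_mapCoeff, ← nsmul_eq_mul,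
    map_nsmul, nsmul_eq_mul]

lemma mapCoeff_monomial (L : A →ₗ[K] K) (d : σ →₀ ℕ) (a : A) :
    mapCoeff L (monomial d a) = monomial d (L a) := by
  classical
  ext e
  simp only [coeff_mapCoeff, coeff_monomial, apply_ite L, map_zero]

lemma eval_mapCoeff (L : A →ₗ[K] K) (x : σ → K) (f : MvPolynomial σ A) :
    eval x (mapCoeff L f) = L (eval (fun k => algebraMap K A (x k)) f) := by
  induction f using MvPolynomial.induction_on' with
  | monomial d a =>
    rw [mapCoeff_monomial, eval_monomial, eval_monomial]
    simp only [← map_pow, Finsupp.prod]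
    rw [← map_prod, mul_comm a, ← Algebra.smul_def, map_smul, smul_eq_mul, mul_comm]
  | add f g hf hg => simp only [map_add, hf, hg]

end CoefficientwiseMap

section ReversedCharpoly

open Polynomial

variable {m R : Type*} [Fintype m] [DecidableEq m] [CommRing R]

lemma natDegree_charpolyRev_le (u : Matrix m m R) :
    u.charpolyRev.natDegree ≤ Fintype.card m := by
  nontriviality R
  rw [← reverse_charpoly, ← u.charpoly_natDegree_eq_dim]
  exact reverse_natDegree_le _

lemma coeff_zero_charpolyRev (u : Matrix m m R) : u.charpolyRev.coeff 0 = 1 := by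
  rw [coeff_zero_eq_eval_zero, eval_charpolyRev]

lemma coeff_card_charpolyRev (u : Matrix m m R) :
    u.charpolyRev.coeff (Fintype.card m) = (-1) ^ Fintype.card m * u.det := by
  nontriviality R
  rw [← reverse_charpoly, coeff_reverse, charpoly_natDegree_eq_dim, revAt_le le_rfl, Nat.sub_self,
    det_eq_sign_charpoly_coeff, ← mul_assoc, ← mul_pow, neg_one_mul, neg_neg, one_pow, one_mul]

end ReversedCharpoly

section Pencil

open MvPolynomial

variable {σ m R : Type*} [DecidableEq m] [CommRing R]

/-- The matrix pencil `1 - X_k u`, whose determinant is the characteristic polynomial of `u`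
(read backwards) in the variable `X_k`. -/
noncomputable def pencil (u : Matrix m m R) (k : σ) : Matrix m m (MvPolynomial σ R) :=
  1 - (X k : MvPolynomial σ R) • u.map C

lemma map_eulerDeriv_pencil_self (u : Matrix m m R) (k : σ) :
    (pencil u k).map (eulerDeriv k) = -((X k : MvPolynomial σ R) • u.map C) := by
  ext1 i j
  by_cases h : i = j <;> simp [pencil, one_apply, h, eulerDeriv_apply, mul_comm]

lemma map_eulerDeriv_pencil_of_ne (u : Matrix m m R) {k l : σ} (h : l ≠ k) :
    (pencil u l).map (eulerDeriv k) = 0 := by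
  ext1 i j
  by_cases h' : i = j <;> simp [pencil, one_apply, h', eulerDeriv_apply, pderiv_X_of_ne h]

variable [Fintype m]

/-- `X_k u adj(1 - X_k u)`, the multiple of the resolvent `X_k u (1 - X_k u)⁻¹` that has polynomial
entries. -/
noncomputable def pencilResolvent (u : Matrix m m R) (k : σ) : Matrix m m (MvPolynomial σ R) :=
  (X k : MvPolynomial σ R) • (u.map C * (pencil u k).adjugate)

lemma det_pencil (u : Matrix m m R) (k : σ) :
    (pencil u k).det = u.charpolyRev.toMvPolynomial k := by
  rw [charpolyRev, AlgHom.map_det]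
  congr 1
  ext1 i j
  by_cases h : i = j <;> simp [pencil, one_apply, h, mul_comm (X k)]

lemma map_det_pencil {S : Type*} [CommRing S] (τ : R →+* S) (u : Matrix m m R) (k : σ) :
    MvPolynomial.map τ (pencil u k).det = (pencil (u.map τ) k).det := by
  rw [RingHom.map_det]
  congr 1
  ext1 i j
  by_cases h : i = j <;> simp [pencil, one_apply, h]

lemma eval_det_pencil (x : σ → R) (u : Matrix m m R) (k : σ) :
    eval x (pencil u k).det = (1 - x k • u).det := by
  rw [RingHom.map_det]
  congr 1
  ext1 i j
  by_cases h : i = j <;> simp [pencil, one_apply, h]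

lemma eulerDeriv_det_pencil_self (u : Matrix m m R) (k : σ) :
    eulerDeriv k (pencil u k).det = -(pencilResolvent u k).trace := by
  rw [derivation_det, map_eulerDeriv_pencil_self, pencilResolvent, Matrix.mul_neg, trace_neg,
    Matrix.mul_smul, trace_smul, trace_smul, trace_mul_comm]

lemma eulerDeriv_det_pencil_of_ne (u : Matrix m m R) {k l : σ} (h : l ≠ k) :
    eulerDeriv k (pencil u l).det = 0 := by
  rw [derivation_det, map_eulerDeriv_pencil_of_ne u h, Matrix.mul_zero, trace_zero]

lemma eulerDeriv_trace_pencilResolvent_of_ne (u : Matrix m m R) {k l : σ} (h : l ≠ k) :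
    eulerDeriv l (pencilResolvent u k).trace = 0 := by
  rw [← neg_neg (pencilResolvent u k).trace, ← eulerDeriv_det_pencil_self, map_neg, eulerDeriv_comm,
    eulerDeriv_det_pencil_of_ne u h.symm, map_zero, neg_zero]

lemma smul_pencilResolvent_mul_pencilResolvent (u : Matrix m m R) (k l : σ) :
    (X k - X l : MvPolynomial σ R) • (pencilResolvent u k * pencilResolvent u l) =
      (X l * (pencil u l).det) • pencilResolvent u k -
        (X k * (pencil u k).det) • pencilResolvent u l := by
  have hdiff : (X k - X l : MvPolynomial σ R) • u.map C = pencil u l - pencil u k := by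
    simp only [pencil, sub_smul]
    abel
  calc (X k - X l : MvPolynomial σ R) • (pencilResolvent u k * pencilResolvent u l)
      = (X k * X l : MvPolynomial σ R) • (u.map C * ((pencil u k).adjugate *
          ((X k - X l : MvPolynomial σ R) • u.map C) * (pencil u l).adjugate)) := by
        simp only [pencilResolvent, Matrix.smul_mul, Matrix.mul_smul, smul_smul, Matrix.mul_assoc]
        congr 1
        ring
    _ = _ := by
        rw [hdiff, Matrix.mul_sub, Matrix.sub_mul, Matrix.mul_assoc _ (pencil u l), mul_adjugate,
          adjugate_mul, Matrix.mul_sub, smul_sub]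
        simp only [pencilResolvent, Matrix.smul_mul, Matrix.mul_smul, smul_smul, Matrix.mul_one,
          Matrix.one_mul]
        congr 2 <;> ring

lemma sub_mul_trace_pencilResolvent_mul (u : Matrix m m R) (k l : σ) :
    (X k - X l) * (pencilResolvent u k * pencilResolvent u l).trace =
      X l * (pencil u l).det * (pencilResolvent u k).trace -
        X k * (pencil u k).det * (pencilResolvent u l).trace := by
  simpa [trace_sub, trace_smul] using
    congrArg trace (smul_pencilResolvent_mul_pencilResolvent u k l)

variable [Fintype σ]

lemma coeff_prod_toMvPolynomial (p : σ → Polynomial R) (d : σ →₀ ℕ) :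
    coeff d (∏ k, (p k).toMvPolynomial k) = ∏ k, (p k).coeff (d k) := by
  classical
  have hsum (k : σ) : (p k).toMvPolynomial k =
      ∑ a ∈ (p k).support, monomial (Finsupp.single k a) ((p k).coeff a) := by
    rw [Polynomial.toMvPolynomial, Polynomial.aeval_def, Polynomial.eval₂_eq_sum, Polynomial.sum]
    simp only [algebraMap_eq, C_mul_X_pow_eq_monomial]
  have hmon (α : σ → ℕ) :
      ∏ k, monomial (Finsupp.single k (α k)) ((p k).coeff (α k)) =
        monomial (Finsupp.equivFunOnFinite.symm α) (∏ k, (p k).coeff (α k)) := by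
    rw [← monomial_sum_prod]
    congr 2
    ext k
    simp [Finsupp.single_apply]
  simp only [hsum, Finset.prod_univ_sum, hmon, coeff_sum, coeff_monomial, Equiv.symm_apply_eq,
    Finset.sum_ite_eq', Fintype.mem_piFinset, Polynomial.mem_support_iff]
  split_ifs with h
  · rfl
  · push Not at h
    obtain ⟨k, hk⟩ := h
    exact (Finset.prod_eq_zero (Finset.mem_univ k) hk).symm

lemma coeff_prod_det_pencil (u : Matrix m m R) (d : σ →₀ ℕ) :
    coeff d (∏ k, (pencil u k).det) = ∏ k, u.charpolyRev.coeff (d k) := by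
  simp only [det_pencil, coeff_prod_toMvPolynomial]

variable [DecidableEq σ]

lemma eulerDeriv_prod_det_pencil (u : Matrix m m R) (k : σ) :
    eulerDeriv k (∏ l, (pencil u l).det) =
      -((∏ l ∈ Finset.univ.erase k, (pencil u l).det) * (pencilResolvent u k).trace) := by
  rw [derivation_prod, Finset.sum_eq_single k]
  · rw [eulerDeriv_det_pencil_self, mul_neg]
  · intro l _ hl
    rw [eulerDeriv_det_pencil_of_ne u hl, mul_zero]
  · simp

lemma eulerDeriv_eulerDeriv_prod_det_pencil (u : Matrix m m R) {k l : σ} (h : l ≠ k) :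
    eulerDeriv l (eulerDeriv k (∏ j, (pencil u j).det)) =
      (∏ j ∈ (Finset.univ.erase k).erase l, (pencil u j).det) *
        ((pencilResolvent u l).trace * (pencilResolvent u k).trace) := by
  rw [eulerDeriv_prod_det_pencil, map_neg, Derivation.leibniz,
    eulerDeriv_trace_pencilResolvent_of_ne u h, smul_zero, zero_add, derivation_prod,
    Finset.sum_eq_single l]
  · rw [eulerDeriv_det_pencil_self, smul_eq_mul]
    ring
  · intro j _ hj
    rw [eulerDeriv_det_pencil_of_ne u hj, mul_zero]
  · simp [h]

end Pencil

section PolynomialCoefficients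

open Polynomial

lemma coeff_one_prod_C_add_X_mul_C {ι R : Type*} [DecidableEq ι] [CommRing R] (s : Finset ι)
    (f g : ι → R) :
    (∏ k ∈ s, (C (f k) + X * C (g k))).coeff 1 = ∑ k ∈ s, (∏ l ∈ s.erase k, f l) * g k := by
  have h := coeff_derivative (∏ k ∈ s, (C (f k) + X * C (g k))) 0
  simp only [zero_add, Nat.cast_zero, mul_one] at h
  rw [← h, derivative_prod_finset, coeff_zero_eq_eval_zero, eval_finsetSum]
  simp [eval_prod]

lemma two_mul_coeff_two_prod_C_add_X_mul_C {ι R : Type*} [DecidableEq ι] [CommRing R]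
    (s : Finset ι) (f g : ι → R) :
    2 * (∏ k ∈ s, (C (f k) + X * C (g k))).coeff 2 =
      ∑ k ∈ s, ∑ l ∈ s.erase k, (∏ j ∈ (s.erase k).erase l, f j) * (g l * g k) := by
  have h := coeff_derivative (∏ k ∈ s, (C (f k) + X * C (g k))) 1
  rw [Nat.cast_one, one_add_one_eq_two, one_add_one_eq_two] at h
  rw [mul_comm, ← h, derivative_prod_finset, finsetSum_coeff]
  refine Finset.sum_congr rfl fun k _ => ?_
  simp only [derivative_add, derivative_C, derivative_mul, derivative_X, zero_add, one_mul,
    mul_zero, add_zero]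
  rw [coeff_mul_C, coeff_one_prod_C_add_X_mul_C, Finset.sum_mul]
  simp only [mul_assoc]

lemma map_coeff_eq_of_infinite_eval_eq {K B : Type*} [CommRing K] [IsDomain K] [CommRing B]
    [Algebra K B] (ℓ : B →ₗ[K] K) (G : B[X]) (r : K[X])
    (h : {s : K | ℓ (G.eval (algebraMap K B s)) = r.eval s}.Infinite) (j : ℕ) :
    ℓ (G.coeff j) = r.coeff j := by
  set S : K[X] := ∑ i ∈ Finset.range (G.natDegree + 1), monomial i (ℓ (G.coeff i)) with hS
  have hcoeff : S.coeff j = ℓ (G.coeff j) := by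
    simp only [hS, finsetSum_coeff, coeff_monomial, Finset.sum_ite_eq', Finset.mem_range]
    split_ifs with hj
    · rfl
    · rw [coeff_eq_zero_of_natDegree_lt (by lia), map_zero]
  have heval (s : K) : S.eval s = ℓ (G.eval (algebraMap K B s)) := by
    rw [hS, eval_finsetSum, eval_eq_sum_range (p := G), map_sum]
    refine Finset.sum_congr rfl fun i _ => ?_
    rw [eval_monomial, mul_comm, ← smul_eq_mul, ← map_smul, Algebra.smul_def, mul_comm, map_pow]
  have hSr : S = r := eq_of_infinite_eval_eq S r (by simpa only [heval] using h)
  rw [← hcoeff, hSr]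

end PolynomialCoefficients

section Reflections

variable {m : Type*} [Fintype m] [DecidableEq m]

lemma one_add_smul_vecMulVec_mem_unitaryGroup {a : m → ℂ} (ha : star a ⬝ᵥ a ≠ 0) {t : ℂ}
    (ht : ‖t‖ = 1) :
    1 + ((t - 1) / (star a ⬝ᵥ a)) • vecMulVec a (star a) ∈ unitaryGroup m ℂ := by
  set c := star a ⬝ᵥ a with hc
  have hcs : star c = c := by simp [hc, dotProduct, mul_comm]
  have hts : t * star t = 1 := by
    rw [Complex.star_def, Complex.mul_conj, Complex.normSq_eq_norm_sq, ht]
    simp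
  have hsq : vecMulVec a (star a) * vecMulVec a (star a) = c • vecMulVec a (star a) := by
    rw [vecMulVec_mul_vecMulVec, ← hc, vecMulVec_smul]
  have hcoef :
      star ((t - 1) / c) + ((t - 1) / c + (t - 1) / c * star ((t - 1) / c) * c) = 0 := by
    rw [star_div₀, hcs, star_sub, star_one]
    field_simp
    linear_combination hts
  rw [mem_unitaryGroup_iff, star_eq_conjTranspose, conjTranspose_add, conjTranspose_one,
    conjTranspose_smul, conjTranspose_vecMulVec, star_star, add_mul, mul_add, mul_add, one_mul,
    mul_one, one_mul, Matrix.smul_mul, Matrix.mul_smul, hsq, smul_smul, smul_smul, add_assoc,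
    ← add_smul, ← add_smul, hcoef, zero_smul, add_zero]

lemma infinite_one_add_smul_vecMulVec_mem_unitaryGroup (a : m → ℂ) :
    {s : ℂ | 1 + s • vecMulVec a (star a) ∈ unitaryGroup m ℂ}.Infinite := by
  open scoped ComplexOrder in
  by_cases ha : star a ⬝ᵥ a = 0
  · simpa [dotProduct_star_self_eq_zero.1 ha, one_mem] using Set.infinite_univ
  · have hcircle : (Metric.sphere (0 : ℂ) 1).Infinite :=
      (isPreconnected_sphere (by simp [Complex.rank_real_complex]) 0 1).infinite_of_nontrivial
        ⟨1, by simp, -1, by simp, by norm_num⟩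
    have hinj : Set.InjOn (fun t : ℂ => (t - 1) / (star a ⬝ᵥ a)) (Metric.sphere 0 1) :=
      fun t _ t' _ h => sub_left_injective ((div_left_inj' ha).1 h)
    refine (hcircle.image hinj).mono ?_
    rintro _ ⟨t, ht, rfl⟩
    exact one_add_smul_vecMulVec_mem_unitaryGroup ha (by simpa using ht)

lemma det_one_add_smul_vecMulVec (a : m → ℂ) (s : ℂ) :
    (1 + s • vecMulVec a (star a)).det = 1 + s * (star a ⬝ᵥ a) := by
  rw [← smul_vecMulVec, det_add_vecMulVec]
  simp

end Reflections

section SemiInvariance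

open MvPolynomial

variable {m : Type*} [Fintype m]

/-- The Hermitian form `a ↦ a* V a` of a matrix `V` over a `ℂ`-algebra. -/
noncomputable def hermForm {B : Type*} [CommRing B] [Algebra ℂ B] (V : Matrix m m B)
    (a : m → ℂ) : B :=
  (algebraMap ℂ B ∘ star a) ⬝ᵥ V *ᵥ (algebraMap ℂ B ∘ a)

variable {σ A : Type*} [DecidableEq m] [CommRing A] [Algebra ℂ A]

lemma det_pencil_one_add_smul_vecMulVec_mul (u : Matrix m m A) (a : m → ℂ) (s : ℂ) (k : σ) :
    (pencil ((1 + s • vecMulVec a (star a)).map (algebraMap ℂ A) * u) k).det =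
      (pencil u k).det +
        algebraMap ℂ (MvPolynomial σ A) s * -hermForm (pencilResolvent u k) a := by
  set α := algebraMap ℂ (MvPolynomial σ A) ∘ a with hα
  set β := algebraMap ℂ (MvPolynomial σ A) ∘ star a with hβ
  have hmap : ((1 + s • vecMulVec a (star a)).map (algebraMap ℂ A)).map
      (C : A →+* MvPolynomial σ A) =
        1 + vecMulVec (algebraMap ℂ (MvPolynomial σ A) s • α) β := by
    ext1 i j
    by_cases h : i = j <;>
      simp [one_apply, h, vecMulVec_apply, hα, hβ,
        MvPolynomial.algebraMap_apply, -AddMonoidAlgebra.coe_algebraMap]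
  have hpencil : pencil ((1 + s • vecMulVec a (star a)).map (algebraMap ℂ A) * u) k =
      pencil u k + vecMulVec (-(algebraMap ℂ (MvPolynomial σ A) s • α))
        (β ᵥ* ((X k : MvPolynomial σ A) • u.map C)) := by
    rw [pencil, Matrix.map_mul, hmap, add_mul, one_mul, vecMulVec_mul, smul_add, ← sub_sub,
      ← pencil, vecMul_smul, vecMulVec_smul, neg_vecMulVec, smul_neg, sub_eq_add_neg]
  rw [hpencil, det_add_vecMulVec, mulVec_neg, mulVec_smul, dotProduct_neg, dotProduct_smul,
    ← dotProduct_mulVec, mulVec_mulVec, hermForm, pencilResolvent, Matrix.smul_mul, smul_eq_mul,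
    mul_neg]

/-- `L` is semi-invariant of weight `det ^ q` under left translations `u ↦ h u` of the generic
matrix `u`, each translation being realised by an algebra endomorphism `τ` of the coefficients. -/
def IsDetSemiInvariant (u : Matrix m m A) (L : A →ₗ[ℂ] ℂ) (q : ℕ) : Prop :=
  ∀ h ∈ unitaryGroup m ℂ, ∃ τ : A →ₐ[ℂ] A, u.map τ = h.map (algebraMap ℂ A) * u ∧
    ∀ a, L (τ a) = h.det ^ q * L a

variable [Fintype σ]

/-- The polynomial `L (∏_k det (1 - X_k u))`: for `L` the integral over the unitary group (twisted
by a power of `det`), this is the autocorrelation of characteristic polynomials. -/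
noncomputable def charpolyAverage (σ : Type*) [Fintype σ] (u : Matrix m m A) (L : A →ₗ[ℂ] ℂ) :
    MvPolynomial σ ℂ :=
  mapCoeff L (∏ k, (pencil u k).det)

variable {u : Matrix m m A} {L : A →ₗ[ℂ] ℂ} {q : ℕ}

lemma IsDetSemiInvariant.mapCoeff_prod_det_pencil_mul (hL : IsDetSemiInvariant u L q)
    {h : Matrix m m ℂ} (hh : h ∈ unitaryGroup m ℂ) :
    mapCoeff L (∏ k : σ, (pencil (h.map (algebraMap ℂ A) * u) k).det) =
      h.det ^ q • charpolyAverage σ u L := by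
  obtain ⟨τ, hτ, hLτ⟩ := hL h hh
  have hprod : ∏ k : σ, (pencil (h.map (algebraMap ℂ A) * u) k).det =
      MvPolynomial.map (τ : A →+* A) (∏ k : σ, (pencil u k).det) := by
    simp only [map_prod, map_det_pencil, ← hτ, RingHom.coe_coe]
  ext d
  rw [hprod, charpolyAverage, coeff_mapCoeff, coeff_map, RingHom.coe_coe, hLτ, coeff_smul,
    coeff_mapCoeff, smul_eq_mul]

lemma IsDetSemiInvariant.mapCoeff_coeff_prod (hL : IsDetSemiInvariant u L q) (a : m → ℂ)
    (j : ℕ) :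
    mapCoeff L ((∏ k : σ, (Polynomial.C (pencil u k).det +
        Polynomial.X * Polynomial.C (-hermForm (pencilResolvent u k) a))).coeff j) =
      (q.choose j * (star a ⬝ᵥ a) ^ j : ℂ) • charpolyAverage σ u L := by
  set r : Polynomial ℂ :=
    ((1 + Polynomial.X) ^ q).comp (Polynomial.C (star a ⬝ᵥ a) * Polynomial.X) with hr
  ext d
  rw [coeff_smul, smul_eq_mul, ← Polynomial.coeff_one_add_X_pow, ← Polynomial.comp_C_mul_X_coeff,
    ← hr, ← Polynomial.coeff_mul_C]
  refine map_coeff_eq_of_infinite_eval_eq ((lcoeff ℂ d) ∘ₗ mapCoeff L) _ _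
    ((infinite_one_add_smul_vecMulVec_mem_unitaryGroup a).mono fun s hs => ?_) j
  have heval := hL.mapCoeff_prod_det_pencil_mul (σ := σ) hs
  simp only [det_pencil_one_add_smul_vecMulVec_mul, det_one_add_smul_vecMulVec] at heval
  simp only [Set.mem_ofPred_eq, LinearMap.comp_apply, Polynomial.eval_prod, Polynomial.eval_add,
    Polynomial.eval_mul, Polynomial.eval_C, Polynomial.eval_X, heval]
  simp [hr, mul_comm s]

variable [DecidableEq σ]

lemma IsDetSemiInvariant.mapCoeff_sum_hermForm (hL : IsDetSemiInvariant u L q) (a : m → ℂ) :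
    mapCoeff L (∑ k : σ, (∏ l ∈ Finset.univ.erase k, (pencil u l).det) *
        hermForm (pencilResolvent u k) a) =
      (-(q * (star a ⬝ᵥ a)) : ℂ) • charpolyAverage σ u L := by
  have h := hL.mapCoeff_coeff_prod (σ := σ) a 1
  rw [coeff_one_prod_C_add_X_mul_C, Nat.choose_one_right, pow_one] at h
  rw [neg_smul, ← h, ← map_neg, ← Finset.sum_neg_distrib]
  simp only [mul_neg, neg_neg]

lemma IsDetSemiInvariant.mapCoeff_sum_hermForm_mul_hermForm (hL : IsDetSemiInvariant u L q)
    (a : m → ℂ) :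
    mapCoeff L (∑ k : σ, ∑ l ∈ Finset.univ.erase k,
        (∏ j ∈ (Finset.univ.erase k).erase l, (pencil u j).det) *
          (hermForm (pencilResolvent u l) a * hermForm (pencilResolvent u k) a)) =
      (q * (q - 1) * (star a ⬝ᵥ a) ^ 2 : ℂ) • charpolyAverage σ u L := by
  have hcoeff := two_mul_coeff_two_prod_C_add_X_mul_C Finset.univ
    (fun k : σ => (pencil u k).det) fun k => -hermForm (pencilResolvent u k) a
  simp only [neg_mul_neg] at hcoeff
  rw [← hcoeff, two_mul, map_add, hL.mapCoeff_coeff_prod, ← add_smul, Nat.cast_choose_two]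
  congr 1
  ring

end SemiInvariance

section QuadraticDesign

variable {m B : Type*} [Fintype m] [DecidableEq m] [CommRing B] [Algebra ℂ B]

lemma hermForm_one (a : m → ℂ) :
    hermForm (1 : Matrix m m B) a = algebraMap ℂ B (star a ⬝ᵥ a) := by
  simp [hermForm, dotProduct]

lemma hermForm_single (V : Matrix m m B) (i : m) : hermForm V (Pi.single i 1) = V i i := by
  have h : algebraMap ℂ B ∘ Pi.single i 1 = Pi.single i 1 := by
    ext j
    obtain rfl | hj := eq_or_ne j i <;> simp [*]
  rw [hermForm, ← Pi.single_star, star_one, h]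
  simp

lemma hermForm_single_add_single (V : Matrix m m B) (i j : m) (z : ℂ) :
    hermForm V (Pi.single i 1 + Pi.single j z) =
      V i i + algebraMap ℂ B z * V i j + algebraMap ℂ B (star z) * V j i +
        algebraMap ℂ B (z * star z) * V j j := by
  have h (z : ℂ) : algebraMap ℂ B ∘ (Pi.single i 1 + Pi.single j z) =
      Pi.single i 1 + Pi.single j (algebraMap ℂ B z) := by
    ext k
    simp only [Function.comp_apply, Pi.add_apply, map_add, Pi.single_apply]
    split_ifs <;> simp
  rw [hermForm, star_add, ← Pi.single_star, ← Pi.single_star, star_one, h, h]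
  simp only [mulVec_add, add_dotProduct, dotProduct_add, single_dotProduct, mulVec_single]
  simp
  ring

lemma sum_hermForm_single (V : Matrix m m B) : ∑ i, hermForm V (Pi.single i 1) = V.trace := by
  simp only [hermForm_single, trace, diag]

lemma sum_hermForm_single_add_single_mul (V W : Matrix m m B) (i j : m) :
    ∑ r : Fin 4, hermForm V (Pi.single i 1 + Pi.single j (Complex.I ^ (r : ℕ))) *
        hermForm W (Pi.single i 1 + Pi.single j (Complex.I ^ (r : ℕ))) =
      4 * (V i i * W i i + V j j * W j j + V i i * W j j + V j j * W i i + V i j * W j i +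
        V j i * W i j) := by
  have hI : algebraMap ℂ B Complex.I ^ 2 = -1 := by
    rw [← map_pow, Complex.I_sq, map_neg, map_one]
  simp only [Fin.sum_univ_four, Fin.coe_ofNat_eq_mod, Nat.zero_mod, Nat.one_mod, Nat.reduceMod,
    pow_zero, pow_one, Complex.I_sq, Complex.I_pow_three, hermForm_single_add_single,
    Complex.star_def, Complex.conj_I, map_neg, map_mul, map_one]
  generalize algebraMap ℂ B Complex.I = z at hI
  linear_combination (2 * (V i j * W i j) + 2 * (V j i * W j i) - 2 * (V i j * W j i) -
    2 * (V j i * W i j) - 2 * (V i i * W j j) - 2 * (V j j * W i i) +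
    2 * (z ^ 2 - 1) * (V j j * W j j)) * hI

/-- Nodes of a quadrature formula on `ℂ^m`: together with `designWeight` they average products of
two Hermitian forms exactly as the uniform measure on a sphere does. -/
noncomputable def designNode : m ⊕ m × m × Fin 4 → m → ℂ
  | .inl i => Pi.single i 1
  | .inr (i, j, r) => Pi.single i 1 + Pi.single j (Complex.I ^ (r : ℕ))

/-- The weights of the quadrature formula with nodes `designNode`. -/
noncomputable def designWeight : m ⊕ m × m × Fin 4 → ℂ
  | .inl _ => -Fintype.card m
  | .inr _ => 1 / 8

lemma sum_designWeight_smul_hermForm_mul_hermForm (V W : Matrix m m B) :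
    ∑ t, designWeight t • (hermForm V (designNode t) * hermForm W (designNode t)) =
      V.trace * W.trace + (V * W).trace := by
  have h8 : algebraMap ℂ B (1 / 8) * 8 = 1 := by
    rw [← map_ofNat (algebraMap ℂ B) 8, ← map_mul, ← map_one (algebraMap ℂ B)]
    norm_num
  have hdiag : ∑ i, ∑ _j : m, V i i * W i i = Fintype.card m * ∑ i, V i i * W i i := by
    simp [Finset.mul_sum]
  have hdiag' : ∑ _i : m, ∑ j, V j j * W j j = Fintype.card m * ∑ i, V i i * W i i := by simp
  have htrace : ∑ i, ∑ j, V i i * W j j = V.trace * W.trace := by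
    simp [trace, Finset.sum_mul_sum]
  have htrace' : ∑ i, ∑ j, V j j * W i i = V.trace * W.trace := by rw [Finset.sum_comm, htrace]
  have hmul : ∑ i, ∑ j, V i j * W j i = (V * W).trace := by simp [trace, mul_apply]
  have hmul' : ∑ i, ∑ j, V j i * W i j = (V * W).trace := by rw [Finset.sum_comm, hmul]
  simp only [Fintype.sum_sum_type, Fintype.sum_prod_type, designWeight, designNode,
    ← Finset.smul_sum, sum_hermForm_single_add_single_mul, hermForm_single, ← Finset.mul_sum]
  simp only [Finset.sum_add_distrib, hdiag, hdiag', htrace, htrace', hmul, hmul',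
    Algebra.smul_def, map_neg, map_natCast]
  linear_combination (Fintype.card m * ∑ i, V i i * W i i + V.trace * W.trace +
    (V * W).trace) * h8

lemma sum_designWeight_mul_sq :
    ∑ t : m ⊕ m × m × Fin 4, designWeight t * (star (designNode t) ⬝ᵥ designNode t : ℂ) ^ 2 =
      (Fintype.card m : ℂ) * (Fintype.card m + 1) := by
  have h := sum_designWeight_smul_hermForm_mul_hermForm (1 : Matrix m m ℂ) 1
  simp only [hermForm_one, Algebra.algebraMap_self_apply, smul_eq_mul, mul_one, trace_one] at h
  simp only [sq, h]
  ring

end QuadraticDesign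

section DifferentialEquations

open MvPolynomial

variable {σ m A : Type*} [Fintype σ] [Fintype m] [DecidableEq m] [CommRing A] [Algebra ℂ A]
  {u : Matrix m m A} {L : A →ₗ[ℂ] ℂ} {q : ℕ}

lemma eulerDeriv_charpolyAverage [DecidableEq σ] (u : Matrix m m A) (L : A →ₗ[ℂ] ℂ) (k : σ) :
    eulerDeriv k (charpolyAverage σ u L) =
      -mapCoeff L ((∏ l ∈ Finset.univ.erase k, (pencil u l).det) *
        (pencilResolvent u k).trace) := by
  rw [charpolyAverage, ← mapCoeff_eulerDeriv, eulerDeriv_prod_det_pencil, map_neg]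

lemma IsDetSemiInvariant.sum_eulerDeriv_charpolyAverage (hL : IsDetSemiInvariant u L q) :
    ∑ k, eulerDeriv k (charpolyAverage σ u L) =
      (q * Fintype.card m : ℂ) • charpolyAverage σ u L := by
  classical
  calc ∑ k, eulerDeriv k (charpolyAverage σ u L)
      = -∑ i, mapCoeff L (∑ k : σ, (∏ l ∈ Finset.univ.erase k, (pencil u l).det) *
          hermForm (pencilResolvent u k) (Pi.single i 1)) := by
        rw [← map_sum, Finset.sum_comm]
        simp only [eulerDeriv_charpolyAverage, Finset.sum_neg_distrib, ← map_sum,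
          ← Finset.mul_sum, sum_hermForm_single]
    _ = (q * Fintype.card m : ℂ) • charpolyAverage σ u L := by
        simp only [hL.mapCoeff_sum_hermForm, ← Finset.sum_smul, ← neg_smul]
        simp [mul_comm]

variable [DecidableEq σ]

/-- The average of `tr (W_k W_l) ∏_{j ≠ k, l} det (1 - X_j u)`, with `W = pencilResolvent u`: the
interaction of the variables `X_k` and `X_l` in the second-order differential equation. -/
noncomputable def interaction (u : Matrix m m A) (L : A →ₗ[ℂ] ℂ) (k l : σ) : MvPolynomial σ ℂ :=
  mapCoeff L ((∏ j ∈ (Finset.univ.erase k).erase l, (pencil u j).det) *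
    (pencilResolvent u l * pencilResolvent u k).trace)

lemma sub_mul_interaction (u : Matrix m m A) (L : A →ₗ[ℂ] ℂ) {k l : σ} (h : l ≠ k) :
    (X l - X k) * interaction u L k l =
      X l * eulerDeriv k (charpolyAverage σ u L) - X k * eulerDeriv l (charpolyAverage σ u L) := by
  rw [eulerDeriv_charpolyAverage, eulerDeriv_charpolyAverage, interaction, sub_mul, mul_neg,
    mul_neg]
  simp only [← mapCoeff_X_mul, ← map_neg, ← map_sub]
  congr 1
  have hk : ∏ j ∈ Finset.univ.erase k, (pencil u j).det =
      (pencil u l).det * ∏ j ∈ (Finset.univ.erase k).erase l, (pencil u j).det :=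
    (Finset.mul_prod_erase _ _ (by simp [h])).symm
  have hl : ∏ j ∈ Finset.univ.erase l, (pencil u j).det =
      (pencil u k).det * ∏ j ∈ (Finset.univ.erase k).erase l, (pencil u j).det := by
    rw [Finset.erase_right_comm]
    exact (Finset.mul_prod_erase _ _ (by simp [h.symm])).symm
  rw [hk, hl]
  linear_combination (∏ j ∈ (Finset.univ.erase k).erase l, (pencil u j).det) *
    sub_mul_trace_pencilResolvent_mul u l k

lemma eulerDeriv_eulerDeriv_charpolyAverage_add_interaction (u : Matrix m m A) (L : A →ₗ[ℂ] ℂ)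
    {k l : σ} (h : l ≠ k) :
    eulerDeriv l (eulerDeriv k (charpolyAverage σ u L)) + interaction u L k l =
      mapCoeff L ((∏ j ∈ (Finset.univ.erase k).erase l, (pencil u j).det) *
        ((pencilResolvent u l).trace * (pencilResolvent u k).trace +
          (pencilResolvent u l * pencilResolvent u k).trace)) := by
  rw [charpolyAverage, ← mapCoeff_eulerDeriv, ← mapCoeff_eulerDeriv,
    eulerDeriv_eulerDeriv_prod_det_pencil u h, interaction, ← map_add, mul_add]

lemma IsDetSemiInvariant.sum_eulerDeriv_eulerDeriv_add_interaction
    (hL : IsDetSemiInvariant u L q) :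
    ∑ k, ∑ l ∈ Finset.univ.erase k,
        (eulerDeriv l (eulerDeriv k (charpolyAverage σ u L)) + interaction u L k l) =
      (Fintype.card m * (Fintype.card m + 1) * (q * (q - 1)) : ℂ) • charpolyAverage σ u L := by
  set F : (m → ℂ) → MvPolynomial σ A := fun a => ∑ k, ∑ l ∈ Finset.univ.erase k,
    (∏ j ∈ (Finset.univ.erase k).erase l, (pencil u j).det) *
      (hermForm (pencilResolvent u l) a * hermForm (pencilResolvent u k) a) with hF
  calc _ = mapCoeff L (∑ k, ∑ l ∈ Finset.univ.erase k,
          (∏ j ∈ (Finset.univ.erase k).erase l, (pencil u j).det) *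
            ∑ t, designWeight t • (hermForm (pencilResolvent u l) (designNode t) *
              hermForm (pencilResolvent u k) (designNode t))) := by
        simp only [map_sum (mapCoeff L)]
        refine Finset.sum_congr rfl fun k _ => Finset.sum_congr rfl fun l hl => ?_
        rw [eulerDeriv_eulerDeriv_charpolyAverage_add_interaction u L (Finset.ne_of_mem_erase hl),
          sum_designWeight_smul_hermForm_mul_hermForm]
    _ = ∑ t, designWeight t • mapCoeff L (F (designNode t)) := by
        simp only [← map_smul, ← map_sum, hF, Finset.smul_sum, Finset.mul_sum, mul_smul_comm]
        rw [Finset.sum_comm (s := Finset.univ (α := m ⊕ m × m × Fin 4))]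
        exact congrArg _ (Finset.sum_congr rfl fun k _ => Finset.sum_comm)
    _ = _ := by
        simp only [hF, hL.mapCoeff_sum_hermForm_mul_hermForm, smul_smul, ← Finset.sum_smul]
        rw [← sum_designWeight_mul_sq, Finset.sum_mul]
        congr 1
        exact Finset.sum_congr rfl fun t _ => by ring

end DifferentialEquations

section Alternants

open MvPolynomial

variable {ι R : Type*} [CommRing R]

lemma sum_apply_eq_of_sum_eulerDeriv_eq_smul [IsDomain R] [Fintype ι] {f : MvPolynomial ι R} {c : R}
    (h : ∑ k, eulerDeriv k f = c • f) {d : ι →₀ ℕ} (hd : coeff d f ≠ 0) :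
    ∑ k, (d k : R) = c := by
  have hcoeff := congrArg (coeff d) h
  simp only [coeff_sum, coeff_eulerDeriv, ← Finset.sum_mul, coeff_smul, smul_eq_mul] at hcoeff
  exact mul_right_cancel₀ hd hcoeff

lemma sum_sq_apply_eq_of_sum_eulerDeriv_eulerDeriv_eq_smul [IsDomain R] [Fintype ι]
    {f : MvPolynomial ι R} {c : R} (h : ∑ k, eulerDeriv k (eulerDeriv k f) = c • f) {d : ι →₀ ℕ}
    (hd : coeff d f ≠ 0) : ∑ k, (d k : R) ^ 2 = c := by
  have hcoeff := congrArg (coeff d) h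
  simp only [coeff_sum, coeff_eulerDeriv, ← mul_assoc, ← sq, ← Finset.sum_mul, coeff_smul,
    smul_eq_mul] at hcoeff
  exact mul_right_cancel₀ hd hcoeff

variable [Fintype ι] [DecidableEq ι]

/-- A polynomial is antisymmetric if permuting its variables multiplies it by the sign of the
permutation. -/
def IsAntisymmetric (f : MvPolynomial ι R) : Prop :=
  ∀ w : Equiv.Perm ι, rename w f = C ((Equiv.Perm.sign w : ℤ) : R) * f

variable {f g : MvPolynomial ι R}

lemma IsAntisymmetric.mul_isSymmetric (hf : IsAntisymmetric f) (hg : g.IsSymmetric) :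
    IsAntisymmetric (f * g) := fun w => by
  rw [map_mul, hf w, hg w, mul_assoc]

lemma IsAntisymmetric.coeff_mapDomain (hf : IsAntisymmetric f) (w : Equiv.Perm ι) (d : ι →₀ ℕ) :
    coeff (d.mapDomain w) f = (Equiv.Perm.sign w : ℤ) * coeff d f := by
  rw [← coeff_rename_mapDomain w w.injective f d, hf w, coeff_C_mul, ← mul_assoc, ← Int.cast_mul,
    ← Units.val_mul, Int.units_mul_self, Units.val_one, Int.cast_one, one_mul]

lemma IsAntisymmetric.injective_of_coeff_ne_zero [IsDomain R] [CharZero R] (hf : IsAntisymmetric f)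
    {d : ι →₀ ℕ} (hd : coeff d f ≠ 0) : Function.Injective d := by
  intro a b hab
  by_contra hne
  have hswap : d.mapDomain (Equiv.swap a b) = d := by
    ext k
    rw [Finsupp.mapDomain_equiv_apply, Equiv.symm_swap, Equiv.swap_apply_def]
    grind
  have h := hf.coeff_mapDomain (Equiv.swap a b) d
  rw [hswap, Equiv.Perm.sign_swap hne] at h
  exact hd (self_eq_neg.1 (by simpa using h))

variable (R) in
/-- The alternant `det (X_i ^ μ_j)`. For `ι = Fin n` and `μ_j = j` it is the Vandermonde
determinant. -/
noncomputable def alternant (μ : ι → ℕ) : MvPolynomial ι R :=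
  (of fun i j => X i ^ μ j).det

variable {μ : ι → ℕ}

lemma isAntisymmetric_alternant : IsAntisymmetric (alternant R μ) := fun w => by
  have hsubmatrix : (rename w).mapMatrix (of fun i j => (X i : MvPolynomial ι R) ^ μ j) =
      (of fun i j => (X i : MvPolynomial ι R) ^ μ j).submatrix w id := by
    ext1 i j
    simp
  rw [alternant, AlgHom.map_det, hsubmatrix, det_permute, map_intCast]

lemma alternant_eq_sum_monomial : alternant R μ = ∑ w : Equiv.Perm ι,
    monomial (Finsupp.equivFunOnFinite.symm (μ ∘ w)) ((Equiv.Perm.sign w : ℤ) : R) := by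
  rw [alternant, ← det_transpose, det_apply']
  refine Finset.sum_congr rfl fun w _ => ?_
  rw [monomial_eq, Finsupp.prod_fintype _ _ (by simp), map_intCast]
  simp

lemma exists_perm_of_coeff_alternant_ne_zero {d : ι →₀ ℕ} (hd : coeff d (alternant R μ) ≠ 0) :
    ∃ w : Equiv.Perm ι, ⇑d = μ ∘ w := by
  rw [alternant_eq_sum_monomial, coeff_sum] at hd
  obtain ⟨w, -, hw⟩ := Finset.exists_ne_zero_of_sum_ne_zero hd
  rw [coeff_monomial, ite_ne_right_iff] at hw
  exact ⟨w, by rw [← hw.1, Finsupp.coe_equivFunOnFinite_symm]⟩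

lemma coeff_alternant_self (hμ : Function.Injective μ) :
    coeff (Finsupp.equivFunOnFinite.symm μ) (alternant R μ) = 1 := by
  rw [alternant_eq_sum_monomial, coeff_sum, Finset.sum_eq_single 1]
  · simp
  · intro w _ hw
    rw [coeff_monomial, if_neg]
    intro h
    refine hw (Equiv.ext fun i => hμ ?_)
    simpa using congrFun (Finsupp.equivFunOnFinite.symm.injective h) i
  · simp

lemma eval_alternant (x : ι → R) : eval x (alternant R μ) = (of fun i j => x i ^ μ j).det := by
  rw [alternant, RingHom.map_det]
  congr 1
  ext1 i j
  simp

lemma sum_eulerDeriv_alternant :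
    ∑ k, eulerDeriv k (alternant R μ) = (∑ k, (μ k : R)) • alternant R μ := by
  ext d
  simp only [coeff_sum, coeff_eulerDeriv, ← Finset.sum_mul, coeff_smul, smul_eq_mul]
  by_cases hd : coeff d (alternant R μ) = 0
  · rw [hd, mul_zero, mul_zero]
  · obtain ⟨w, hw⟩ := exists_perm_of_coeff_alternant_ne_zero hd
    rw [hw, ← Equiv.sum_comp w fun k => (μ k : R)]
    rfl

lemma sum_eulerDeriv_eulerDeriv_alternant :
    ∑ k, eulerDeriv k (eulerDeriv k (alternant R μ)) =
      (∑ k, (μ k : R) ^ 2) • alternant R μ := by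
  ext d
  simp only [coeff_sum, coeff_eulerDeriv, ← mul_assoc, ← sq, ← Finset.sum_mul, coeff_smul,
    smul_eq_mul]
  by_cases hd : coeff d (alternant R μ) = 0
  · rw [hd, mul_zero, mul_zero]
  · obtain ⟨w, hw⟩ := exists_perm_of_coeff_alternant_ne_zero hd
    rw [hw, ← Equiv.sum_comp w fun k => (μ k : R) ^ 2]
    rfl

lemma IsAntisymmetric.eq_smul_alternant (hf : IsAntisymmetric f) (hμ : Function.Injective μ)
    (hsupp : ∀ d : ι →₀ ℕ, coeff d f ≠ 0 → ∃ w : Equiv.Perm ι, ⇑d = μ ∘ w) :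
    f = coeff (Finsupp.equivFunOnFinite.symm μ) f • alternant R μ := by
  ext d
  rw [coeff_smul, smul_eq_mul]
  by_cases hd : ∃ w : Equiv.Perm ι, ⇑d = μ ∘ w
  · obtain ⟨w, hw⟩ := hd
    have hmap : d = (Finsupp.equivFunOnFinite.symm μ).mapDomain w.symm := by
      ext k
      rw [Finsupp.mapDomain_equiv_apply, hw]
      simp
    rw [hmap, hf.coeff_mapDomain, isAntisymmetric_alternant.coeff_mapDomain,
      coeff_alternant_self hμ, mul_one, mul_comm]
  · rw [not_not.1 (mt (hsupp d) hd), not_not.1 (mt exists_perm_of_coeff_alternant_ne_zero hd),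
      mul_zero]

end Alternants

section Conjugation

open MvPolynomial

lemma sum_sum_erase_dividedDifference {ι F : Type*} [Fintype ι] [DecidableEq ι] [Field F]
    {x : ι → F} (hx : Function.Injective x) (y : ι → F) (z : ι → ι → F)
    (hz : ∀ k l, l ≠ k → (x l - x k) * z k l = x l * y k - x k * y l) :
    ∑ k, ∑ l ∈ Finset.univ.erase k, z k l =
      2 * (Fintype.card ι - 1) * ∑ k, y k -
        2 * ∑ k, (∑ l ∈ Finset.univ.erase k, x k / (x k - x l)) * y k := by
  set g : ι → ι → F := fun k l => (1 - x k / (x k - x l)) * y k with hg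
  have hzg : ∀ k, ∀ l ∈ Finset.univ.erase k, z k l = g k l + g l k := by
    intro k l hl
    have hlk := Finset.ne_of_mem_erase hl
    have hne : x l - x k ≠ 0 := sub_ne_zero.2 (hx.ne hlk)
    have hne' : x k - x l ≠ 0 := sub_ne_zero.2 (hx.ne hlk.symm)
    refine mul_left_cancel₀ hne ?_
    rw [hz k l hlk]
    simp only [hg]
    field_simp
    ring
  have hswap : ∑ k, ∑ l ∈ Finset.univ.erase k, g l k = ∑ k, ∑ l ∈ Finset.univ.erase k, g k l :=
    Finset.sum_comm' (by simp [eq_comm])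
  have hsum (k : ι) : ∑ l ∈ Finset.univ.erase k, g k l =
      (Fintype.card ι - 1) * y k - (∑ l ∈ Finset.univ.erase k, x k / (x k - x l)) * y k := by
    rw [← Finset.sum_mul, Finset.sum_sub_distrib, Finset.sum_const, nsmul_one,
      Finset.cast_card_erase_of_mem (Finset.mem_univ k), Finset.card_univ, sub_mul]
  rw [Finset.sum_congr rfl fun k _ => Finset.sum_congr rfl (hzg k)]
  simp only [Finset.sum_add_distrib, hswap, hsum, Finset.sum_sub_distrib, ← Finset.mul_sum]
  ring

lemma map_derivation_prod {ι K A F : Type*} [CommRing K] [CommRing A] [Algebra K A] [Field F]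
    (D : Derivation K A A) (φ : A →+* F) (s : Finset ι) (f : ι → A)
    (hf : ∀ i ∈ s, φ (f i) ≠ 0) :
    φ (D (∏ i ∈ s, f i)) = φ (∏ i ∈ s, f i) * ∑ i ∈ s, φ (D (f i)) / φ (f i) := by
  classical
  rw [derivation_prod, map_sum, Finset.mul_sum]
  refine Finset.sum_congr rfl fun i hi => ?_
  rw [← Finset.prod_erase_mul s f hi, map_mul, map_mul]
  have := hf i hi
  field_simp

variable {n : ℕ} {R : Type*} [CommRing R]

lemma alternant_val_eq_prod : alternant R (Fin.val : Fin n → ℕ) =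
    ∏ i, ∏ j ∈ Finset.Ioi i, (X j - X i : MvPolynomial (Fin n) R) :=
  det_vandermonde _

lemma map_eulerDeriv_X_sub_X_div {σ F : Type*} [DecidableEq σ] [Field F]
    (φ : MvPolynomial σ R →+* F) {i j : σ} (hij : i ≠ j) (k : σ) :
    φ (eulerDeriv k (X j - X i)) / φ (X j - X i) =
      (if j = k then φ (X k) / (φ (X k) - φ (X i)) else 0) +
        if i = k then φ (X k) / (φ (X k) - φ (X j)) else 0 := by
  rw [map_sub, map_sub, map_sub]
  obtain rfl | hj := eq_or_ne j k
  · rw [eulerDeriv_X_self, eulerDeriv_X_of_ne hij, map_zero, sub_zero, if_pos rfl, if_neg hij,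
      add_zero]
  obtain rfl | hi := eq_or_ne i k
  · rw [eulerDeriv_X_self, eulerDeriv_X_of_ne hj, map_zero, zero_sub, if_neg hj, if_pos rfl,
      zero_add, neg_div, ← div_neg, neg_sub]
  · rw [eulerDeriv_X_of_ne hj, eulerDeriv_X_of_ne hi, map_zero, sub_zero, zero_div, if_neg hj,
      if_neg hi, add_zero]

lemma map_eulerDeriv_alternant_val [Nontrivial R] {F : Type*} [Field F]
    {φ : MvPolynomial (Fin n) R →+* F} (hφ : Function.Injective φ) (k : Fin n) :
    φ (eulerDeriv k (alternant R Fin.val)) =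
      φ (alternant R Fin.val) *
        ∑ l ∈ Finset.univ.erase k, φ (X k) / (φ (X k) - φ (X l)) := by
  have hne (i j : Fin n) (hij : j ∈ Finset.Ioi i) : φ (X j - X i) ≠ 0 :=
    (map_ne_zero_iff φ hφ).2 (sub_ne_zero.2 ((X_injective (R := R)).ne (Finset.mem_Ioi.1 hij).ne'))
  have hne' (i : Fin n) : φ (∏ j ∈ Finset.Ioi i, (X j - X i)) ≠ 0 := by
    rw [map_prod]
    exact Finset.prod_ne_zero_iff.2 (hne i)
  have hlog (i : Fin n) : φ (eulerDeriv k (∏ j ∈ Finset.Ioi i, (X j - X i))) /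
      φ (∏ j ∈ Finset.Ioi i, (X j - X i)) =
        ∑ j ∈ Finset.Ioi i, ((if j = k then φ (X k) / (φ (X k) - φ (X i)) else 0) +
          if i = k then φ (X k) / (φ (X k) - φ (X j)) else 0) := by
    rw [map_derivation_prod _ _ _ _ (hne i), mul_div_cancel_left₀ _ (hne' i)]
    exact Finset.sum_congr rfl fun j hj =>
      map_eulerDeriv_X_sub_X_div φ (Finset.mem_Ioi.1 hj).ne k
  rw [alternant_val_eq_prod, map_derivation_prod _ _ _ _ fun i _ => hne' i,
    Finset.sum_congr rfl fun i _ => hlog i]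
  simp only [Finset.sum_add_distrib, Finset.sum_ite_eq', Finset.mem_Ioi]
  rw [← Finset.compl_singleton, ← Finset.Ioi_disjUnion_Iio, Finset.sum_disjUnion, add_comm]
  congr 2
  · rw [Finset.sum_eq_single k]
    all_goals simp +contextual
  · rw [← Finset.sum_filter]
    exact Finset.sum_congr (by ext; simp) fun _ _ => rfl

lemma alternant_val_mul_sum_interaction [IsDomain R] (P : MvPolynomial (Fin n) R)
    (Z : Fin n → Fin n → MvPolynomial (Fin n) R)
    (hZ : ∀ k l, l ≠ k → (X l - X k) * Z k l = X l * eulerDeriv k P - X k * eulerDeriv l P) :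
    alternant R Fin.val * ∑ k, ∑ l ∈ Finset.univ.erase k, Z k l =
      2 * ((n : MvPolynomial (Fin n) R) - 1) * (alternant R Fin.val * ∑ k, eulerDeriv k P) -
        2 * ∑ k, eulerDeriv k (alternant R Fin.val) * eulerDeriv k P := by
  set φ := algebraMap (MvPolynomial (Fin n) R) (FractionRing (MvPolynomial (Fin n) R))
  have hinj : Function.Injective φ := IsFractionRing.injective _ _
  have hsum := sum_sum_erase_dividedDifference (hinj.comp X_injective)
    (fun k => φ (eulerDeriv k P)) (fun k l => φ (Z k l)) fun k l h => by
      simpa using congrArg φ (hZ k l h)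
  refine hinj ?_
  simp only [Fintype.card_fin, Function.comp_apply] at hsum
  simp only [map_mul, map_sub, map_sum, map_natCast, map_ofNat, map_one,
    map_eulerDeriv_alternant_val hinj, hsum, mul_assoc, ← Finset.mul_sum]
  ring

lemma sum_eulerDeriv_alternant_val_mul {P : MvPolynomial (Fin n) R} {c : R}
    (hP : ∑ k, eulerDeriv k P = c • P) :
    ∑ k, eulerDeriv k (alternant R Fin.val * P) =
      (c + ∑ k : Fin n, (k : R)) • (alternant R Fin.val * P) := by
  simp only [Derivation.leibniz, Finset.sum_add_distrib, smul_eq_mul, ← Finset.mul_sum, hP,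
    sum_eulerDeriv_alternant, add_smul, mul_smul_comm, mul_comm P (alternant R Fin.val)]

lemma sum_sum_erase_eulerDeriv_eulerDeriv {σ : Type*} [Fintype σ] [DecidableEq σ]
    {P : MvPolynomial σ R} {c : R} (hP : ∑ k, eulerDeriv k P = c • P) :
    ∑ k, ∑ l ∈ Finset.univ.erase k, eulerDeriv l (eulerDeriv k P) =
      c ^ 2 • P - ∑ k, eulerDeriv k (eulerDeriv k P) := by
  have hall : ∑ l, ∑ k, eulerDeriv l (eulerDeriv k P) = c ^ 2 • P := by
    simp only [← map_sum, hP, Derivation.map_smul, ← Finset.smul_sum, smul_smul, sq]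
  rw [← hall, Finset.sum_comm, ← Finset.sum_sub_distrib]
  refine Finset.sum_congr rfl fun k _ => ?_
  rw [← Finset.add_sum_erase _ _ (Finset.mem_univ k), add_sub_cancel_left]

lemma sum_eulerDeriv_eulerDeriv_alternant_val_mul [IsDomain R] {P : MvPolynomial (Fin n) R}
    {Z : Fin n → Fin n → MvPolynomial (Fin n) R} {c c' : R} (hP : ∑ k, eulerDeriv k P = c • P)
    (hPZ : ∑ k, ∑ l ∈ Finset.univ.erase k, (eulerDeriv l (eulerDeriv k P) + Z k l) = c' • P)
    (hZ : ∀ k l, l ≠ k → (X l - X k) * Z k l = X l * eulerDeriv k P - X k * eulerDeriv l P) :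
    ∑ k, eulerDeriv k (eulerDeriv k (alternant R Fin.val * P)) =
      (c ^ 2 - c' + 2 * (n - 1) * c + ∑ k : Fin n, (k : R) ^ 2) • (alternant R Fin.val * P) := by
  set Δ : MvPolynomial (Fin n) R := alternant R Fin.val
  have hleibniz : ∑ k, eulerDeriv k (eulerDeriv k (Δ * P)) =
      Δ * ∑ k, eulerDeriv k (eulerDeriv k P) + 2 * ∑ k, eulerDeriv k Δ * eulerDeriv k P +
        P * ∑ k, eulerDeriv k (eulerDeriv k Δ) := by
    simp only [Finset.mul_sum, ← Finset.sum_add_distrib]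
    refine Finset.sum_congr rfl fun k _ => ?_
    simp only [Derivation.leibniz, map_add, smul_eq_mul]
    ring
  have hinter := alternant_val_mul_sum_interaction P Z hZ
  simp only [Finset.sum_add_distrib, sum_sum_erase_eulerDeriv_eulerDeriv hP] at hPZ
  rw [hP] at hinter
  rw [hleibniz, sum_eulerDeriv_eulerDeriv_alternant]
  simp only [smul_eq_C_mul, map_add, map_sub, map_mul, map_pow, map_natCast, map_one,
    map_ofNat] at *
  linear_combination hinter - Δ * hPZ

end Conjugation

section RectangularExponents

lemma eq_of_card_le_of_sum_eq {α M : Type*} [AddCommGroup M] [PartialOrder M]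
    [IsOrderedAddMonoid M] {s t : Finset α} {f : α → M} (hcard : t.card ≤ s.card)
    (hs : ∀ a ∈ s, 0 < f a) (ht : ∀ a ∈ t, a ∉ s → f a ≤ 0)
    (hsum : ∑ a ∈ t, f a = ∑ a ∈ s, f a) : s = t := by
  classical
  refine Finset.eq_of_subset_of_card_le ?_ hcard
  rw [← Finset.sdiff_eq_empty_iff_subset]
  by_contra hne
  have hpos : 0 < ∑ a ∈ s \ t, f a :=
    Finset.sum_pos (fun a ha => hs a (Finset.mem_sdiff.1 ha).1) (Finset.nonempty_iff_ne_empty.2 hne)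
  have hnonpos : ∑ a ∈ t \ s, f a ≤ 0 :=
    Finset.sum_nonpos fun a ha => ht a (Finset.mem_sdiff.1 ha).1 (Finset.mem_sdiff.1 ha).2
  rw [← Finset.sum_inter_add_sum_sdiff t s, ← Finset.sum_inter_add_sum_sdiff s t,
    Finset.inter_comm, add_left_cancel_iff] at hsum
  exact (hpos.trans_eq hsum.symm).not_ge hnonpos

lemma exists_perm_eq_comp_of_range_eq {α β : Type*} {f g : α → β} (hf : Function.Injective f)
    (hg : Function.Injective g) (h : Set.range f = Set.range g) :
    ∃ w : Equiv.Perm α, f = g ∘ w := by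
  refine ⟨(Equiv.ofInjective f hf).trans
    ((Equiv.setCongr h).trans (Equiv.ofInjective g hg).symm), funext fun a => ?_⟩
  simp [Equiv.apply_ofInjective_symm hg]

/-- The exponents `0, …, p - 1, p + N, …, p + q + N - 1` of the alternant that is the numerator of
the Schur function of the rectangular partition with `q` rows of length `N`. -/
def rectExponent (N p q : ℕ) (j : Fin (p + q)) : ℕ :=
  if (j : ℕ) < p then j else j + N

variable {N p q : ℕ}

lemma rectExponent_injective : Function.Injective (rectExponent N p q) := by
  intro i j h
  simp only [rectExponent] at h
  ext
  split_ifs at h <;> lia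

lemma mem_range_rectExponent {t : ℕ} :
    t ∈ Set.range (rectExponent N p q) ↔ t < p ∨ p + N ≤ t ∧ t < p + q + N := by
  constructor
  · rintro ⟨j, rfl⟩
    simp only [rectExponent]
    split_ifs <;> lia
  · rintro (h | h)
    · exact ⟨⟨t, by lia⟩, if_pos h⟩
    · refine ⟨⟨t - N, by lia⟩, ?_⟩
      simp only [rectExponent]
      split_ifs <;> lia

lemma sum_rectExponent {R : Type*} [CommRing R] :
    ∑ j, (rectExponent N p q j : R) = q * N + ∑ j : Fin (p + q), (j : R) := by
  rw [Fin.sum_univ_add, Fin.sum_univ_add]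
  simp [rectExponent, Finset.sum_add_distrib]
  ring

lemma two_mul_sum_fin_val {R : Type*} [CommRing R] (n : ℕ) :
    2 * ∑ j : Fin n, (j : R) = n * (n - 1) := by
  induction n with
  | zero => simp
  | succ n ih =>
    rw [Fin.sum_univ_castSucc, mul_add]
    simp only [Fin.val_castSucc, ih, Fin.val_last, Nat.cast_succ]
    ring

lemma sum_rectExponent_sq {R : Type*} [CommRing R] :
    ∑ j, (rectExponent N p q j : R) ^ 2 =
      (q * N) ^ 2 - N * (N + 1) * (q * (q - 1)) + 2 * ((p + q : ℕ) - 1) * (q * N) +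
        ∑ j : Fin (p + q), (j : R) ^ 2 := by
  have hshift (i : Fin q) : (rectExponent N p q (Fin.natAdd p i) : R) ^ 2 =
      ((Fin.natAdd p i : ℕ) : R) ^ 2 + (2 * N * i + (2 * N * p + N ^ 2)) := by
    simp only [rectExponent, Fin.val_natAdd, not_lt.2 (Nat.le_add_right p i), if_false,
      Nat.cast_add]
    ring
  rw [Fin.sum_univ_add, Fin.sum_univ_add]
  simp only [hshift, Finset.sum_add_distrib, ← Finset.mul_sum]
  simp [rectExponent]
  linear_combination (N : R) * two_mul_sum_fin_val (R := R) q

lemma exists_perm_eq_rectExponent_comp {d : Fin (p + q) → ℕ} (hd : Function.Injective d)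
    (hlt : ∀ k, d k < p + q + N) (hsum : ∑ k, d k = ∑ k, rectExponent N p q k)
    (hsumSq : ∑ k, d k ^ 2 = ∑ k, rectExponent N p q k ^ 2) :
    ∃ w : Equiv.Perm (Fin (p + q)), d = rectExponent N p q ∘ w := by
  refine exists_perm_eq_comp_of_range_eq hd rectExponent_injective ?_
  -- The roots of `φ` are `p - 1/2` and `p + N - 1/2`: it is positive at the exponents
  -- `rectExponent` and negative at the other natural numbers below `p + q + N`.
  set φ : ℕ → ℤ := fun t => (2 * t - 2 * p + 1) * (2 * t - 2 * N - 2 * p + 1) with hφ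
  have hmem (e : Fin (p + q) → ℕ) {t : ℕ} : t ∈ Finset.univ.image e ↔ t ∈ Set.range e := by simp
  have himage : Finset.univ.image (rectExponent N p q) = Finset.univ.image d := by
    refine eq_of_card_le_of_sum_eq (f := φ) ?_ (fun t ht => ?_) (fun t ht hnot => ?_) ?_
    · rw [Finset.card_image_of_injective _ hd,
        Finset.card_image_of_injective _ rectExponent_injective]
    · rw [hmem, mem_range_rectExponent] at ht
      obtain h | h := ht
      · apply mul_pos_of_neg_of_neg <;> lia
      · apply mul_pos <;> lia
    · rw [hmem, mem_range_rectExponent] at hnot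
      rw [hmem] at ht
      obtain ⟨k, rfl⟩ := ht
      have := hlt k
      apply mul_nonpos_of_nonneg_of_nonpos <;> lia
    · have hexpand (e : Fin (p + q) → ℕ) : ∑ k, φ (e k) = 4 * (∑ k, e k ^ 2 : ℕ) +
          (4 - 8 * p - 4 * N) * (∑ k, e k : ℕ) +
            (p + q) * ((1 - 2 * p) * (1 - 2 * N - 2 * p)) := by
        have h (t : ℕ) : φ t = 4 * (t : ℤ) ^ 2 + (4 - 8 * p - 4 * N) * t +
            (1 - 2 * p) * (1 - 2 * N - 2 * p) := by
          simp only [hφ]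
          ring
        simp [h, Finset.sum_add_distrib, Finset.mul_sum]
      rw [Finset.sum_image hd.injOn, Finset.sum_image rectExponent_injective.injOn, hexpand,
        hexpand, hsum, hsumSq]
  simpa using congrArg ((↑) : Finset ℕ → Set ℕ) himage.symm

end RectangularExponents

section RectangularAlternant

open MvPolynomial

lemma perm_eq_one_of_le_of_ge {n p : ℕ} {w : Equiv.Perm (Fin n)}
    (hle : ∀ k : Fin n, (k : ℕ) < p → w k ≤ k) (hge : ∀ k : Fin n, p ≤ k → k ≤ w k) : w = 1 := by
  have hsum : ∑ k, ((w k : ℕ) : ℤ) = ∑ k : Fin n, (k : ℤ) :=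
    Equiv.sum_comp w fun k : Fin n => (k : ℤ)
  have hsumSq : ∑ k, ((w k : ℕ) : ℤ) ^ 2 = ∑ k : Fin n, (k : ℤ) ^ 2 :=
    Equiv.sum_comp w fun k : Fin n => (k : ℤ) ^ 2
  have hnonneg : 0 ≤ ∑ k : Fin n, (2 * (k : ℤ) - 2 * p + 1) * ((w k : ℤ) - k) := by
    refine Finset.sum_nonneg fun k _ => ?_
    obtain h | h := lt_or_ge (k : ℕ) p
    · have := Fin.le_def.1 (hle k h)
      apply mul_nonneg_of_nonpos_of_nonpos <;> lia
    · have := Fin.le_def.1 (hge k h)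
      apply mul_nonneg <;> lia
  have hexpand : ∑ k : Fin n, (2 * (k : ℤ) - 2 * p + 1) * ((w k : ℤ) - k) =
      -∑ k : Fin n, ((w k : ℤ) - k) ^ 2 := by
    have h (k : Fin n) : (2 * (k : ℤ) - 2 * p + 1) * ((w k : ℤ) - k) =
        -((w k : ℤ) - k) ^ 2 + ((w k : ℤ) ^ 2 - k ^ 2) + (1 - 2 * p) * ((w k : ℤ) - k) := by ring
    simp only [h, Finset.sum_add_distrib, ← Finset.mul_sum, Finset.sum_sub_distrib, hsum, hsumSq,
      Finset.sum_neg_distrib]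
    ring
  have hzero : ∑ k : Fin n, ((w k : ℤ) - k) ^ 2 = 0 :=
    le_antisymm (by linarith) (Finset.sum_nonneg fun _ _ => sq_nonneg _)
  rw [Finset.sum_eq_zero_iff_of_nonneg fun _ _ => sq_nonneg _] at hzero
  ext k
  have := pow_eq_zero_iff two_ne_zero |>.1 (hzero k (Finset.mem_univ k))
  rw [Equiv.Perm.one_apply]
  lia

variable {N p q : ℕ} {R : Type*} [CommRing R] {P : MvPolynomial (Fin (p + q)) R}

lemma apply_le_of_coeff_ne_zero {σ : Type*} {f : MvPolynomial σ R} {d : σ →₀ ℕ}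
    (hd : coeff d f ≠ 0) (k : σ) : d k ≤ degreeOf k f :=
  degreeOf_le_iff.1 le_rfl d (mem_support_iff.2 hd)

lemma coeff_rectExponent_alternant_val_mul (hdeg : ∀ k, degreeOf k P ≤ N) :
    coeff (Finsupp.equivFunOnFinite.symm (rectExponent N p q)) (alternant R Fin.val * P) =
      coeff (Finsupp.equivFunOnFinite.symm fun k : Fin (p + q) => if (k : ℕ) < p then 0 else N)
        P := by
  have hadd : Finsupp.equivFunOnFinite.symm (Fin.val : Fin (p + q) → ℕ) +
      Finsupp.equivFunOnFinite.symm (fun k : Fin (p + q) => if (k : ℕ) < p then 0 else N) =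
        Finsupp.equivFunOnFinite.symm (rectExponent N p q) := by
    ext k
    simp only [Finsupp.add_apply, Finsupp.equivFunOnFinite_symm_apply_apply, rectExponent]
    split_ifs <;> simp
  rw [coeff_mul, Finset.sum_eq_single_of_mem _
      (Finset.HasAntidiagonal.mem_antidiagonal (a := (_, _)).2 hadd),
    coeff_alternant_self Fin.val_injective, one_mul]
  rintro ⟨d, e⟩ hde hne
  by_contra hcoeff
  obtain ⟨w, hw⟩ := exists_perm_of_coeff_alternant_ne_zero (left_ne_zero_of_mul hcoeff)
  have hwe (k : Fin (p + q)) : w k + e k = rectExponent N p q k := by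
    have := DFunLike.congr_fun (Finset.HasAntidiagonal.mem_antidiagonal.1 hde) k
    rwa [Finsupp.add_apply, hw] at this
  have he (k : Fin (p + q)) : e k ≤ N :=
    (apply_le_of_coeff_ne_zero (right_ne_zero_of_mul hcoeff) k).trans (hdeg k)
  have hw1 : w = 1 := by
    refine perm_eq_one_of_le_of_ge (p := p) (fun k hk => ?_) fun k hk => ?_
    · have h := hwe k
      rw [rectExponent, if_pos hk] at h
      exact Fin.le_def.2 (by lia)
    · have h := hwe k
      rw [rectExponent, if_neg hk.not_gt] at h
      exact Fin.le_def.2 (by have := he k; lia)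
  have hd : d = Finsupp.equivFunOnFinite.symm (Fin.val : Fin (p + q) → ℕ) := by
    ext k
    simp [hw, hw1]
  refine hne (Prod.ext hd (add_left_cancel (a := d) ?_))
  rw [Finset.HasAntidiagonal.mem_antidiagonal.1 hde, ← hadd, hd]

lemma apply_lt_of_coeff_alternant_val_mul_ne_zero (hdeg : ∀ k, degreeOf k P ≤ N)
    {d : Fin (p + q) →₀ ℕ} (hd : coeff d (alternant R Fin.val * P) ≠ 0) (k : Fin (p + q)) :
    d k < p + q + N := by
  rw [coeff_mul] at hd
  obtain ⟨⟨e, e'⟩, he, hne⟩ := Finset.exists_ne_zero_of_sum_ne_zero hd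
  obtain ⟨w, hw⟩ := exists_perm_of_coeff_alternant_ne_zero (left_ne_zero_of_mul hne)
  have he' := (apply_le_of_coeff_ne_zero (right_ne_zero_of_mul hne) k).trans (hdeg k)
  rw [← Finset.HasAntidiagonal.mem_antidiagonal.1 he, Finsupp.add_apply, hw]
  exact add_lt_add_of_lt_of_le (w k).is_lt he'

lemma alternant_val_mul_eq_smul_alternant_rectExponent [IsDomain R] [CharZero R]
    (hP : P.IsSymmetric) (hdeg : ∀ k, degreeOf k P ≤ N)
    (hsum : ∑ k, eulerDeriv k (alternant R Fin.val * P) =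
      (∑ k, (rectExponent N p q k : R)) • (alternant R Fin.val * P))
    (hsumSq : ∑ k, eulerDeriv k (eulerDeriv k (alternant R Fin.val * P)) =
      (∑ k, (rectExponent N p q k : R) ^ 2) • (alternant R Fin.val * P)) :
    alternant R Fin.val * P =
      coeff (Finsupp.equivFunOnFinite.symm fun k : Fin (p + q) => if (k : ℕ) < p then 0 else N) P •
        alternant R (rectExponent N p q) := by
  have hanti : IsAntisymmetric (alternant R Fin.val * P) :=
    isAntisymmetric_alternant.mul_isSymmetric hP
  rw [← coeff_rectExponent_alternant_val_mul hdeg]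
  refine hanti.eq_smul_alternant rectExponent_injective fun d hd => ?_
  refine exists_perm_eq_rectExponent_comp (hanti.injective_of_coeff_ne_zero hd)
    (apply_lt_of_coeff_alternant_val_mul_ne_zero hdeg hd) ?_ ?_
  · exact_mod_cast sum_apply_eq_of_sum_eulerDeriv_eq_smul hsum hd
  · exact_mod_cast sum_sq_apply_eq_of_sum_eulerDeriv_eulerDeriv_eq_smul hsumSq hd

end RectangularAlternant

section LaplaceExpansion

lemma sum_sign_smul_det_submatrix_mul_det_submatrix {ι m n R : Type*} [Fintype ι]
    [DecidableEq ι] [Fintype m] [DecidableEq m] [Fintype n] [DecidableEq n] [CommRing R]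
    (e : m ⊕ n ≃ ι) (M : Matrix ι ι R) :
    ∑ w : Equiv.Perm ι, Equiv.Perm.sign w •
        ((M.submatrix (w ∘ e ∘ Sum.inl) (e ∘ Sum.inl)).det *
          (M.submatrix (w ∘ e ∘ Sum.inr) (e ∘ Sum.inr)).det) =
      ((Fintype.card m).factorial * (Fintype.card n).factorial : ℕ) * M.det := by
  set ρ : Equiv.Perm m × Equiv.Perm n → Equiv.Perm ι :=
    fun s => e.permCongr (Equiv.Perm.sumCongr s.1 s.2) with hρ
  have hterm (w : Equiv.Perm ι) : Equiv.Perm.sign w •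
      ((M.submatrix (w ∘ e ∘ Sum.inl) (e ∘ Sum.inl)).det *
        (M.submatrix (w ∘ e ∘ Sum.inr) (e ∘ Sum.inr)).det) =
      ∑ s, Equiv.Perm.sign (w * ρ s) • ∏ k, M ((w * ρ s) k) k := by
    rw [det_apply, det_apply, Finset.sum_mul_sum, ← Finset.sum_product', Finset.univ_product_univ,
      Finset.smul_sum]
    refine Finset.sum_congr rfl fun s _ => ?_
    rw [smul_mul_smul_comm, smul_smul, Equiv.Perm.sign_mul, hρ, Equiv.Perm.sign_permCongr,
      Equiv.Perm.sign_sumCongr, ← Equiv.prod_comp e, Fintype.prod_sum_type]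
    simp
  simp only [hterm]
  rw [Finset.sum_comm]
  have htranslate (s : Equiv.Perm m × Equiv.Perm n) :
      ∑ w, Equiv.Perm.sign (w * ρ s) • ∏ k, M ((w * ρ s) k) k = M.det := by
    rw [det_apply]
    exact Equiv.sum_comp (Equiv.mulRight (ρ s)) fun w => Equiv.Perm.sign w • ∏ k, M (w k) k
  rw [Finset.sum_congr rfl fun s _ => htranslate s]
  simp [Fintype.card_perm]

lemma det_vandermonde_eq_prod_prod_ite {R : Type*} [CommRing R] {n : ℕ} (y : Fin n → R) :
    (vandermonde y).det = ∏ i, ∏ j, if i < j then y j - y i else 1 := by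
  simp only [det_vandermonde, ← Finset.prod_filter, Finset.filter_lt_eq_Ioi]

lemma det_vandermonde_comp_perm {R : Type*} [CommRing R] {n : ℕ} (y : Fin n → R)
    (w : Equiv.Perm (Fin n)) :
    (vandermonde (y ∘ w)).det = (Equiv.Perm.sign w : ℤ) * (vandermonde y).det :=
  det_permute w (vandermonde y)

lemma det_vandermonde_add {R : Type*} [CommRing R] {p q : ℕ} (y : Fin (p + q) → R) :
    (vandermonde y).det =
      (vandermonde (y ∘ Fin.castAdd q)).det * (vandermonde (y ∘ Fin.natAdd p)).det *
        ∏ i, ∏ l, (y (Fin.natAdd p l) - y (Fin.castAdd q i)) := by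
  have hleft (i j : Fin p) : Fin.castAdd q i < Fin.castAdd q j ↔ i < j := Iff.rfl
  have hlt (i : Fin p) (l : Fin q) : Fin.castAdd q i < Fin.natAdd p l :=
    Fin.lt_def.2 (i.is_lt.trans_le (Nat.le_add_right p l))
  simp only [det_vandermonde_eq_prod_prod_ite, Fin.prod_univ_add, hlt, (hlt _ _).not_gt,
    hleft, Fin.natAdd_lt_natAdd_iff, if_true, if_false,
    Finset.prod_const_one, Finset.prod_mul_distrib, Function.comp_apply]
  ring

variable {K : Type*} [Field K] {p q : ℕ}

lemma prod_prod_sub_mul_prod_prod_inv_one_sub_div {ι κ : Type*} [Fintype ι] [Fintype κ]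
    {a : ι → K} {b : κ → K} (hab : ∀ i l, a i ≠ b l) (hb : ∀ l, b l ≠ 0) :
    (∏ i, ∏ l, (b l - a i)) * ∏ i, ∏ l, (1 - a i / b l)⁻¹ = ∏ l, b l ^ Fintype.card ι := by
  have h (i : ι) (l : κ) : (b l - a i) * (1 - a i / b l)⁻¹ = b l := by
    rw [one_sub_div (hb l), inv_div, mul_div_cancel₀ _ (sub_ne_zero.2 (hab i l).symm)]
  simp only [← Finset.prod_mul_distrib, h]
  simp [Finset.prod_pow]

lemma det_vandermonde_mul_prod_pow_mul_prod_inv_one_sub_div (N : ℕ) {y : Fin (p + q) → K}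
    (hy : Function.Injective y) (hy0 : ∀ k, y k ≠ 0) :
    (vandermonde y).det * ((∏ l, y (Fin.natAdd p l) ^ N) *
        ∏ i, ∏ l, (1 - y (Fin.castAdd q i) / y (Fin.natAdd p l))⁻¹) =
      (of fun i j => y (Fin.castAdd q i) ^ rectExponent N p q (Fin.castAdd q j)).det *
        (of fun i j => y (Fin.natAdd p i) ^ rectExponent N p q (Fin.natAdd p j)).det := by
  have hleft : (of fun i j => y (Fin.castAdd q i) ^ rectExponent N p q (Fin.castAdd q j)) =
      vandermonde (y ∘ Fin.castAdd q) := by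
    ext i j
    simp [rectExponent, vandermonde_apply]
  have hright : (of fun i j => y (Fin.natAdd p i) ^ rectExponent N p q (Fin.natAdd p j)) =
      of fun i j => y (Fin.natAdd p i) ^ (N + p) * vandermonde (y ∘ Fin.natAdd p) i j := by
    ext i j
    simp [rectExponent, vandermonde_apply, ← pow_add]
    ring
  have hne (i : Fin p) (l : Fin q) : y (Fin.castAdd q i) ≠ y (Fin.natAdd p l) :=
    fun h => (i.is_lt.trans_le (Nat.le_add_right p l)).ne (congrArg Fin.val (hy h))
  have hprod := prod_prod_sub_mul_prod_prod_inv_one_sub_div hne fun l => hy0 (Fin.natAdd p l)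
  rw [Fintype.card_fin] at hprod
  rw [hleft, hright, det_mul_column, det_vandermonde_add]
  simp only [pow_add, Finset.prod_mul_distrib, ← hprod]
  ring

lemma det_vandermonde_mul_sum_perm (N : ℕ) {x : Fin (p + q) → K} (hx : Function.Injective x)
    (hx0 : ∀ k, x k ≠ 0) :
    (vandermonde x).det * ∑ w : Equiv.Perm (Fin (p + q)), (∏ l, x (w (Fin.natAdd p l)) ^ N) *
        ∏ i, ∏ l, (1 - x (w (Fin.castAdd q i)) / x (w (Fin.natAdd p l)))⁻¹ =
      p.factorial * q.factorial * (of fun i j => x i ^ rectExponent N p q j).det := by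
  have hLaplace := sum_sign_smul_det_submatrix_mul_det_submatrix finSumFinEquiv
    (of fun i j => x i ^ rectExponent N p q j)
  simp only [Fintype.card_fin, Nat.cast_mul] at hLaplace
  rw [← hLaplace, Finset.mul_sum]
  refine Finset.sum_congr rfl fun w _ => ?_
  have hsign : (vandermonde x).det =
      Equiv.Perm.sign w • (vandermonde (x ∘ w)).det := by
    rw [det_vandermonde_comp_perm, Units.smul_def, zsmul_eq_mul, ← mul_assoc, ← Int.cast_mul,
      ← Units.val_mul, Int.units_mul_self]
    simp
  rw [hsign, smul_mul_assoc]
  congr 1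
  exact det_vandermonde_mul_prod_pow_mul_prod_inv_one_sub_div N (hx.comp w.injective)
    fun k => hx0 (w k)

end LaplaceExpansion

section CharpolyAverage

open MvPolynomial

variable {m σ A : Type*} [Fintype m] [DecidableEq m] [Fintype σ] [CommRing A] [Algebra ℂ A]

lemma coeff_charpolyAverage (u : Matrix m m A) (L : A →ₗ[ℂ] ℂ) (d : σ →₀ ℕ) :
    coeff d (charpolyAverage σ u L) = L (∏ k, u.charpolyRev.coeff (d k)) := by
  rw [charpolyAverage, coeff_mapCoeff, coeff_prod_det_pencil]

lemma isSymmetric_charpolyAverage (u : Matrix m m A) (L : A →ₗ[ℂ] ℂ) :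
    (charpolyAverage σ u L).IsSymmetric := by
  intro w
  ext d
  obtain ⟨d, rfl⟩ := Finsupp.mapDomain_surjective w.surjective d
  rw [coeff_rename_mapDomain _ w.injective, coeff_charpolyAverage, coeff_charpolyAverage,
    ← Equiv.prod_comp w fun k => u.charpolyRev.coeff (d.mapDomain w k)]
  simp only [Finsupp.mapDomain_apply w.injective]

lemma degreeOf_charpolyAverage_le (u : Matrix m m A) (L : A →ₗ[ℂ] ℂ) (k : σ) :
    degreeOf k (charpolyAverage σ u L) ≤ Fintype.card m := by
  refine degreeOf_le_iff.2 fun d hd => ?_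
  contrapose! hd
  rw [notMem_support_iff, coeff_charpolyAverage, Finset.prod_eq_zero (Finset.mem_univ k), map_zero]
  exact Polynomial.coeff_eq_zero_of_natDegree_lt ((natDegree_charpolyRev_le u).trans_lt hd)

theorem IsDetSemiInvariant.alternant_val_mul_charpolyAverage {p q : ℕ} {u : Matrix m m A}
    {L : A →ₗ[ℂ] ℂ} (hL : IsDetSemiInvariant u L q) :
    alternant ℂ Fin.val * charpolyAverage (Fin (p + q)) u L =
      L ((-u).det ^ q) • alternant ℂ (rectExponent (Fintype.card m) p q) := by
  have hfirst := hL.sum_eulerDeriv_charpolyAverage (σ := Fin (p + q))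
  have hlead : coeff (Finsupp.equivFunOnFinite.symm
      fun k : Fin (p + q) => if (k : ℕ) < p then 0 else Fintype.card m)
      (charpolyAverage (Fin (p + q)) u L) = L ((-u).det ^ q) := by
    rw [coeff_charpolyAverage, Fin.prod_univ_add]
    simp [coeff_zero_charpolyRev, coeff_card_charpolyRev, det_neg]
  rw [← hlead]
  apply alternant_val_mul_eq_smul_alternant_rectExponent (isSymmetric_charpolyAverage u L)
    (degreeOf_charpolyAverage_le u L)
  · rw [sum_eulerDeriv_alternant_val_mul hfirst, sum_rectExponent]
  · rw [sum_eulerDeriv_eulerDeriv_alternant_val_mul hfirst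
      hL.sum_eulerDeriv_eulerDeriv_add_interaction fun k l => sub_mul_interaction u L,
      sum_rectExponent_sq]

end CharpolyAverage

section UnitaryGroup

variable {m : Type*} [Fintype m] [DecidableEq m]

instance : CompactSpace (unitaryGroup m ℂ) := by
  have hcube : IsCompact (Set.univ.pi fun _ : m => Set.univ.pi fun _ : m =>
      Metric.closedBall (0 : ℂ) 1) :=
    isCompact_univ_pi fun _ => isCompact_univ_pi fun _ => isCompact_closedBall _ _
  refine isCompact_iff_compactSpace.1 (hcube.of_isClosed_subset
    (isClosed_unitary (R := Matrix m m ℂ)) fun u hu i _ j _ => ?_)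
  simpa using entry_norm_bound_of_unitary hu i j

lemma det_smul_one_sub_map_conj (u : unitaryGroup m ℂ) (x : ℂ) :
    (x • (1 : Matrix m m ℂ) - (u : Matrix m m ℂ).map (starRingEnd ℂ)).det =
      (1 - x • (u : Matrix m m ℂ)).det * star (-(u : Matrix m m ℂ)).det := by
  have hu : (u : Matrix m m ℂ) * (u : Matrix m m ℂ)ᴴ = 1 := mem_unitaryGroup_iff.1 u.2
  have hfactor : (x • (1 : Matrix m m ℂ) - (u : Matrix m m ℂ).map (starRingEnd ℂ))ᵀ =
      (1 - x • (u : Matrix m m ℂ)) * (-(u : Matrix m m ℂ))ᴴ := by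
    rw [conjTranspose_neg, sub_mul, one_mul, smul_mul_assoc, mul_neg, hu]
    ext i j
    simp [one_apply, eq_comm]
    ring
  rw [← det_transpose, hfactor, det_mul, det_conjTranspose]

/-- The generic unitary matrix, whose entries are the coordinate functions. -/
def genericUnitary (m : Type*) [Fintype m] [DecidableEq m] :
    Matrix m m C(unitaryGroup m ℂ, ℂ) :=
  of fun i j => ⟨fun u => (u : Matrix m m ℂ) i j,
    (continuous_apply_apply i j).comp continuous_subtype_val⟩

lemma det_neg_genericUnitary_apply (u : unitaryGroup m ℂ) :
    (-genericUnitary m).det u = (-(u : Matrix m m ℂ)).det := by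
  change ContinuousMap.evalAlgHom ℂ ℂ u (-genericUnitary m).det = _
  rw [AlgHom.map_det]
  rfl

lemma eval_prod_det_pencil_genericUnitary_apply {σ : Type*} [Fintype σ] (x : σ → ℂ)
    (u : unitaryGroup m ℂ) :
    MvPolynomial.eval (fun k => algebraMap ℂ C(unitaryGroup m ℂ, ℂ) (x k))
        (∏ k, (pencil (genericUnitary m) k).det) u =
      ∏ k, (1 - x k • (u : Matrix m m ℂ)).det := by
  change ContinuousMap.evalAlgHom ℂ ℂ u (MvPolynomial.eval _ _) = _
  simp only [map_prod, eval_det_pencil, AlgHom.map_det]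
  congr! with k
  ext i j
  by_cases h : i = j <;> simp [one_apply, h, genericUnitary]

variable [MeasurableSpace (unitaryGroup m ℂ)] [BorelSpace (unitaryGroup m ℂ)]

/-- The functional `f ↦ ∫ f(u) det(-u)^{-q} du`. Since `det(x - ū) = det(1 - x u) det(-u)^{-1}`
for unitary `u`, the twist turns `q` of the factors `det(1 - x u)` into `det(x - ū)`. -/
noncomputable def detTwistedIntegral (q : ℕ) (μ : Measure (unitaryGroup m ℂ))
    [IsFiniteMeasureOnCompacts μ] : C(unitaryGroup m ℂ, ℂ) →ₗ[ℂ] ℂ where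
  toFun f := ∫ u, f u * star ((-(u : Matrix m m ℂ)).det ^ q) ∂μ
  map_add' f g := by
    have hint (f : C(unitaryGroup m ℂ, ℂ)) :
        Integrable (fun u => f u * star ((-(u : Matrix m m ℂ)).det ^ q)) μ :=
      Continuous.integrable_of_hasCompactSupport (by fun_prop) (.of_compactSpace _)
    simp only [ContinuousMap.add_apply, add_mul, integral_add (hint f) (hint g)]
  map_smul' c f := by
    simp only [ContinuousMap.smul_apply, smul_eq_mul, mul_assoc, integral_const_mul,
      RingHom.id_apply]

lemma detTwistedIntegral_apply (q : ℕ) (μ : Measure (unitaryGroup m ℂ))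
    [IsFiniteMeasureOnCompacts μ] (f : C(unitaryGroup m ℂ, ℂ)) :
    detTwistedIntegral q μ f = ∫ u, f u * star ((-(u : Matrix m m ℂ)).det ^ q) ∂μ := rfl

lemma isDetSemiInvariant_detTwistedIntegral (q : ℕ) (μ : Measure (unitaryGroup m ℂ))
    [IsFiniteMeasureOnCompacts μ] [μ.IsMulLeftInvariant] :
    IsDetSemiInvariant (genericUnitary m) (detTwistedIntegral q μ) q := by
  intro h hh
  have hdet : h.det * star h.det = 1 := Unitary.mul_star_self_of_mem (det_of_mem_unitary hh)
  have htwist (u : unitaryGroup m ℂ) : star ((-(u : Matrix m m ℂ)).det ^ q) =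
      h.det ^ q * star ((-(h * u : Matrix m m ℂ)).det ^ q) := by
    rw [← mul_neg, det_mul, mul_pow, star_mul', star_pow h.det, ← mul_assoc, ← mul_pow, hdet,
      one_pow, one_mul]
  let τ := ContinuousMap.compRightAlgHom ℂ ℂ
    (ContinuousMap.mulLeft (⟨h, hh⟩ : unitaryGroup m ℂ))
  refine ⟨τ, ?_, fun f => ?_⟩
  · ext i j u
    simp [τ, genericUnitary, mul_apply, ContinuousMap.sum_apply]
  · rw [detTwistedIntegral_apply, detTwistedIntegral_apply, ← integral_const_mul,
      ← integral_mul_left_eq_self (fun u => h.det ^ q * _) (⟨h, hh⟩ : unitaryGroup m ℂ)]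
    refine integral_congr_ae (.of_forall fun u => ?_)
    simp [τ, htwist u]
    ring

lemma detTwistedIntegral_det_neg_genericUnitary_pow (q : ℕ) (μ : Measure (unitaryGroup m ℂ))
    [IsProbabilityMeasure μ] :
    detTwistedIntegral q μ ((-genericUnitary m).det ^ q) = 1 := by
  have hunit (u : unitaryGroup m ℂ) :
      (-(u : Matrix m m ℂ)).det * star (-(u : Matrix m m ℂ)).det = 1 :=
    Unitary.mul_star_self_of_mem (det_of_mem_unitary (-u).2)
  simp only [detTwistedIntegral_apply, ContinuousMap.pow_apply, det_neg_genericUnitary_apply,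
    star_pow, ← mul_pow, hunit]
  simp

end UnitaryGroup

section Autocorrelation

variable {m : Type*} [Fintype m] [DecidableEq m] [MeasurableSpace (unitaryGroup m ℂ)]
  [BorelSpace (unitaryGroup m ℂ)] {p q : ℕ} (μ : Measure (unitaryGroup m ℂ))
  [μ.IsMulLeftInvariant] [IsProbabilityMeasure μ]

lemma det_vandermonde_mul_integral_prod_det (x : Fin (p + q) → ℂ) :
    (vandermonde x).det * ∫ u : unitaryGroup m ℂ,
        (∏ i, (1 - x (Fin.castAdd q i) • (u : Matrix m m ℂ)).det) *
          ∏ l, (x (Fin.natAdd p l) • (1 : Matrix m m ℂ) -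
            (u : Matrix m m ℂ).map (starRingEnd ℂ)).det ∂μ =
      (of fun i j => x i ^ rectExponent (Fintype.card m) p q j).det := by
  have hintegral : MvPolynomial.eval x (charpolyAverage (Fin (p + q)) (genericUnitary m)
      (detTwistedIntegral q μ)) = ∫ u : unitaryGroup m ℂ,
        (∏ i, (1 - x (Fin.castAdd q i) • (u : Matrix m m ℂ)).det) *
          ∏ l, (x (Fin.natAdd p l) • (1 : Matrix m m ℂ) -
            (u : Matrix m m ℂ).map (starRingEnd ℂ)).det ∂μ := by
    rw [charpolyAverage, eval_mapCoeff, detTwistedIntegral_apply]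
    simp only [eval_prod_det_pencil_genericUnitary_apply]
    simp only [det_smul_one_sub_map_conj,
      Fin.prod_univ_add, Finset.prod_mul_distrib, Finset.prod_const, Finset.card_univ,
      Fintype.card_fin, star_pow, mul_assoc]
  have halternant := congrArg (MvPolynomial.eval x)
    ((isDetSemiInvariant_detTwistedIntegral q μ).alternant_val_mul_charpolyAverage (p := p))
  rwa [detTwistedIntegral_det_neg_genericUnitary_pow, one_smul, map_mul, eval_alternant,
    eval_alternant, hintegral] at halternant

theorem integral_prod_det_one_sub_mul_prod_det_sub_conj {x : Fin (p + q) → ℂ}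
    (hx : Function.Injective x) (hx0 : ∀ k, x k ≠ 0) :
    ∫ u : unitaryGroup m ℂ,
        (∏ i, (1 - x (Fin.castAdd q i) • (u : Matrix m m ℂ)).det) *
          ∏ l, (x (Fin.natAdd p l) • (1 : Matrix m m ℂ) -
            (u : Matrix m m ℂ).map (starRingEnd ℂ)).det ∂μ =
      1 / (p.factorial * q.factorial) * ∑ w : Equiv.Perm (Fin (p + q)),
        (∏ l, x (w (Fin.natAdd p l)) ^ Fintype.card m) *
          ∏ i, ∏ l, (1 - x (w (Fin.castAdd q i)) / x (w (Fin.natAdd p l)))⁻¹ := by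
  have hp : (p.factorial : ℂ) ≠ 0 := mod_cast p.factorial_ne_zero
  have hq : (q.factorial : ℂ) ≠ 0 := mod_cast q.factorial_ne_zero
  refine mul_left_cancel₀ (det_vandermonde_ne_zero_iff.2 hx) ?_
  rw [det_vandermonde_mul_integral_prod_det, mul_left_comm, det_vandermonde_mul_sum_perm _ hx hx0,
    ← mul_assoc, one_div_mul_cancel (mul_ne_zero hp hq), one_mul]

end Autocorrelation

section ProdFilter

variable {M : Type*} [CommMonoid M] {p q : ℕ}

lemma prod_filter_val_lt (f : Fin (p + q) → M) :
    ∏ j ∈ Finset.univ.filter (fun j : Fin (p + q) => (j : ℕ) < p), f j =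
      ∏ i, f (Fin.castAdd q i) := by
  simp [Finset.prod_filter, Fin.prod_univ_add]

lemma prod_filter_le_val (f : Fin (p + q) → M) :
    ∏ j ∈ Finset.univ.filter (fun j : Fin (p + q) => p ≤ (j : ℕ)), f j =
      ∏ l, f (Fin.natAdd p l) := by
  simp [Finset.prod_filter, Fin.prod_univ_add, fun i : Fin p => i.is_lt.not_ge]

end ProdFilter

end UnitaryAutocorrelation

/-- **Compact sector** (Eq. 1.9): the Haar-average over `U(N)` of a product of `p`
characteristic polynomials and `q` conjugate characteristic polynomials is given by
the Weyl character formula for `U(p+q)`. -/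
theorem autocorrelation_products_charpoly_unitary
    (N p q : ℕ) (hN : 1 ≤ N) (hp : 1 ≤ p) (hq : 1 ≤ q)
    (ψ : Fin (p + q) → ℂ)
    (hdist : Function.Injective fun k : Fin (p + q) => Complex.exp (Complex.I * ψ k))
    (μ : Measure (Matrix.unitaryGroup (Fin N) ℂ))
    [μ.IsHaarMeasure] [IsProbabilityMeasure μ] :
    (∫ u : Matrix.unitaryGroup (Fin N) ℂ,
      (∏ j ∈ Finset.univ.filter (fun j : Fin (p + q) => (j : ℕ) < p),
          Matrix.det (1 - Complex.exp (Complex.I * ψ j) • (u : Matrix (Fin N) (Fin N) ℂ))) *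
        (∏ l ∈ Finset.univ.filter (fun l : Fin (p + q) => p ≤ (l : ℕ)),
          Matrix.det (Complex.exp (Complex.I * ψ l) • (1 : Matrix (Fin N) (Fin N) ℂ) -
            (u : Matrix (Fin N) (Fin N) ℂ).map (starRingEnd ℂ))) ∂μ)
    = (1 / ((p.factorial : ℂ) * (q.factorial : ℂ))) *
        ∑ w : Equiv.Perm (Fin (p + q)),
          (∏ l ∈ Finset.univ.filter (fun l : Fin (p + q) => p ≤ (l : ℕ)),
              Complex.exp ((N : ℂ) * Complex.I * ψ (w l))) *
            ∏ j ∈ Finset.univ.filter (fun j : Fin (p + q) => (j : ℕ) < p),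
              ∏ l ∈ Finset.univ.filter (fun l : Fin (p + q) => p ≤ (l : ℕ)),
                (1 - Complex.exp (Complex.I * ψ (w j) - Complex.I * ψ (w l)))⁻¹ := by
  have hx0 (k : Fin (p + q)) : Complex.exp (Complex.I * ψ k) ≠ 0 := Complex.exp_ne_zero _
  have hpow (k : Fin (p + q)) : Complex.exp (N * Complex.I * ψ k) =
      Complex.exp (Complex.I * ψ k) ^ N := by
    rw [mul_assoc, Complex.exp_nat_mul]
  simp only [UnitaryAutocorrelation.prod_filter_val_lt, UnitaryAutocorrelation.prod_filter_le_val,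
    hpow, Complex.exp_sub]
  rw [UnitaryAutocorrelation.integral_prod_det_one_sub_mul_prod_det_sub_conj μ hdist hx0,
    Fintype.card_fin]
end
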